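/- arXiv:2210.02066 — 2 statements merged into one kernel-verified Lean document; each statement's English description precedes it below -/
import Mathlib

section
/- For all m, k ∈ ℕ there exists a constant C_{m,k} > 0 such that for every multi-index J ∈ {0,…,n−1}^k, every t > 0 and every point of S with r > 0, one has |∂^m/∂t^m X_J (h_t ∘ r)| ≤ C_{m,k} Ψ̃_{2m+k}(r,t) h_t(r). -/
/-!
Put `v = cosh r` and `y = 2 cosh (r/2)`, so that `v = y²/2 - 1`. Up to constants the operators
`-(1/sinh (r/2)) d/dr` and `-(1/sinh r) d/dr` are `-d/dy` and `-d/dv = -(1/y) d/dy`. The proof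
combines two facts.

*Kernel bounds.* With `kap = 1/y² + (r/2) / (t y sinh (r/2))`, one has
`|∂_t^m (d/dv)^j h_t| ≤ C kap^j (1 + 1/√t + r/t)^{2m} h_t` (`exists_Rep`). The function
`(r/2)/sinh (r/2)` is completely monotone in `y`, namely it is `∫₀^∞ du / (u² + y u + 1)`
(`phi_zero`). Hence the densities obtained from the Gaussian by the two operators stay in a cone
`Fcl` of finite sums of positive terms, on which each application of `-d/dv` costs at most a
factor `kap` (`Fcl.d1_step`). This settles even `ν`. For odd `ν` the substitution
`cosh s = cosh r + x²` turns the Abel integral into `∫₀^∞ F(t, arcosh (v + x²)) dx` (`abel_subst`),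
which may be differentiated under the integral sign, and `kap` is nonincreasing in `r`. The factors
`(s/t)²` produced by time derivatives are bounded by `sinh² s` times two further applications of
`-d/dv`, where `sinh² s` is a polynomial in `x²`, and powers of `x²` are removed by integration by
parts (`DSeq.pointwise`, `DSeq.Kint_parts`, `DSeq.Kint_time_bound`).

*Geometry.* The function `E = cosh² (r/2)` is `P / (4 a)` with `P` a polynomial of weighted degree
four with respect to the dilations of the group, and the fields `X_j` preserve such quotients, so
that all `X_J E` are `O(E)`. Moreover `X_j E = O(E tanh (r/2))` (`exists_grad`). By the chain rule
`X_J h_t` is a sum of terms `B * (d/dv)^i h_t` with `B = O(E^i tanh (r/2)^n)`, `i ≤ k` and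
`2 i ≤ n + k` (`exists_Rp`, `Bc.bound`).

Finally `E kap ≤ (1 + 1/√t + r/t)²` and `tanh (r/2) E kap ≤ 1 + r/t`, so that each factor
`tanh (r/2)` saves one power of `1 + 1/√t + r/t`; when `k` is odd every term either has a factor
`1 + r/t` or satisfies `2 i ≤ k - 1`, which gives the refined bound (`product_le_PsiT`).
-/

open Real MeasureTheory Filter Topology

noncomputable section

namespace DR

/-- The operator `𝓡 g (r) = (1 / sinh r) g'(r)`. -/
def Rop (g : ℝ → ℝ) : ℝ → ℝ := fun r => (1 / Real.sinh r) * deriv g r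

/-- The operator `-(1 / sinh r) d/dr`. -/
def D1 (g : ℝ → ℝ) : ℝ → ℝ := fun r => -(1 / Real.sinh r) * deriv g r

/-- The operator `-(1 / sinh (r/2)) d/dr`. -/
def D2 (g : ℝ → ℝ) : ℝ → ℝ := fun r => -(1 / Real.sinh (r / 2)) * deriv g r

/-- The Gaussian `e^{-r²/(4t)}`. -/
def gauss (t : ℝ) : ℝ → ℝ := fun r => Real.exp (-r ^ 2 / (4 * t))

/-- `Q = (μ + 2ν)/2`. -/
def Qc (μ ν : ℕ) : ℝ := ((μ : ℝ) + 2 * ν) / 2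

/-- `c_k = 2^{-μ-ν/2-1-k} π^{-n/2}` with `n = μ+ν+1`. -/
def cc (μ ν k : ℕ) : ℝ :=
  (2 : ℝ) ^ (-(μ : ℝ) - (ν : ℝ) / 2 - 1 - (k : ℝ)) *
    Real.pi ^ (-(((μ : ℝ) + ν + 1)) / 2)

/-- The Damek–Ricci heat kernel `h_t`. -/
def heat (μ ν : ℕ) (t : ℝ) : ℝ → ℝ := fun r =>
  if Even ν then
    cc μ ν 0 * t ^ (-(1 : ℝ) / 2) * Real.exp (-(Qc μ ν) ^ 2 * t / 4) *
      (D1^[ν / 2] (D2^[μ / 2] (gauss t))) r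
  else
    cc μ ν 0 * Real.pi ^ (-(1 : ℝ) / 2) * t ^ (-(1 : ℝ) / 2) *
      Real.exp (-(Qc μ ν) ^ 2 * t / 4) *
      ∫ s in Set.Ioi r, (Real.sinh s / Real.sqrt (Real.cosh s - Real.cosh r)) *
        (D1^[(ν + 1) / 2] (D2^[μ / 2] (gauss t))) s

/-- `Ψ_k(r,t)`. -/
def Psi (k : ℕ) (r t : ℝ) : ℝ :=
  if 1 < r ∨ Even k then (1 + 1 / Real.sqrt t + r / t) ^ k
  else r * (1 + 1 / Real.sqrt t + r / t) ^ (k - 1) * (1 + 1 / t)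

/-- `Ψ̃_k(r,t)`. -/
def PsiT (k : ℕ) (r t : ℝ) : ℝ :=
  if 1 < r ∨ Even k then (1 + 1 / Real.sqrt t + r / t) ^ k
  else (1 + 1 / Real.sqrt t + r / t) ^ (k - 1) * (1 + r / t)

/-- `p_{a,b}(r) = sinh^a r cosh^b r`. -/
def pab (a b : ℕ) (r : ℝ) : ℝ := Real.sinh r ^ a * Real.cosh r ^ b

/-- `Θ_{p,q}(r)` (with real exponents, via `rpow`). -/
def Theta (p q : ℝ) (r : ℝ) : ℝ :=
  ((r / (1 + r)) * (Real.exp (r / 2) / (2 * Real.sinh (r / 2)))) ^ p *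
    ((r / (1 + 2 * r)) * (Real.exp r / Real.sinh r)) ^ q

/-- Points of `S = ℝ^μ × ℝ^ν × (0,∞)` (the last coordinate ranges over `ℝ`;
statements are always restricted to `0 < a`). -/
abbrev Pt (μ ν : ℕ) := (Fin μ → ℝ) × (Fin ν → ℝ) × ℝ

/-- The quantity `((√a + 1/√a)/2 + |x|²/(8√a))² + |z|²/(4a)`, equal to `cosh²(r/2)`. -/
def coshExpr (μ ν : ℕ) (p : Pt μ ν) : ℝ :=
  ((Real.sqrt p.2.2 + (Real.sqrt p.2.2)⁻¹) / 2 +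
      (Real.sqrt p.2.2)⁻¹ * (∑ i, p.1 i ^ 2) / 8) ^ 2 +
    (p.2.2)⁻¹ * (∑ i, p.2.1 i ^ 2) / 4

/-- The vector field `X_0 = a ∂_a`. -/
def X0op (μ ν : ℕ) (f : Pt μ ν → ℝ) : Pt μ ν → ℝ :=
  fun p => p.2.2 * deriv (fun s => f (p.1, p.2.1, s)) p.2.2

/-- The vector fields `X_j`, `j ∈ {0, …, n-1}`, `n = μ+ν+1`:
`X_0 = a ∂_a`, `X_ℓ = √a (∂_{x_ℓ} + (1/2) Σ_k (J_k x, e_ℓ) ∂_{z_k})` for `ℓ = 1,…,μ`,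
and `X_{μ+k} = a ∂_{z_k}` for `k = 1,…,ν`. -/
def Xf (μ ν : ℕ) (Jm : Fin ν → Matrix (Fin μ) (Fin μ) ℝ) (j : Fin (μ + ν + 1))
    (f : Pt μ ν → ℝ) : Pt μ ν → ℝ := fun p =>
  if h0 : (j : ℕ) = 0 then p.2.2 * deriv (fun s => f (p.1, p.2.1, s)) p.2.2
  else if hm : (j : ℕ) ≤ μ then
    Real.sqrt p.2.2 *
      (deriv (fun s => f (Function.update p.1 ⟨(j : ℕ) - 1, by omega⟩ s, p.2.1, p.2.2))
          (p.1 ⟨(j : ℕ) - 1, by omega⟩) +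
        (1 / 2) * ∑ k : Fin ν, (Jm k).mulVec p.1 ⟨(j : ℕ) - 1, by omega⟩ *
          deriv (fun s => f (p.1, Function.update p.2.1 k s, p.2.2)) (p.2.1 k))
  else
    p.2.2 *
      deriv (fun s =>
          f (p.1, Function.update p.2.1 ⟨(j : ℕ) - μ - 1, by have := j.isLt; omega⟩ s, p.2.2))
        (p.2.1 ⟨(j : ℕ) - μ - 1, by have := j.isLt; omega⟩)

/-- `X_J = X_{J_1} X_{J_2} ⋯ X_{J_k}` for a multi-index `J`. -/
def XL (μ ν : ℕ) (Jm : Fin ν → Matrix (Fin μ) (Fin μ) ℝ) :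
    List (Fin (μ + ν + 1)) → (Pt μ ν → ℝ) → Pt μ ν → ℝ
  | [], f => f
  | j :: L, f => Xf μ ν Jm j (XL μ ν Jm L f)

/-! ### The completely monotone functions `phi i` -/

/-- `phi i y = ∫₀^∞ uⁱ / (u² + y u + 1)^{i+1} du`. Up to the factor `i!` this is the `i`-th
derivative under `-d/dy` of `phi 0`, and `phi 0 (2 cosh (r/2)) = (r/2) / sinh (r/2)`. -/
def phi (i : ℕ) (y : ℝ) : ℝ := ∫ u in Set.Ioi (0 : ℝ), u ^ i / (u ^ 2 + y * u + 1) ^ (i + 1)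

lemma phi_integrand_le (i : ℕ) {y u : ℝ} (hy : 0 ≤ y) (hu : 0 ≤ u) :
    u ^ i / (u ^ 2 + y * u + 1) ^ (i + 1) ≤ (1 + u ^ 2)⁻¹ := by
  have h1 : 0 ≤ y * u := mul_nonneg hy hu
  have hq : 0 < u ^ 2 + y * u + 1 := by positivity
  rw [div_le_iff₀ (by positivity), inv_mul_eq_div, le_div_iff₀ (by positivity),
    pow_succ (u ^ 2 + y * u + 1) i]
  have h2 : u ^ i ≤ (u ^ 2 + y * u + 1) ^ i :=
    pow_le_pow_left₀ hu (by nlinarith [sq_nonneg (u - 1)]) i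
  have h3 : 1 + u ^ 2 ≤ u ^ 2 + y * u + 1 := by linarith
  exact mul_le_mul h2 h3 (by positivity) (by positivity)

lemma phi_integrand_nonneg (i : ℕ) {y u : ℝ} (hy : 0 ≤ y) (hu : 0 ≤ u) :
    0 ≤ u ^ i / (u ^ 2 + y * u + 1) ^ (i + 1) := by positivity

lemma phi_integrable (i : ℕ) {y : ℝ} (hy : 0 ≤ y) :
    IntegrableOn (fun u : ℝ => u ^ i / (u ^ 2 + y * u + 1) ^ (i + 1)) (Set.Ioi 0) := by
  refine Integrable.mono' (integrable_inv_one_add_sq.integrableOn (s := Set.Ioi 0)) ?_ ?_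
  · exact (by fun_prop : Measurable _).aestronglyMeasurable
  · refine (ae_restrict_iff' measurableSet_Ioi).2 (Eventually.of_forall fun u hu => ?_)
    have hu' : 0 ≤ u := le_of_lt hu
    rw [Real.norm_of_nonneg (phi_integrand_nonneg i hy hu')]
    exact phi_integrand_le i hy hu'

lemma phi_nonneg (i : ℕ) {y : ℝ} (hy : 0 ≤ y) : 0 ≤ phi i y :=
  setIntegral_nonneg measurableSet_Ioi fun _ hu => phi_integrand_nonneg i hy (le_of_lt hu)

lemma phi_antitone (i : ℕ) {y z : ℝ} (hy : 0 ≤ y) (hyz : y ≤ z) : phi i z ≤ phi i y := by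
  refine setIntegral_mono_on (phi_integrable i (hy.trans hyz)) (phi_integrable i hy)
    measurableSet_Ioi fun u hu => ?_
  have hu' : 0 < u := hu
  gcongr

lemma phi_succ_le (i : ℕ) {y : ℝ} (hy : 0 < y) : y * phi (i + 1) y ≤ phi i y := by
  unfold phi
  rw [← integral_const_mul]
  refine setIntegral_mono_on ((phi_integrable (i + 1) hy.le).const_mul _)
    (phi_integrable i hy.le) measurableSet_Ioi fun u hu => ?_
  have hu' : 0 < u := hu
  have hq : 0 < u ^ 2 + y * u + 1 := by positivity
  rw [mul_div_assoc', div_le_div_iff₀ (by positivity) (by positivity)]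
  have : y * u ≤ u ^ 2 + y * u + 1 := by nlinarith
  calc y * u ^ (i + 1) * (u ^ 2 + y * u + 1) ^ (i + 1)
      = u ^ i * (u ^ 2 + y * u + 1) ^ (i + 1) * (y * u) := by ring
    _ ≤ u ^ i * (u ^ 2 + y * u + 1) ^ (i + 1) * (u ^ 2 + y * u + 1) := by gcongr
    _ = _ := by ring

lemma hasDerivAt_phi (i : ℕ) {y : ℝ} (hy : 0 < y) :
    HasDerivAt (phi i) (-((i + 1 : ℕ) * phi (i + 1) y)) y := by
  have hval : -(((i + 1 : ℕ) : ℝ) * phi (i + 1) y) = ∫ u in Set.Ioi (0 : ℝ),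
      -(((i + 1 : ℕ) : ℝ) * (u ^ (i + 1) / (u ^ 2 + y * u + 1) ^ (i + 1 + 1))) := by
    rw [integral_neg, integral_const_mul]; rfl
  rw [hval]
  refine (hasDerivAt_integral_of_dominated_loc_of_deriv_le (s := Set.Ioi 0)
    (F := fun y u => u ^ i / (u ^ 2 + y * u + 1) ^ (i + 1)) (bound := fun u : ℝ => ((i + 1 : ℕ) : ℝ) * (1 + u ^ 2)⁻¹)
    (F' := fun y u => -(((i + 1 : ℕ) : ℝ) * (u ^ (i + 1) / (u ^ 2 + y * u + 1) ^ (i + 1 + 1))))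
    (Ioi_mem_nhds hy) ?_ (phi_integrable i hy.le) ?_ ?_ ?_ ?_).2
  · exact Eventually.of_forall fun z => (by fun_prop : Measurable _).aestronglyMeasurable
  · exact (by fun_prop : Measurable _).aestronglyMeasurable
  · refine (ae_restrict_iff' measurableSet_Ioi).2 (Eventually.of_forall fun u hu z hz => ?_)
    have hu' : 0 ≤ u := le_of_lt hu
    have hz' : 0 ≤ z := le_of_lt hz
    rw [norm_neg, Real.norm_of_nonneg (mul_nonneg (Nat.cast_nonneg _)
      (phi_integrand_nonneg (i + 1) hz' hu'))]
    exact mul_le_mul_of_nonneg_left (phi_integrand_le (i + 1) hz' hu') (Nat.cast_nonneg _)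
  · exact (integrable_inv_one_add_sq.integrableOn (s := Set.Ioi 0)).const_mul _
  · refine (ae_restrict_iff' measurableSet_Ioi).2 (Eventually.of_forall fun u hu z hz => ?_)
    have hu' : 0 < u := hu
    have hz' : 0 < z := hz
    have hq : 0 < u ^ 2 + z * u + 1 := by positivity
    have h1 : HasDerivAt (fun z : ℝ => u ^ 2 + z * u + 1) u z := by
      simpa using (((hasDerivAt_id z).mul_const u).const_add (u ^ 2)).add_const 1
    have h2 := (hasDerivAt_const z (u ^ i)).div (h1.pow (i + 1)) (pow_pos hq _).ne'
    refine h2.congr_deriv ?_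
    simp only [Pi.pow_apply]
    field_simp
    push_cast
    simp
    ring

/-- The closed form of `phi 0`: a primitive of the integrand is
`log ((u + e^{-r/2}) / (u + e^{r/2})) / (2 sinh (r/2))`. -/
lemma phi_zero {r : ℝ} (hr : 0 < r) :
    phi 0 (2 * cosh (r / 2)) = (r / 2) / sinh (r / 2) := by
  have hs : 0 < sinh (r / 2) := Real.sinh_pos_iff.2 (by linarith)
  set a := exp (-(r / 2)) with ha
  set b := exp (r / 2) with hb
  have ha0 : 0 < a := exp_pos _
  have hb0 : 0 < b := exp_pos _
  have hab : a * b = 1 := by rw [ha, hb, ← Real.exp_add]; simp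
  have hsinh : sinh (r / 2) = (b - a) / 2 := Real.sinh_eq _
  have hcosh : cosh (r / 2) = (b + a) / 2 := Real.cosh_eq _
  have hba : 0 < b - a := by linarith [hsinh ▸ hs]
  have key : ∫ u in Set.Ioi (0 : ℝ), u ^ 0 / (u ^ 2 + 2 * cosh (r / 2) * u + 1) ^ (0 + 1) =
      0 - (log (0 + a) - log (0 + b)) / (b - a) := by
    refine integral_Ioi_of_hasDerivAt_of_nonneg'
      (g := fun u => (log (u + a) - log (u + b)) / (b - a)) ?_ ?_ ?_
    · intro u hu
      have hu' : 0 ≤ u := hu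
      have h1 : HasDerivAt (fun u : ℝ => log (u + a)) (1 / (u + a)) u :=
        ((hasDerivAt_id u).add_const a).log (by positivity)
      have h2 : HasDerivAt (fun u : ℝ => log (u + b)) (1 / (u + b)) u :=
        ((hasDerivAt_id u).add_const b).log (by positivity)
      refine ((h1.sub h2).div_const (b - a)).congr_deriv ?_
      have hq : u ^ 2 + 2 * cosh (r / 2) * u + 1 = (u + a) * (u + b) := by
        rw [hcosh]; linear_combination -hab
      rw [hq]
      field_simp
      ring
    · intro u hu
      exact phi_integrand_nonneg 0 (by positivity) (le_of_lt hu)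
    · have h1 : Tendsto (fun u : ℝ => (u + a) / (u + b)) atTop (𝓝 1) := by
        have h2 : Tendsto (fun u : ℝ => 1 + (a - b) / (u + b)) atTop (𝓝 (1 + 0)) :=
          tendsto_const_nhds.add
            (tendsto_const_nhds.div_atTop (tendsto_atTop_add_const_right _ _ tendsto_id))
        rw [add_zero] at h2
        refine h2.congr' ?_
        filter_upwards [eventually_gt_atTop 0] with u hu
        field_simp
        ring
      have h3 := ((h1.log one_ne_zero).div_const (b - a))
      rw [Real.log_one, zero_div] at h3
      refine h3.congr' ?_
      filter_upwards [eventually_gt_atTop 0] with u hu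
      rw [Real.log_div (by positivity) (by positivity)]
  unfold phi
  rw [key, zero_add, zero_add, ha, hb, Real.log_exp, Real.log_exp, ← ha, ← hb, hsinh]
  field_simp
  ring

/-! ### Coefficient functions -/

/-- The cone of coefficient functions, in the variable `r`: it is generated under sums and
products by nonnegative constants, by `1/y` and by the `phi i y`, where `y = 2 cosh (r/2)`. -/
inductive Acl : (ℝ → ℝ) → Prop
  | const (c : ℝ) (hc : 0 ≤ c) : Acl fun _ => c
  | inv : Acl fun r => (2 * cosh (r / 2))⁻¹
  | phi (i : ℕ) : Acl fun r => phi i (2 * cosh (r / 2))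
  | add {A B : ℝ → ℝ} : Acl A → Acl B → Acl fun r => A r + B r
  | mul {A B : ℝ → ℝ} : Acl A → Acl B → Acl fun r => A r * B r

lemma two_cosh_pos (r : ℝ) : 0 < 2 * cosh (r / 2) := by positivity

lemma hasDerivAt_two_cosh (r : ℝ) :
    HasDerivAt (fun r : ℝ => 2 * cosh (r / 2)) (sinh (r / 2)) r := by
  have h := (((hasDerivAt_id r).div_const 2).cosh).const_mul 2
  refine h.congr_deriv ?_
  simp only [id]
  ring

lemma Acl.nonneg {A : ℝ → ℝ} (hA : Acl A) (r : ℝ) : 0 ≤ A r := by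
  induction hA with
  | const c hc => exact hc
  | inv => positivity
  | phi i => exact phi_nonneg i (two_cosh_pos r).le
  | add _ _ h1 h2 => exact add_nonneg h1 h2
  | mul _ _ h1 h2 => exact mul_nonneg h1 h2

lemma Acl.bounded {A : ℝ → ℝ} (hA : Acl A) : ∃ M, ∀ r, A r ≤ M := by
  induction hA with
  | const c hc => exact ⟨c, fun _ => le_rfl⟩
  | inv =>
    refine ⟨1, fun r => inv_le_one_of_one_le₀ ?_⟩
    linarith [one_le_cosh (r / 2)]
  | phi i => exact ⟨DR.phi i 0, fun r => phi_antitone i le_rfl (two_cosh_pos r).le⟩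
  | add _ _ h1 h2 =>
    obtain ⟨M, hM⟩ := h1
    obtain ⟨N, hN⟩ := h2
    exact ⟨M + N, fun r => add_le_add (hM r) (hN r)⟩
  | @mul A B hA hB h1 h2 =>
    obtain ⟨M, hM⟩ := h1
    obtain ⟨N, hN⟩ := h2
    exact ⟨M * N, fun r => mul_le_mul (hM r) (hN r) (hB.nonneg r) ((hA.nonneg r).trans (hM r))⟩

/-- The cone is stable under `-d/dy`, which costs at most a factor `C / y`. -/
lemma Acl.deriv_step {A : ℝ → ℝ} (hA : Acl A) :
    ∃ A', Acl A' ∧ (∀ r, HasDerivAt A (-sinh (r / 2) * A' r) r) ∧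
      ∃ C, 0 ≤ C ∧ ∀ r, A' r * (2 * cosh (r / 2)) ≤ C * A r := by
  induction hA with
  | const c hc =>
    refine ⟨fun _ => 0, .const 0 le_rfl, fun r => ?_, 0, le_rfl, fun r => by simp⟩
    simpa using hasDerivAt_const r c
  | inv =>
    refine ⟨_, Acl.inv.mul Acl.inv, fun r => ?_, 1, zero_le_one, fun r => ?_⟩
    · refine ((hasDerivAt_two_cosh r).inv (two_cosh_pos r).ne').congr_deriv ?_
      have := (two_cosh_pos r).ne'
      field_simp
    · have := (two_cosh_pos r).ne'
      rw [inv_mul_cancel_right₀ this, one_mul]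
  | phi i =>
    refine ⟨_, (Acl.const ((i + 1 : ℕ) : ℝ) (Nat.cast_nonneg _)).mul (Acl.phi (i + 1)),
      fun r => ?_, ((i + 1 : ℕ) : ℝ), Nat.cast_nonneg _, fun r => ?_⟩
    · refine ((hasDerivAt_phi i (two_cosh_pos r)).comp r (hasDerivAt_two_cosh r)).congr_deriv ?_
      ring
    · rw [mul_assoc]
      refine mul_le_mul_of_nonneg_left ?_ (Nat.cast_nonneg _)
      rw [mul_comm]
      exact phi_succ_le i (two_cosh_pos r)
  | @add A B hA hB h1 h2 =>
    obtain ⟨A', hA', dA, C, hC, bA⟩ := h1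
    obtain ⟨B', hB', dB, D, hD, bB⟩ := h2
    refine ⟨_, hA'.add hB', fun r => ?_, C + D, by positivity, fun r => ?_⟩
    · exact ((dA r).add (dB r)).congr_deriv (by ring)
    · nlinarith [bA r, bB r, hA.nonneg r, hB.nonneg r, mul_nonneg hC (hB.nonneg r),
        mul_nonneg hD (hA.nonneg r)]
  | @mul A B hA hB h1 h2 =>
    obtain ⟨A', hA', dA, C, hC, bA⟩ := h1
    obtain ⟨B', hB', dB, D, hD, bB⟩ := h2
    refine ⟨_, (hA'.mul hB).add (hA.mul hB'), fun r => ?_, C + D, by positivity, fun r => ?_⟩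
    · exact ((dA r).mul (dB r)).congr_deriv (by ring)
    · have e1 := mul_le_mul_of_nonneg_right (bA r) (hB.nonneg r)
      have e2 := mul_le_mul_of_nonneg_right (bB r) (hA.nonneg r)
      nlinarith

lemma Acl.continuous {A : ℝ → ℝ} (hA : Acl A) : Continuous A := by
  obtain ⟨A', -, h, -⟩ := hA.deriv_step
  exact continuous_iff_continuousAt.2 fun r => (h r).continuousAt

/-! ### The time dependence -/

/-- `Eb κ m b t r` is the `m`-th derivative in `t` of
`t^{-b} · t^{-1/2} e^{-κ t} e^{-r²/(4t)}`. -/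
def Eb (κ : ℝ) : ℕ → ℕ → ℝ → ℝ → ℝ
  | 0, b, t, r => (t ^ b)⁻¹ * (t ^ (-(1 : ℝ) / 2) * exp (-κ * t) * gauss t r)
  | m + 1, b, t, r => -((b : ℝ) + 1 / 2) * Eb κ m (b + 1) t r - κ * Eb κ m b t r +
      r ^ 2 / 4 * Eb κ m (b + 2) t r

lemma Eb_zero_nonneg (κ : ℝ) (b : ℕ) {t : ℝ} (ht : 0 < t) (r : ℝ) : 0 ≤ Eb κ 0 b t r := by
  unfold Eb gauss
  positivity

lemma Eb_succ_b (κ : ℝ) (b : ℕ) (t r : ℝ) : Eb κ 0 (b + 1) t r = t⁻¹ * Eb κ 0 b t r := by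
  simp only [Eb, pow_succ, mul_inv]
  ring

lemma hasDerivAt_Eb_zero (κ : ℝ) (b : ℕ) {t : ℝ} (ht : 0 < t) (r : ℝ) :
    HasDerivAt (fun t => Eb κ 0 b t r) (Eb κ 1 b t r) t := by
  have h1 : HasDerivAt (fun t : ℝ => (t ^ b)⁻¹) (-(b : ℝ) * t⁻¹ * (t ^ b)⁻¹) t := by
    refine ((hasDerivAt_pow b t).inv (pow_pos ht b).ne').congr_deriv ?_
    rcases b with _ | b
    · simp
    · simp only [Nat.add_sub_cancel]
      field_simp
      ring
  have h2 : HasDerivAt (fun t : ℝ => t ^ (-(1 : ℝ) / 2))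
      (-(1 / 2) * t⁻¹ * t ^ (-(1 : ℝ) / 2)) t := by
    refine (Real.hasDerivAt_rpow_const (Or.inl ht.ne')).congr_deriv ?_
    rw [Real.rpow_sub_one ht.ne']
    ring
  have h3 : HasDerivAt (fun t : ℝ => exp (-κ * t)) (-κ * exp (-κ * t)) t := by
    refine (((hasDerivAt_id t).const_mul (-κ)).exp).congr_deriv ?_
    simp only [id]
    ring
  have h4 : HasDerivAt (fun t : ℝ => gauss t r) (r ^ 2 / 4 * (t⁻¹ * t⁻¹) * gauss t r) t := by
    unfold gauss
    have h := ((hasDerivAt_const t (-r ^ 2)).div ((hasDerivAt_id t).const_mul 4)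
      (by simp only [id]; positivity)).exp
    refine h.congr_deriv ?_
    simp only [Pi.div_apply, id]
    field_simp
    ring
  refine (h1.mul ((h2.mul h3).mul h4)).congr_deriv ?_
  simp only [Eb, Pi.mul_apply, pow_succ, mul_inv]
  ring

lemma hasDerivAt_Eb (κ : ℝ) (m : ℕ) : ∀ (b : ℕ) {t : ℝ}, 0 < t → ∀ r : ℝ,
    HasDerivAt (fun t => Eb κ m b t r) (Eb κ (m + 1) b t r) t := by
  induction m with
  | zero => exact fun b t ht r => hasDerivAt_Eb_zero κ b ht r
  | succ m ih =>
    intro b t ht r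
    exact (((ih (b + 1) ht r).const_mul _).sub ((ih b ht r).const_mul _)).add
      ((ih (b + 2) ht r).const_mul _)

lemma Eb_bound (κ : ℝ) (m : ℕ) : ∀ b : ℕ, ∃ C, 0 ≤ C ∧ ∀ t : ℝ, 0 < t → ∀ r : ℝ,
    |Eb κ m b t r| ≤ C * (1 + t⁻¹ + (r / t) ^ 2) ^ m * Eb κ 0 b t r := by
  induction m with
  | zero =>
    intro b
    refine ⟨1, zero_le_one, fun t ht r => ?_⟩
    rw [abs_of_nonneg (Eb_zero_nonneg κ b ht r)]
    simp
  | succ m ih =>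
    intro b
    obtain ⟨C1, h1, H1⟩ := ih (b + 1)
    obtain ⟨C0, h0, H0⟩ := ih b
    obtain ⟨C2, h2, H2⟩ := ih (b + 2)
    refine ⟨((b : ℝ) + 1 / 2) * C1 + |κ| * C0 + C2, by positivity, fun t ht r => ?_⟩
    have e1 := H1 t ht r
    have e0 := H0 t ht r
    have e2 := H2 t ht r
    rw [Eb_succ_b] at e1
    rw [Eb_succ_b, Eb_succ_b] at e2
    set W := (1 + t⁻¹ + (r / t) ^ 2) ^ m * Eb κ 0 b t r with hW
    have hb := Eb_zero_nonneg κ b ht r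
    have hti : 0 < t⁻¹ := inv_pos.2 ht
    have hW0 : 0 ≤ W := by positivity
    have key : |Eb κ (m + 1) b t r| ≤ ((b : ℝ) + 1 / 2) * |Eb κ m (b + 1) t r| +
        |κ| * |Eb κ m b t r| + r ^ 2 / 4 * |Eb κ m (b + 2) t r| := by
      simp only [Eb]
      refine (abs_add_le _ _).trans (add_le_add ((abs_sub _ _).trans (add_le_add ?_ ?_)) ?_)
      · rw [abs_mul, abs_neg, abs_of_nonneg (by positivity : (0 : ℝ) ≤ (b : ℝ) + 1 / 2)]
      · rw [abs_mul]
      · rw [abs_mul, abs_of_nonneg (by positivity : (0 : ℝ) ≤ r ^ 2 / 4)]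
    have f1 : |Eb κ m (b + 1) t r| ≤ C1 * (t⁻¹ * W) := e1.trans_eq (by rw [hW]; ring)
    have f0 : |Eb κ m b t r| ≤ C0 * W := e0.trans_eq (by rw [hW]; ring)
    have f2 : |Eb κ m (b + 2) t r| ≤ C2 * (t⁻¹ * (t⁻¹ * W)) := e2.trans_eq (by rw [hW]; ring)
    have g1 : t⁻¹ * W ≤ (1 + t⁻¹ + (r / t) ^ 2) * W :=
      mul_le_mul_of_nonneg_right (by nlinarith [sq_nonneg (r / t)]) hW0
    have g0 : W ≤ (1 + t⁻¹ + (r / t) ^ 2) * W :=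
      le_mul_of_one_le_left hW0 (by nlinarith [sq_nonneg (r / t)])
    have g2 : r ^ 2 / 4 * (t⁻¹ * (t⁻¹ * W)) ≤ (1 + t⁻¹ + (r / t) ^ 2) * W := by
      have : r ^ 2 / 4 * (t⁻¹ * (t⁻¹ * W)) = ((r / t) ^ 2 / 4) * W := by field_simp
      rw [this]
      exact mul_le_mul_of_nonneg_right (by nlinarith [sq_nonneg (r / t)]) hW0
    calc _ ≤ _ := key
      _ ≤ ((b : ℝ) + 1 / 2) * (C1 * (t⁻¹ * W)) + |κ| * (C0 * W) +
          r ^ 2 / 4 * (C2 * (t⁻¹ * (t⁻¹ * W))) := by gcongr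
      _ = ((b : ℝ) + 1 / 2) * C1 * (t⁻¹ * W) + |κ| * C0 * W +
          C2 * (r ^ 2 / 4 * (t⁻¹ * (t⁻¹ * W))) := by ring
      _ ≤ ((b : ℝ) + 1 / 2) * C1 * ((1 + t⁻¹ + (r / t) ^ 2) * W) +
          |κ| * C0 * ((1 + t⁻¹ + (r / t) ^ 2) * W) +
          C2 * ((1 + t⁻¹ + (r / t) ^ 2) * W) := by gcongr
      _ = _ := by rw [hW]; ring

lemma Eb_continuous (κ : ℝ) (m : ℕ) : ∀ (b : ℕ) (t : ℝ), Continuous (Eb κ m b t) := by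
  induction m with
  | zero =>
    intro b t
    have : Continuous (gauss t) := by unfold gauss; fun_prop
    show Continuous fun r => (t ^ b)⁻¹ * (t ^ (-(1 : ℝ) / 2) * exp (-κ * t) * gauss t r)
    fun_prop
  | succ m ih =>
    intro b t
    have h1 := ih (b + 1) t
    have h0 := ih b t
    have h2 := ih (b + 2) t
    show Continuous fun r => -((b : ℝ) + 1 / 2) * Eb κ m (b + 1) t r - κ * Eb κ m b t r +
      r ^ 2 / 4 * Eb κ m (b + 2) t r
    fun_prop

lemma hasDerivAt_Eb_r (κ : ℝ) (b : ℕ) {t r : ℝ} (ht : 0 < t) (hr : 0 < r) :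
    HasDerivAt (Eb κ 0 b t)
      (-sinh (r / 2) * (phi 0 (2 * cosh (r / 2)) * Eb κ 0 (b + 1) t r)) r := by
  have h4 : HasDerivAt (gauss t) (-(r / (2 * t)) * gauss t r) r := by
    unfold gauss
    have h := ((((hasDerivAt_pow 2 r).neg).div_const (4 * t))).exp
    refine h.congr_deriv ?_
    simp only [Pi.neg_apply]
    field_simp
    norm_num
    ring
  have h := (h4.const_mul (t ^ (-(1 : ℝ) / 2) * exp (-κ * t))).const_mul ((t ^ b)⁻¹)
  refine h.congr_deriv ?_
  have hs : 0 < sinh (r / 2) := Real.sinh_pos_iff.2 (by linarith)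
  rw [phi_zero hr, Eb_succ_b]
  simp only [Eb]
  field_simp

/-! ### The cone of heat kernel densities -/

/-- The cone of finite sums of `A(r) t^{-b} t^{-1/2} e^{-κ t} e^{-r²/(4t)}` with `A` in `Acl`.
The first argument counts time derivatives: `F m` is the `m`-th time derivative of `F 0`. -/
inductive Fcl (κ : ℝ) : (ℕ → ℝ → ℝ → ℝ) → Prop
  | term {A : ℝ → ℝ} (hA : Acl A) (b : ℕ) : Fcl κ fun m t r => A r * Eb κ m b t r
  | add {F G : ℕ → ℝ → ℝ → ℝ} : Fcl κ F → Fcl κ G → Fcl κ fun m t r => F m t r + G m t r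

section Cone

variable {κ : ℝ} {F : ℕ → ℝ → ℝ → ℝ}

lemma Fcl.nonneg (hF : Fcl κ F) {t : ℝ} (ht : 0 < t) (r : ℝ) : 0 ≤ F 0 t r := by
  induction hF with
  | term hA b => exact mul_nonneg (hA.nonneg r) (Eb_zero_nonneg κ b ht r)
  | add _ _ h1 h2 => exact add_nonneg h1 h2

lemma Fcl.continuous (hF : Fcl κ F) (m : ℕ) (t : ℝ) : Continuous (F m t) := by
  induction hF with
  | term hA b => exact hA.continuous.mul (Eb_continuous κ m b t)
  | add _ _ h1 h2 => exact h1.add h2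

lemma Fcl.hasDerivAt_t (hF : Fcl κ F) (m : ℕ) {t : ℝ} (ht : 0 < t) (r : ℝ) :
    HasDerivAt (fun t => F m t r) (F (m + 1) t r) t := by
  induction hF with
  | term hA b => exact (hasDerivAt_Eb κ m b ht r).const_mul _
  | add _ _ h1 h2 => exact h1.add h2

/-- A time derivative costs at most a factor `1 + 1/t + (r/t)²`. -/
lemma Fcl.time_bound (hF : Fcl κ F) (m : ℕ) : ∃ C, 0 ≤ C ∧ ∀ t : ℝ, 0 < t → ∀ r : ℝ,
    |F m t r| ≤ C * (1 + t⁻¹ + (r / t) ^ 2) ^ m * F 0 t r := by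
  induction hF with
  | @term A hA b =>
    obtain ⟨C, hC, h⟩ := Eb_bound κ m b
    refine ⟨C, hC, fun t ht r => ?_⟩
    rw [abs_mul, abs_of_nonneg (hA.nonneg r)]
    calc A r * |Eb κ m b t r| ≤ A r * (C * (1 + t⁻¹ + (r / t) ^ 2) ^ m * Eb κ 0 b t r) :=
          mul_le_mul_of_nonneg_left (h t ht r) (hA.nonneg r)
      _ = _ := by ring
  | @add F G hF hG h1 h2 =>
    obtain ⟨C, hC, h1⟩ := h1
    obtain ⟨D, hD, h2⟩ := h2
    refine ⟨C + D, by positivity, fun t ht r => (abs_add_le _ _).trans ?_⟩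
    have hti : 0 < t⁻¹ := inv_pos.2 ht
    have hf := hF.nonneg ht r
    have hg := hG.nonneg ht r
    have e1 : 0 ≤ D * (1 + t⁻¹ + (r / t) ^ 2) ^ m * F 0 t r := by positivity
    have e2 : 0 ≤ C * (1 + t⁻¹ + (r / t) ^ 2) ^ m * G 0 t r := by positivity
    linarith [h1 t ht r, h2 t ht r]

lemma Fcl.mul_left (hF : Fcl κ F) {A : ℝ → ℝ} (hA : Acl A) :
    Fcl κ fun m t r => A r * F m t r := by
  induction hF with
  | @term B hB b =>
    have h := Fcl.term (κ := κ) (hA.mul hB) b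
    simpa only [mul_assoc] using h
  | add _ _ h1 h2 =>
    have h := h1.add h2
    simpa only [mul_add] using h

/-- One step of `-d/dy`, `y = 2 cosh (r/2)`, inside the cone. The lower bound keeps only the
derivative of the Gaussian. -/
lemma Fcl.deriv_step (hF : Fcl κ F) : ∃ G, Fcl κ G ∧
    (∀ t, 0 < t → ∀ r, 0 < r → HasDerivAt (F 0 t) (-sinh (r / 2) * G 0 t r) r) ∧
    (∃ C, 0 ≤ C ∧ ∀ t, 0 < t → ∀ r, 0 < r → G 0 t r * (2 * cosh (r / 2)) ≤
      C * (1 + t⁻¹ * phi 0 (2 * cosh (r / 2)) * (2 * cosh (r / 2))) * F 0 t r) ∧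
    ∀ t, 0 < t → ∀ r, 0 < r → t⁻¹ * phi 0 (2 * cosh (r / 2)) * F 0 t r ≤ G 0 t r := by
  induction hF with
  | @term A hA b =>
    obtain ⟨A', hA', dA, C, hC, bA⟩ := hA.deriv_step
    refine ⟨_, (Fcl.term hA' b).add (Fcl.term ((Acl.phi 0).mul hA) (b + 1)),
      fun t ht r hr => ?_, ⟨C + 1, by positivity, fun t ht r hr => ?_⟩, fun t ht r hr => ?_⟩
    · exact ((dA r).mul (hasDerivAt_Eb_r κ b ht hr)).congr_deriv (by ring)
    · have hE := Eb_zero_nonneg κ b ht r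
      have hph := phi_nonneg 0 (two_cosh_pos r).le
      have hti : 0 < t⁻¹ := inv_pos.2 ht
      have hAr := hA.nonneg r
      have hy := two_cosh_pos r
      rw [Eb_succ_b]
      set y := 2 * cosh (r / 2)
      set w := t⁻¹ * phi 0 y * y with hw
      have hw0 : 0 ≤ w := by positivity
      have e1 := mul_le_mul_of_nonneg_right (bA r) hE
      have e2 : 0 ≤ C * w * (A r * Eb κ 0 b t r) := by positivity
      have e3 : 0 ≤ A r * Eb κ 0 b t r := by positivity
      calc (A' r * Eb κ 0 b t r + phi 0 y * A r * (t⁻¹ * Eb κ 0 b t r)) * y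
          = A' r * y * Eb κ 0 b t r + w * (A r * Eb κ 0 b t r) := by rw [hw]; ring
        _ ≤ (C + 1) * (1 + w) * (A r * Eb κ 0 b t r) := by nlinarith
    · have hE := Eb_zero_nonneg κ b ht r
      have := mul_nonneg (hA'.nonneg r) hE
      rw [Eb_succ_b]
      linarith
  | @add F1 F2 h1 h2 i1 i2 =>
    obtain ⟨G1, hG1, d1, ⟨C1, c1, b1⟩, l1⟩ := i1
    obtain ⟨G2, hG2, d2, ⟨C2, c2, b2⟩, l2⟩ := i2
    refine ⟨_, hG1.add hG2, fun t ht r hr => ?_, ⟨C1 + C2, by positivity,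
      fun t ht r hr => ?_⟩, fun t ht r hr => ?_⟩
    · exact ((d1 t ht r hr).add (d2 t ht r hr)).congr_deriv (by ring)
    · have hph := phi_nonneg 0 (two_cosh_pos r).le
      have hti : 0 < t⁻¹ := inv_pos.2 ht
      have hy := two_cosh_pos r
      have f1 := h1.nonneg ht r
      have f2 := h2.nonneg ht r
      have e1 := b1 t ht r hr
      have e2 := b2 t ht r hr
      set y := 2 * cosh (r / 2)
      have g1 : 0 ≤ C2 * (1 + t⁻¹ * phi 0 y * y) * F1 0 t r := by positivity
      have g2 : 0 ≤ C1 * (1 + t⁻¹ * phi 0 y * y) * F2 0 t r := by positivity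
      linarith
    · linarith [l1 t ht r hr, l2 t ht r hr]

/-- The size of `D1 F / F`, up to a constant, for `F` in the cone, with `y = 2 cosh (r/2)`:
`1/y² + phi 0 y / (t y)`. It is nonincreasing in `r`. -/
def kap (t r : ℝ) : ℝ :=
  ((2 * cosh (r / 2)) ^ 2)⁻¹ + t⁻¹ * phi 0 (2 * cosh (r / 2)) / (2 * cosh (r / 2))

lemma sinh_eq_two (r : ℝ) : sinh r = 2 * sinh (r / 2) * cosh (r / 2) := by
  rw [← Real.sinh_two_mul]; ring_nf

/-- One application of `D1` inside the cone: since `cosh r = y²/2 - 1` with `y = 2 cosh (r/2)`, it is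
`-d/dy` followed by division by `y`. The lower bound trades a factor `r/t` for one application
of `D1`. -/
lemma Fcl.d1_step (hF : Fcl κ F) : ∃ G, Fcl κ G ∧
    (∀ t, 0 < t → ∀ r, 0 < r → HasDerivAt (F 0 t) (-sinh r * G 0 t r) r) ∧
    (∃ C, 0 ≤ C ∧ ∀ t, 0 < t → ∀ r, 0 < r → G 0 t r ≤ C * kap t r * F 0 t r) ∧
    ∀ t, 0 < t → ∀ r, 0 < r → r / t * F 0 t r ≤ 2 * sinh r * G 0 t r := by
  obtain ⟨G, hG, d, ⟨C, hC, b⟩, l⟩ := hF.deriv_step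
  refine ⟨_, hG.mul_left Acl.inv, fun t ht r hr => ?_, ⟨C, hC, fun t ht r hr => ?_⟩,
    fun t ht r hr => ?_⟩
  · refine (d t ht r hr).congr_deriv ?_
    have := (two_cosh_pos r).ne'
    rw [sinh_eq_two r]
    field_simp
  · have hy := two_cosh_pos r
    have := b t ht r hr
    unfold kap
    set y := 2 * cosh (r / 2)
    rw [inv_mul_le_iff₀ hy]
    have h2 : G 0 t r ≤ C * (1 + t⁻¹ * phi 0 y * y) * F 0 t r / y := (le_div_iff₀ hy).2 this
    refine h2.trans_eq ?_
    field_simp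
  · have := l t ht r hr
    have hs : 0 < sinh (r / 2) := Real.sinh_pos_iff.2 (by linarith)
    rw [phi_zero hr] at this
    have h3 := mul_le_mul_of_nonneg_left this (by positivity : 0 ≤ 2 * sinh (r / 2))
    have hy := two_cosh_pos r
    calc r / t * F 0 t r = 2 * sinh (r / 2) * (t⁻¹ * (r / 2 / sinh (r / 2)) * F 0 t r) := by
          field_simp
      _ ≤ _ := h3
      _ = _ := by
        rw [sinh_eq_two r]
        field_simp

lemma Fcl.exists_D2 (hF : Fcl κ F) : ∃ G, Fcl κ G ∧
    ∀ t, 0 < t → ∀ r, 0 < r → D2 (F 0 t) r = G 0 t r := by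
  obtain ⟨G, hG, d, -, -⟩ := hF.deriv_step
  refine ⟨G, hG, fun t ht r hr => ?_⟩
  have hs : 0 < sinh (r / 2) := Real.sinh_pos_iff.2 (by linarith)
  rw [D2, (d t ht r hr).deriv]
  field_simp

lemma Fcl.exists_D1 (hF : Fcl κ F) : ∃ G, Fcl κ G ∧
    ∀ t, 0 < t → ∀ r, 0 < r → D1 (F 0 t) r = G 0 t r := by
  obtain ⟨G, hG, d, -, -⟩ := hF.d1_step
  refine ⟨G, hG, fun t ht r hr => ?_⟩
  have hs : 0 < sinh r := Real.sinh_pos_iff.2 hr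
  rw [D1, (d t ht r hr).deriv]
  field_simp

lemma D1_congr {f g : ℝ → ℝ} {r c : ℝ} (hr : 0 < r) (h : ∀ s, 0 < s → f s = c * g s) :
    D1 f r = c * D1 g r := by
  have : f =ᶠ[𝓝 r] fun s => c * g s := by
    filter_upwards [Ioi_mem_nhds hr] with s hs using h s hs
  rw [D1, D1, this.deriv_eq, deriv_const_mul_field]
  ring

lemma D2_congr {f g : ℝ → ℝ} {r c : ℝ} (hr : 0 < r) (h : ∀ s, 0 < s → f s = c * g s) :
    D2 f r = c * D2 g r := by
  have : f =ᶠ[𝓝 r] fun s => c * g s := by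
    filter_upwards [Ioi_mem_nhds hr] with s hs using h s hs
  rw [D2, D2, this.deriv_eq, deriv_const_mul_field]
  ring

/-- The densities in the definition of the heat kernel belong to the cone. -/
lemma exists_Fcl_D (κ : ℝ) (p q : ℕ) : ∃ F, Fcl κ F ∧ ∀ t, 0 < t → ∀ r, 0 < r →
    F 0 t r = t ^ (-(1 : ℝ) / 2) * exp (-κ * t) * (D1^[p] (D2^[q] (gauss t))) r := by
  induction p with
  | zero =>
    induction q with
    | zero =>
      refine ⟨_, Fcl.term (.const 1 zero_le_one) 0, fun t ht r hr => ?_⟩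
      simp [Eb]
    | succ q ih =>
      obtain ⟨F, hF, h⟩ := ih
      obtain ⟨G, hG, hd⟩ := hF.exists_D2
      refine ⟨G, hG, fun t ht r hr => ?_⟩
      rw [← hd t ht r hr, D2_congr hr (h t ht), Function.iterate_zero_apply,
        Function.iterate_zero_apply, Function.iterate_succ_apply']
  | succ p ih =>
    obtain ⟨F, hF, h⟩ := ih
    obtain ⟨G, hG, hd⟩ := hF.exists_D1
    refine ⟨G, hG, fun t ht r hr => ?_⟩
    rw [← hd t ht r hr, D1_congr hr (h t ht), Function.iterate_succ_apply']

/-- A sequence in the cone, each term being the image under `D1` of the preceding one, together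
with the pointwise comparison of consecutive terms. -/
structure DSeq (κ : ℝ) (Fs : ℕ → ℕ → ℝ → ℝ → ℝ) : Prop where
  mem : ∀ j, Fcl κ (Fs j)
  hasDerivAt : ∀ j t, 0 < t → ∀ r, 0 < r → HasDerivAt (Fs j 0 t) (-sinh r * Fs (j + 1) 0 t r) r
  upper : ∀ j, ∃ C, 0 ≤ C ∧ ∀ t, 0 < t → ∀ r, 0 < r →
    Fs (j + 1) 0 t r ≤ C * kap t r * Fs j 0 t r
  lower : ∀ j t, 0 < t → ∀ r, 0 < r → r / t * Fs j 0 t r ≤ 2 * sinh r * Fs (j + 1) 0 t r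

lemma Fcl.exists_DSeq (hF : Fcl κ F) : ∃ Fs, DSeq κ Fs ∧ Fs 0 = F := by
  choose! G hG d u l using fun F (hF : Fcl κ F) => hF.d1_step
  have hmem : ∀ j, Fcl κ (G^[j] F) := by
    intro j
    induction j with
    | zero => exact hF
    | succ j ih => rw [Function.iterate_succ_apply']; exact hG _ ih
  refine ⟨fun j => G^[j] F, ⟨hmem, fun j => ?_, fun j => ?_, fun j => ?_⟩, rfl⟩
  all_goals simp only [Function.iterate_succ_apply']
  · exact d _ (hmem j)
  · exact u _ (hmem j)
  · exact l _ (hmem j)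

/-! ### Elementary bounds on `kap` -/

lemma kap_nonneg {t : ℝ} (ht : 0 < t) (r : ℝ) : 0 ≤ kap t r := by
  have hph := phi_nonneg 0 (two_cosh_pos r).le
  unfold kap
  positivity

lemma kap_antitone {t r s : ℝ} (ht : 0 < t) (hr : 0 ≤ r) (hrs : r ≤ s) : kap t s ≤ kap t r := by
  have hy := two_cosh_pos r
  have hle : 2 * cosh (r / 2) ≤ 2 * cosh (s / 2) := by
    have : cosh (r / 2) ≤ cosh (s / 2) := by
      rw [Real.cosh_le_cosh, abs_of_nonneg (by linarith), abs_of_nonneg (by linarith)]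
      linarith
    linarith
  have hph := phi_antitone 0 hy.le hle
  have hph0 := phi_nonneg 0 (two_cosh_pos r).le
  unfold kap
  gcongr

/-- `x coth x ≤ 1 + x`. -/
lemma mul_cosh_le {x : ℝ} (hx : 0 ≤ x) : x * cosh x ≤ (1 + x) * sinh x := by
  have h1 := Real.self_le_sinh_iff.2 hx
  have h2 := Real.sinh_lt_cosh x
  have h4 := Real.cosh_sub_sinh x
  have h5 : x * exp (-x) ≤ sinh x := by
    refine le_trans ?_ h1
    exact mul_le_of_le_one_right hx (Real.exp_le_one_iff.2 (by linarith))
  rw [← h4] at h5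
  linarith

/-- By the closed form of `phi 0`, `4 cosh² (r/2) kap = 1 + (r/t) coth (r/2)`. -/
lemma kap_eq {t r : ℝ} (hr : 0 < r) :
    (2 * cosh (r / 2)) ^ 2 * kap t r =
      1 + t⁻¹ * (2 * ((r / 2) * cosh (r / 2) / sinh (r / 2))) := by
  have hy := two_cosh_pos r
  have hs : 0 < sinh (r / 2) := Real.sinh_pos_iff.2 (by linarith)
  unfold kap
  rw [phi_zero hr]
  field_simp

lemma kap_le {t r : ℝ} (ht : 0 < t) (hr : 0 < r) :
    (2 * cosh (r / 2)) ^ 2 * kap t r ≤ 1 + t⁻¹ * (2 + r) := by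
  have hs : 0 < sinh (r / 2) := Real.sinh_pos_iff.2 (by linarith)
  have hti : 0 < t⁻¹ := inv_pos.2 ht
  rw [kap_eq hr]
  have : (r / 2) * cosh (r / 2) / sinh (r / 2) ≤ 1 + r / 2 := by
    rw [div_le_iff₀ hs]
    exact mul_cosh_le (by linarith)
  have h2 : 2 * ((r / 2) * cosh (r / 2) / sinh (r / 2)) ≤ 2 + r := by linarith
  gcongr

/-- The factor `tanh (r/2)` cancels the singularity of `coth (r/2)` in `kap_eq`. -/
lemma tanh_kap_le {t r : ℝ} (hr : 0 < r) :
    tanh (r / 2) * ((2 * cosh (r / 2)) ^ 2 * kap t r) ≤ 1 + r / t := by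
  have hs : 0 < sinh (r / 2) := Real.sinh_pos_iff.2 (by linarith)
  rw [kap_eq hr, mul_add, mul_one]
  refine add_le_add (Real.tanh_lt_one _).le (le_of_eq ?_)
  rw [Real.tanh_eq_sinh_div_cosh]
  have := Real.cosh_pos (r / 2)
  field_simp

end Cone

section Kernel

variable {κ : ℝ} {F : ℕ → ℝ → ℝ → ℝ} {Fs : ℕ → ℕ → ℝ → ℝ → ℝ}

/-! ### The weight `psi` -/

/-- The weight `1 + 1/√t + r/t`. -/
def psi (t r : ℝ) : ℝ := 1 + 1 / √t + r / t

lemma one_le_psi {t r : ℝ} (ht : 0 < t) (hr : 0 < r) : 1 ≤ psi t r := by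
  have : 0 < √t := Real.sqrt_pos.2 ht
  unfold psi
  have h1 : 0 < 1 / √t := by positivity
  have h2 : 0 < r / t := by positivity
  linarith

lemma one_add_div_le_psi {t r : ℝ} (ht : 0 < t) : 1 + r / t ≤ psi t r := by
  have : 0 < √t := Real.sqrt_pos.2 ht
  unfold psi
  have h1 : 0 < 1 / √t := by positivity
  linarith

lemma one_add_inv_le_psi_sq {t r : ℝ} (ht : 0 < t) (hr : 0 < r) :
    1 + t⁻¹ * (2 + r) ≤ 2 * psi t r ^ 2 := by
  have hs : 0 < √t := Real.sqrt_pos.2 ht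
  have h0 : t⁻¹ = (1 / √t) ^ 2 := by rw [div_pow, Real.sq_sqrt ht.le]; simp
  have h1 : 0 < 1 / √t := by positivity
  have h2 : 0 < r / t := by positivity
  have h3 : t⁻¹ * (2 + r) = 2 * (1 / √t) ^ 2 + r / t := by
    rw [← h0]; field_simp
  rw [h3]
  unfold psi
  nlinarith [mul_pos h1 h2]

lemma one_add_inv_le_psi_sq' {t r : ℝ} (ht : 0 < t) (hr : 0 < r) :
    1 + t⁻¹ ≤ psi t r ^ 2 := by
  have hs : 0 < √t := Real.sqrt_pos.2 ht
  have h0 : t⁻¹ = (1 / √t) ^ 2 := by rw [div_pow, Real.sq_sqrt ht.le]; simp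
  have h1 : 0 < 1 / √t := by positivity
  have h2 : 0 < r / t := by positivity
  rw [h0]
  unfold psi
  nlinarith [mul_pos h1 h2]

lemma add_pow_le_two {a b : ℝ} (ha : 0 ≤ a) (hb : 0 ≤ b) (m : ℕ) :
    (a + b) ^ m ≤ 2 ^ m * (a ^ m + b ^ m) := by
  have h : a + b ≤ 2 * max a b := by linarith [le_max_left a b, le_max_right a b]
  have h2 : max a b ^ m ≤ a ^ m + b ^ m := by
    rcases max_cases a b with ⟨h, -⟩ | ⟨h, -⟩ <;> rw [h]
    · linarith [pow_nonneg hb m]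
    · linarith [pow_nonneg ha m]
  calc (a + b) ^ m ≤ (2 * max a b) ^ m := pow_le_pow_left₀ (by positivity) h m
    _ = 2 ^ m * max a b ^ m := mul_pow _ _ _
    _ ≤ _ := by gcongr

/-! ### Iterated comparison along a sequence in the cone -/

/-- The factor `kap` may be evaluated at any `r ≤ s`, since it is nonincreasing; this is what survives
integration over `s > r`. -/
lemma DSeq.upper_iter (h : DSeq κ Fs) (j i : ℕ) : ∃ C, 0 ≤ C ∧ ∀ t, 0 < t → ∀ r s, 0 < r → r ≤ s →
    Fs (j + i) 0 t s ≤ C * kap t r ^ i * Fs j 0 t s := by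
  induction i with
  | zero => exact ⟨1, zero_le_one, fun t ht r s hr hs => by simp⟩
  | succ i ih =>
    obtain ⟨C, hC, H⟩ := ih
    obtain ⟨D, hD, H'⟩ := h.upper (j + i)
    refine ⟨D * C, by positivity, fun t ht r s hr hs => ?_⟩
    have hk := kap_nonneg ht r
    have hF := (h.mem (j + i)).nonneg ht s
    calc Fs (j + (i + 1)) 0 t s ≤ D * kap t s * Fs (j + i) 0 t s := H' t ht s (hr.trans_le hs)
      _ ≤ D * kap t r * Fs (j + i) 0 t s := by
        have := kap_antitone ht hr.le hs
        gcongr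
      _ ≤ D * kap t r * (C * kap t r ^ i * Fs j 0 t s) := by
        have := H t ht r s hr hs
        gcongr
      _ = _ := by ring

lemma DSeq.lower_iter (h : DSeq κ Fs) (j i : ℕ) {t : ℝ} (ht : 0 < t) {r : ℝ} (hr : 0 < r) :
    (r / t) ^ i * Fs j 0 t r ≤ (2 * sinh r) ^ i * Fs (j + i) 0 t r := by
  induction i with
  | zero => simp
  | succ i ih =>
    have hs : 0 < sinh r := Real.sinh_pos_iff.2 hr
    calc (r / t) ^ (i + 1) * Fs j 0 t r = r / t * ((r / t) ^ i * Fs j 0 t r) := by ring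
      _ ≤ r / t * ((2 * sinh r) ^ i * Fs (j + i) 0 t r) := by gcongr
      _ = (2 * sinh r) ^ i * (r / t * Fs (j + i) 0 t r) := by ring
      _ ≤ (2 * sinh r) ^ i * (2 * sinh r * Fs (j + i + 1) 0 t r) := by
        have := h.lower (j + i) t ht r hr
        gcongr
      _ = _ := by rw [← add_assoc]; ring

/-- The derivative in the variable `v = cosh r`. -/
lemma DSeq.hasDerivAt_arcosh (h : DSeq κ Fs) (j : ℕ) {t v : ℝ} (ht : 0 < t) (hv : 1 < v) :
    HasDerivAt (fun v => Fs j 0 t (arcosh v)) (-Fs (j + 1) 0 t (arcosh v)) v := by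
  have hr : 0 < arcosh v := Real.arcosh_pos hv
  have hs : 0 < sinh (arcosh v) := Real.sinh_pos_iff.2 hr
  refine ((h.hasDerivAt j t ht _ hr).comp v (Real.hasDerivAt_arcosh hv)).congr_deriv ?_
  rw [← Real.sinh_arcosh hv.le]
  field_simp

/-! ### Decay of the densities -/

lemma exp_decay (m N : ℕ) {t₁ t₂ : ℝ} (h1 : 0 < t₁) (h2 : 0 < t₂) : ∃ C, 0 ≤ C ∧ ∀ r, 0 ≤ r →
    (1 + t₁⁻¹ + (r / t₁) ^ 2) ^ m * exp (-r ^ 2 / (4 * t₂)) ≤ C * (cosh r ^ N)⁻¹ := by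
  set K := 1 + t₁⁻¹ + (t₁⁻¹) ^ 2 with hK
  have hi : 0 < t₁⁻¹ := inv_pos.2 h1
  have hK0 : 0 < K := by positivity
  refine ⟨(2 * K) ^ m * exp (((m : ℝ) + N) ^ 2 * t₂), by positivity, fun r hr => ?_⟩
  rw [← div_eq_mul_inv, le_div_iff₀ (by positivity)]
  have e1 : 1 + t₁⁻¹ + (r / t₁) ^ 2 ≤ 2 * K * exp r := by
    have hq := Real.quadratic_le_exp_of_nonneg hr
    have : 1 + t₁⁻¹ + (r / t₁) ^ 2 ≤ K * (1 + r ^ 2) := by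
      rw [hK, div_eq_mul_inv, mul_pow]
      nlinarith [mul_nonneg hi.le (sq_nonneg r), sq_nonneg r, sq_nonneg t₁⁻¹]
    refine this.trans ?_
    have : 1 + r ^ 2 ≤ 2 * exp r := by nlinarith
    nlinarith
  have e2 : cosh r ≤ exp r := by
    rw [← Real.cosh_add_sinh]
    linarith [Real.sinh_nonneg_iff.2 hr]
  calc (1 + t₁⁻¹ + (r / t₁) ^ 2) ^ m * exp (-r ^ 2 / (4 * t₂)) * cosh r ^ N
      ≤ (2 * K * exp r) ^ m * exp (-r ^ 2 / (4 * t₂)) * exp r ^ N := by gcongr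
    _ = (2 * K) ^ m * exp (((m : ℝ) + N) * r + -r ^ 2 / (4 * t₂)) := by
      rw [mul_pow, ← Real.exp_nat_mul, ← Real.exp_nat_mul, mul_assoc, mul_assoc, ← Real.exp_add,
        ← Real.exp_add]
      congr 2
      ring
    _ ≤ _ := by
      gcongr
      rw [← sub_nonneg]
      have : ((m : ℝ) + N) ^ 2 * t₂ - (((m : ℝ) + N) * r + -r ^ 2 / (4 * t₂)) =
          (r - 2 * ((m : ℝ) + N) * t₂) ^ 2 / (4 * t₂) := by field_simp; ring
      rw [this]
      positivity

/-- Locally uniformly in `t`, every time derivative of a member of the cone decays faster than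
any power of `cosh r`. -/
lemma Fcl.decay (hF : Fcl κ F) (m N : ℕ) {t₁ t₂ : ℝ} (h1 : 0 < t₁) (h2 : 0 < t₂) :
    ∃ C, 0 ≤ C ∧ ∀ t ∈ Set.Icc t₁ t₂, ∀ r, 0 ≤ r → |F m t r| ≤ C * (cosh r ^ N)⁻¹ := by
  induction hF with
  | @term A hA b =>
    obtain ⟨M, hM⟩ := hA.bounded
    obtain ⟨B, hB, hb⟩ := Eb_bound κ m b
    obtain ⟨D, hD, hd⟩ := exp_decay m N h1 h2
    have hM0 : 0 ≤ M := (hA.nonneg 0).trans (hM 0)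
    refine ⟨M * B * ((t₁ ^ b)⁻¹ * t₁ ^ (-(1 : ℝ) / 2) * exp (|κ| * t₂)) * D, by positivity,
      fun t ht r hr => ?_⟩
    have ht0 : 0 < t := h1.trans_le ht.1
    rw [abs_mul, abs_of_nonneg (hA.nonneg r)]
    have e0 : Eb κ 0 b t r ≤ (t₁ ^ b)⁻¹ * (t₁ ^ (-(1 : ℝ) / 2) * exp (|κ| * t₂) *
        exp (-r ^ 2 / (4 * t₂))) := by
      unfold Eb gauss
      have a1 : (t ^ b)⁻¹ ≤ (t₁ ^ b)⁻¹ := by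
        have := ht.1
        gcongr
      have a2 : t ^ (-(1 : ℝ) / 2) ≤ t₁ ^ (-(1 : ℝ) / 2) :=
        Real.rpow_le_rpow_of_nonpos h1 ht.1 (by norm_num)
      have a3 : exp (-κ * t) ≤ exp (|κ| * t₂) := by
        refine Real.exp_le_exp.2 ?_
        calc -κ * t ≤ |κ| * t := mul_le_mul_of_nonneg_right (neg_le_abs κ) ht0.le
          _ ≤ _ := mul_le_mul_of_nonneg_left ht.2 (abs_nonneg _)
      have a4 : exp (-r ^ 2 / (4 * t)) ≤ exp (-r ^ 2 / (4 * t₂)) := by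
        refine Real.exp_le_exp.2 ?_
        rw [neg_div, neg_div, neg_le_neg_iff]
        have := ht.2
        gcongr
      gcongr
    have e1 : (1 + t⁻¹ + (r / t) ^ 2) ^ m ≤ (1 + t₁⁻¹ + (r / t₁) ^ 2) ^ m := by
      have := ht.1
      gcongr
    calc A r * |Eb κ m b t r|
        ≤ M * (B * (1 + t₁⁻¹ + (r / t₁) ^ 2) ^ m * ((t₁ ^ b)⁻¹ *
          (t₁ ^ (-(1 : ℝ) / 2) * exp (|κ| * t₂) * exp (-r ^ 2 / (4 * t₂))))) := by
          refine mul_le_mul (hM r) ((hb t ht0 r).trans ?_) (abs_nonneg _) hM0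
          have := Eb_zero_nonneg κ b ht0 r
          gcongr
      _ = M * B * ((t₁ ^ b)⁻¹ * t₁ ^ (-(1 : ℝ) / 2) * exp (|κ| * t₂)) *
          ((1 + t₁⁻¹ + (r / t₁) ^ 2) ^ m * exp (-r ^ 2 / (4 * t₂))) := by ring
      _ ≤ M * B * ((t₁ ^ b)⁻¹ * t₁ ^ (-(1 : ℝ) / 2) * exp (|κ| * t₂)) *
          (D * (cosh r ^ N)⁻¹) := by
        have := hd r hr
        gcongr
      _ = _ := by ring
  | add _ _ i1 i2 =>
    obtain ⟨C, hC, i1⟩ := i1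
    obtain ⟨D, hD, i2⟩ := i2
    refine ⟨C + D, by positivity, fun t ht r hr => (abs_add_le _ _).trans ?_⟩
    rw [add_mul]
    exact add_le_add (i1 t ht r hr) (i2 t ht r hr)

/-! ### The Abel transform -/

/-- The Abel transform with an additional moment, after the substitution
`cosh s = cosh r + x²`: `∫₀^∞ x^{2i} F_m(t, s) dx`, as a function of `v = cosh r`. -/
def Kint (F : ℕ → ℝ → ℝ → ℝ) (i m : ℕ) (t v : ℝ) : ℝ :=
  ∫ x in Set.Ioi (0 : ℝ), x ^ (2 * i) * F m t (arcosh (v + x ^ 2))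

/-- An integrable majorant for the Abel transform, uniform in `v ≥ 1` and locally in `t`. -/
lemma Fcl.dom (hF : Fcl κ F) (i m : ℕ) {t₁ t₂ : ℝ} (h1 : 0 < t₁) (h2 : 0 < t₂) :
    ∃ C, 0 ≤ C ∧ ∀ t ∈ Set.Icc t₁ t₂, ∀ v, 1 ≤ v → ∀ x,
      |x ^ (2 * i) * F m t (arcosh (v + x ^ 2))| ≤ C * (1 + x ^ 2)⁻¹ := by
  obtain ⟨C, hC, h⟩ := hF.decay m (i + 1) h1 h2
  refine ⟨C, hC, fun t ht v hv x => ?_⟩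
  have hx := sq_nonneg x
  have hw : 1 ≤ v + x ^ 2 := by linarith
  have e := h t ht _ (Real.arcosh_nonneg hw)
  rw [Real.cosh_arcosh hw] at e
  have e1 : (v + x ^ 2)⁻¹ ≤ (1 + x ^ 2)⁻¹ := by gcongr
  have hw0 : 0 < v + x ^ 2 := by linarith
  calc |x ^ (2 * i) * F m t (arcosh (v + x ^ 2))|
      = (x ^ 2) ^ i * |F m t (arcosh (v + x ^ 2))| := by
        rw [abs_mul, pow_mul, abs_of_nonneg (pow_nonneg hx i)]
    _ ≤ (v + x ^ 2) ^ i * (C * ((v + x ^ 2) ^ (i + 1))⁻¹) := by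
        gcongr
        linarith
    _ = C * (v + x ^ 2)⁻¹ := by rw [pow_succ (v + x ^ 2) i]; field_simp
    _ ≤ _ := by gcongr

lemma Fcl.integrand_continuous (hF : Fcl κ F) (i m : ℕ) (t : ℝ) {v : ℝ} (hv : 1 ≤ v) :
    Continuous fun x : ℝ => x ^ (2 * i) * F m t (arcosh (v + x ^ 2)) := by
  have h1 : Continuous fun x : ℝ => arcosh (v + x ^ 2) :=
    Real.continuousOn_arcosh.comp_continuous (by fun_prop)
      fun x => by have := sq_nonneg x; simp only [Set.mem_Ici]; linarith
  exact (by fun_prop : Continuous fun x : ℝ => x ^ (2 * i)).mul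
    ((hF.continuous m t).comp h1)

lemma Fcl.integrand_integrable (hF : Fcl κ F) (i m : ℕ) {t v : ℝ} (ht : 0 < t) (hv : 1 ≤ v) :
    IntegrableOn (fun x : ℝ => x ^ (2 * i) * F m t (arcosh (v + x ^ 2))) (Set.Ioi 0) := by
  obtain ⟨C, hC, h⟩ := hF.dom i m ht ht
  refine Integrable.mono' ((integrable_inv_one_add_sq.integrableOn (s := Set.Ioi 0)).const_mul C)
    (hF.integrand_continuous i m t hv).aestronglyMeasurable ?_
  exact Eventually.of_forall fun x => h t ⟨le_rfl, le_rfl⟩ v hv x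

lemma Fcl.Kint_hasDerivAt_t (hF : Fcl κ F) (m : ℕ) {t v : ℝ} (ht : 0 < t) (hv : 1 ≤ v) :
    HasDerivAt (fun t => Kint F 0 m t v) (Kint F 0 (m + 1) t v) t := by
  obtain ⟨C, hC, h⟩ := hF.dom 0 (m + 1) (half_pos ht) (by positivity : 0 < 2 * t)
  unfold Kint
  refine (hasDerivAt_integral_of_dominated_loc_of_deriv_le (s := Set.Icc (t / 2) (2 * t))
    (F := fun t x => x ^ (2 * 0) * F m t (arcosh (v + x ^ 2)))
    (bound := fun x : ℝ => C * (1 + x ^ 2)⁻¹)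
    (F' := fun t x => x ^ (2 * 0) * F (m + 1) t (arcosh (v + x ^ 2)))
    (Icc_mem_nhds (by linarith) (by linarith)) ?_ (hF.integrand_integrable 0 m ht hv) ?_ ?_ ?_
    ?_).2
  · exact Eventually.of_forall fun t =>
      (hF.integrand_continuous 0 m t hv).aestronglyMeasurable
  · exact (hF.integrand_continuous 0 (m + 1) t hv).aestronglyMeasurable
  · exact Eventually.of_forall fun x s hs => h s hs v hv x
  · exact (integrable_inv_one_add_sq.integrableOn (s := Set.Ioi 0)).const_mul C
  · exact Eventually.of_forall fun x s hs =>
      (hF.hasDerivAt_t m (by have := hs.1; linarith) _).const_mul _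

lemma DSeq.Kint_hasDerivAt_v (h : DSeq κ Fs) (j : ℕ) {t v : ℝ} (ht : 0 < t) (hv : 1 < v) :
    HasDerivAt (Kint (Fs j) 0 0 t) (-Kint (Fs (j + 1)) 0 0 t v) v := by
  obtain ⟨C, hC, hb⟩ := (h.mem (j + 1)).dom 0 0 ht ht
  have hval : -Kint (Fs (j + 1)) 0 0 t v =
      ∫ x in Set.Ioi (0 : ℝ), -(x ^ (2 * 0) * Fs (j + 1) 0 t (arcosh (v + x ^ 2))) := by
    rw [integral_neg]; rfl
  rw [hval]
  refine (hasDerivAt_integral_of_dominated_loc_of_deriv_le (s := Set.Ioi 1)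
    (F := fun v x => x ^ (2 * 0) * Fs j 0 t (arcosh (v + x ^ 2)))
    (bound := fun x : ℝ => C * (1 + x ^ 2)⁻¹)
    (F' := fun v x => -(x ^ (2 * 0) * Fs (j + 1) 0 t (arcosh (v + x ^ 2))))
    (Ioi_mem_nhds hv) ?_ ((h.mem j).integrand_integrable 0 0 ht hv.le) ?_ ?_ ?_ ?_).2
  · filter_upwards [Ioi_mem_nhds hv] with w hw
    exact ((h.mem j).integrand_continuous 0 0 t (le_of_lt hw)).aestronglyMeasurable
  · exact ((h.mem (j + 1)).integrand_continuous 0 0 t hv.le).neg.aestronglyMeasurable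
  · refine Eventually.of_forall fun x w hw => ?_
    rw [norm_neg]
    exact hb t ⟨le_rfl, le_rfl⟩ w (le_of_lt hw) x
  · exact (integrable_inv_one_add_sq.integrableOn (s := Set.Ioi 0)).const_mul C
  · refine Eventually.of_forall fun x w hw => ?_
    have hw' : 1 < w + x ^ 2 := by
      have : 1 < w := hw
      nlinarith [sq_nonneg x]
    have e := (h.hasDerivAt_arcosh j ht hw').comp w ((hasDerivAt_id w).add_const (x ^ 2))
    refine (e.const_mul (x ^ (2 * 0))).congr_deriv ?_
    ring

lemma Fcl.Kint_nonneg (hF : Fcl κ F) (i : ℕ) {t : ℝ} (ht : 0 < t) (v : ℝ) :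
    0 ≤ Kint F i 0 t v :=
  setIntegral_nonneg measurableSet_Ioi fun x _ => by
    have := hF.nonneg ht (arcosh (v + x ^ 2))
    rw [pow_mul]
    positivity

/-- Integration by parts: a factor `x²` compensates one application of `D1`. -/
lemma DSeq.Kint_parts (h : DSeq κ Fs) (i j : ℕ) {t v : ℝ} (ht : 0 < t) (hv : 1 < v) :
    Kint (Fs (j + 1)) (i + 1) 0 t v = (2 * (i : ℝ) + 1) / 2 * Kint (Fs j) i 0 t v := by
  have i1 := ((h.mem j).integrand_integrable i 0 ht hv.le).const_mul (2 * (i : ℝ) + 1)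
  have i2 := ((h.mem (j + 1)).integrand_integrable (i + 1) 0 ht hv.le).const_mul 2
  have key := integral_Ioi_of_hasDerivAt_of_tendsto' (a := 0) (m := 0)
    (f := fun x : ℝ => x ^ (2 * i + 1) * Fs j 0 t (arcosh (v + x ^ 2)))
    (f' := fun x : ℝ => (2 * (i : ℝ) + 1) * (x ^ (2 * i) * Fs j 0 t (arcosh (v + x ^ 2))) -
      2 * (x ^ (2 * (i + 1)) * Fs (j + 1) 0 t (arcosh (v + x ^ 2)))) ?_ (i1.sub i2) ?_
  · rw [integral_sub i1 i2, integral_const_mul, integral_const_mul] at key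
    simp only [ne_eq, Nat.add_eq_zero_iff, one_ne_zero, and_false, not_false_eq_true, zero_pow,
      zero_mul, sub_zero] at key
    unfold Kint
    linarith
  · intro x _
    have hw' : 1 < v + x ^ 2 := by nlinarith [sq_nonneg x]
    have e : HasDerivAt (fun x : ℝ => Fs j 0 t (arcosh (v + x ^ 2)))
        (-Fs (j + 1) 0 t (arcosh (v + x ^ 2)) * (((2 : ℕ) : ℝ) * x ^ (2 - 1))) x :=
      HasDerivAt.comp (h₂ := fun v => Fs j 0 t (arcosh v)) (h := fun x : ℝ => v + x ^ 2) x
        (h.hasDerivAt_arcosh j ht hw') ((hasDerivAt_pow 2 x).const_add v)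
    refine ((hasDerivAt_pow (2 * i + 1) x).mul e).congr_deriv ?_
    push_cast
    ring
  · obtain ⟨C, hC, hb⟩ := (h.mem j).dom (i + 1) 0 ht ht
    have hlim : Tendsto (fun x : ℝ => C * (1 + x ^ 2)⁻¹) atTop (𝓝 (C * 0)) := by
      refine Tendsto.const_mul C (tendsto_inv_atTop_zero.comp ?_)
      exact tendsto_atTop_add_const_left _ _ (tendsto_pow_atTop two_ne_zero)
    rw [mul_zero] at hlim
    refine squeeze_zero_norm' ?_ hlim
    filter_upwards [eventually_ge_atTop 1] with x hx
    refine le_trans ?_ (hb t ⟨le_rfl, le_rfl⟩ v hv.le x)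
    have hx0 : 0 ≤ x := zero_le_one.trans hx
    rw [Real.norm_eq_abs, abs_mul, abs_mul, abs_of_nonneg (pow_nonneg hx0 _),
      abs_of_nonneg (pow_nonneg hx0 _)]
    refine mul_le_mul_of_nonneg_right ?_ (abs_nonneg _)
    exact pow_le_pow_right₀ hx (by omega)

/-- The moment `x^{2i}` compensates `i` applications of `D1`. -/
lemma DSeq.Kint_moment (h : DSeq κ Fs) (i : ℕ) : ∃ c : ℝ, 0 ≤ c ∧ ∀ j t v, 0 < t → 1 < v →
    Kint (Fs (j + i)) i 0 t v = c * Kint (Fs j) 0 0 t v := by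
  induction i with
  | zero => exact ⟨1, zero_le_one, fun j t v _ _ => by simp⟩
  | succ i ih =>
    obtain ⟨c, hc, ih⟩ := ih
    refine ⟨(2 * (i : ℝ) + 1) / 2 * c, by positivity, fun j t v ht hv => ?_⟩
    rw [← add_assoc, h.Kint_parts i (j + i) ht hv, ih j t v ht hv]
    ring

lemma DSeq.Kint_upper (h : DSeq κ Fs) (j i : ℕ) : ∃ C, 0 ≤ C ∧ ∀ t, 0 < t → ∀ r, 0 < r →
    Kint (Fs (j + i)) 0 0 t (cosh r) ≤ C * kap t r ^ i * Kint (Fs j) 0 0 t (cosh r) := by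
  obtain ⟨C, hC, H⟩ := h.upper_iter j i
  refine ⟨C, hC, fun t ht r hr => ?_⟩
  unfold Kint
  rw [← integral_const_mul]
  refine setIntegral_mono_on ((h.mem _).integrand_integrable 0 0 ht (Real.one_le_cosh r))
    (((h.mem _).integrand_integrable 0 0 ht (Real.one_le_cosh r)).const_mul _) measurableSet_Ioi
    fun x _ => ?_
  have hx := sq_nonneg x
  have hs : r ≤ arcosh (cosh r + x ^ 2) := by
    rw [← Real.arcosh_cosh hr.le, Real.cosh_arcosh (Real.one_le_cosh r),
      Real.arcosh_le_arcosh (Real.cosh_pos r) (by have := Real.cosh_pos r; linarith)]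
    linarith
  simp only [mul_zero, pow_zero, one_mul]
  exact H t ht r _ hr hs

end Kernel

section Interface

variable {κ : ℝ} {F : ℕ → ℝ → ℝ → ℝ} {Fs : ℕ → ℕ → ℝ → ℝ → ℝ}

/-! ### Time derivatives of the Abel transform -/

lemma sinh_kap_le {t r : ℝ} (ht : 0 < t) (hr : 0 < r) : sinh r * kap t r ≤ psi t r := by
  have h1 := tanh_kap_le (t := t) hr
  have h2 := one_add_div_le_psi (r := r) ht
  have h3 : 0 < 1 + r / t := by positivity
  have hc := Real.cosh_pos (r / 2)
  have e : tanh (r / 2) * ((2 * cosh (r / 2)) ^ 2 * kap t r) = 2 * (sinh r * kap t r) := by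
    have : sinh r = 2 * sinh (r / 2) * cosh (r / 2) := by
      rw [← Real.sinh_two_mul]; ring_nf
    rw [this, Real.tanh_eq_sinh_div_cosh]
    field_simp
  linarith

lemma cosh_eq_half (r : ℝ) : cosh r = 2 * cosh (r / 2) ^ 2 - 1 := by
  have := Real.cosh_two_mul (r / 2)
  rw [show 2 * (r / 2) = r by ring] at this
  rw [this, Real.sinh_sq]
  ring

lemma cosh_kap_le {t r : ℝ} (ht : 0 < t) (hr : 0 < r) : cosh r * kap t r ≤ 2 * psi t r ^ 2 := by
  have h1 := (kap_le ht hr).trans (one_add_inv_le_psi_sq ht hr)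
  refine le_trans (mul_le_mul_of_nonneg_right ?_ (kap_nonneg ht r)) h1
  rw [cosh_eq_half]
  nlinarith [sq_nonneg (cosh (r / 2))]

/-- Pointwise bound for a time derivative. With `sinh² s = sinh² r + 2 cosh r x² + x⁴`, the factor
`(s/t)^{2m}` is traded for `2m` further applications of `D1` and moments in `x`. -/
lemma DSeq.pointwise (h : DSeq κ Fs) (j m : ℕ) : ∃ C, 0 ≤ C ∧ ∀ t, 0 < t → ∀ r, 0 < r → ∀ x : ℝ,
    |Fs j m t (arcosh (cosh r + x ^ 2))| ≤
      C * ((1 + t⁻¹) ^ m * Fs j 0 t (arcosh (cosh r + x ^ 2)) +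
        ((sinh r) ^ (2 * m) * Fs (j + 2 * m) 0 t (arcosh (cosh r + x ^ 2)) +
        (2 * cosh r) ^ m * (x ^ (2 * m) * Fs (j + 2 * m) 0 t (arcosh (cosh r + x ^ 2))) +
        x ^ (2 * (2 * m)) * Fs (j + 2 * m) 0 t (arcosh (cosh r + x ^ 2)))) := by
  obtain ⟨C, hC, hb⟩ := (h.mem j).time_bound m
  refine ⟨C * 2 ^ m * 16 ^ m, by positivity, fun t ht r hr x => ?_⟩
  have hx := sq_nonneg x
  have hcr := Real.one_lt_cosh.2 hr.ne'
  have hw : 1 < cosh r + x ^ 2 := by linarith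
  set s := arcosh (cosh r + x ^ 2) with hs
  have hs0 : 0 < s := Real.arcosh_pos hw
  have hA := (h.mem j).nonneg ht s
  have hB := (h.mem (j + 2 * m)).nonneg ht s
  have hsh := Real.sinh_pos_iff.2 hs0
  have hshr := Real.sinh_pos_iff.2 hr
  have e1 := h.lower_iter j (2 * m) ht hs0
  have e2 : sinh s ^ 2 = sinh r ^ 2 + (2 * cosh r * x ^ 2 + (x ^ 2) ^ 2) := by
    rw [Real.sinh_sq, Real.sinh_sq, hs, Real.cosh_arcosh hw.le]
    ring
  have e3 : (sinh s ^ 2) ^ m ≤ 4 ^ m * (sinh r ^ (2 * m) + (2 * cosh r) ^ m * x ^ (2 * m) +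
      x ^ (2 * (2 * m))) := by
    rw [e2]
    have a1 := add_pow_le_two (a := sinh r ^ 2) (b := 2 * cosh r * x ^ 2 + (x ^ 2) ^ 2)
      (by positivity) (by positivity) m
    have a2 := add_pow_le_two (a := 2 * cosh r * x ^ 2) (b := (x ^ 2) ^ 2)
      (by positivity) (by positivity) m
    have b1 : (1 : ℝ) ≤ 2 ^ m := one_le_pow₀ (by norm_num)
    have b2 : 0 ≤ (sinh r ^ 2) ^ m := by positivity
    calc _ ≤ _ := a1
      _ ≤ 2 ^ m * (2 ^ m * (sinh r ^ 2) ^ m +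
          2 ^ m * ((2 * cosh r * x ^ 2) ^ m + ((x ^ 2) ^ 2) ^ m)) := by
        gcongr
        nlinarith
      _ = _ := by
        rw [show (4 : ℝ) = 2 * 2 by norm_num, mul_pow (2 : ℝ) 2, mul_pow (2 * cosh r) (x ^ 2)]
        ring
  have e4 : ((s / t) ^ 2) ^ m * Fs j 0 t s ≤ 16 ^ m * (sinh r ^ (2 * m) +
      (2 * cosh r) ^ m * x ^ (2 * m) + x ^ (2 * (2 * m))) * Fs (j + 2 * m) 0 t s := by
    rw [← pow_mul]
    refine e1.trans ?_
    refine mul_le_mul_of_nonneg_right ?_ hB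
    rw [mul_pow, pow_mul (sinh s), pow_mul]
    calc _ ≤ (2 ^ 2 : ℝ) ^ m * _ := mul_le_mul_of_nonneg_left e3 (by positivity)
      _ = _ := by
        rw [← mul_assoc, ← mul_pow]
        norm_num
  have e5 := add_pow_le_two (a := 1 + t⁻¹) (b := (s / t) ^ 2) (by positivity) (by positivity) m
  have e6 : (1 : ℝ) ≤ 16 ^ m := one_le_pow₀ (by norm_num)
  have e7 : 0 ≤ (1 + t⁻¹) ^ m * Fs j 0 t s := by positivity
  calc _ ≤ C * (1 + t⁻¹ + (s / t) ^ 2) ^ m * Fs j 0 t s := hb t ht s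
    _ ≤ C * (2 ^ m * ((1 + t⁻¹) ^ m + ((s / t) ^ 2) ^ m)) * Fs j 0 t s := by gcongr
    _ = C * 2 ^ m * ((1 + t⁻¹) ^ m * Fs j 0 t s + ((s / t) ^ 2) ^ m * Fs j 0 t s) := by ring
    _ ≤ C * 2 ^ m * (16 ^ m * ((1 + t⁻¹) ^ m * Fs j 0 t s) + 16 ^ m * (sinh r ^ (2 * m) +
      (2 * cosh r) ^ m * x ^ (2 * m) + x ^ (2 * (2 * m))) * Fs (j + 2 * m) 0 t s) := by
        refine mul_le_mul_of_nonneg_left ?_ (by positivity)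
        exact add_le_add (le_mul_of_one_le_left e7 e6) e4
    _ = _ := by ring

/-- A time derivative of the Abel transform costs a factor `psi²`: of the `2m` additional
applications of `D1` in `DSeq.pointwise`, those with a moment are undone by integration by parts and
the others cost `kap` each, with `sinh r * kap ≤ psi` and `cosh r * kap ≤ 2 psi²`. -/
lemma DSeq.Kint_time_bound (h : DSeq κ Fs) (j m : ℕ) : ∃ C, 0 ≤ C ∧ ∀ t, 0 < t → ∀ r, 0 < r →
    |Kint (Fs j) 0 m t (cosh r)| ≤ C * psi t r ^ (2 * m) * Kint (Fs j) 0 0 t (cosh r) := by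
  obtain ⟨C, hC, hb⟩ := h.pointwise j m
  obtain ⟨c1, hc1, k1⟩ := h.Kint_moment m
  obtain ⟨c2, hc2, k2⟩ := h.Kint_moment (2 * m)
  obtain ⟨C1, hC1, u1⟩ := h.Kint_upper j (2 * m)
  obtain ⟨C2, hC2, u2⟩ := h.Kint_upper j m
  refine ⟨C * (1 + (C1 + 4 ^ m * c1 * C2 + c2)), by positivity, fun t ht r hr => ?_⟩
  have hcr := Real.one_lt_cosh.2 hr.ne'
  have hshr := Real.sinh_pos_iff.2 hr
  have hK := (h.mem j).Kint_nonneg 0 ht (cosh r)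
  have hp := one_le_psi ht hr
  have hp0 : 0 < psi t r := by linarith
  have hk := kap_nonneg ht r
  have I0 := (h.mem j).integrand_integrable 0 0 ht hcr.le
  have I1 := (h.mem (j + 2 * m)).integrand_integrable 0 0 ht hcr.le
  have I2 := (h.mem (j + 2 * m)).integrand_integrable m 0 ht hcr.le
  have I3 := (h.mem (j + 2 * m)).integrand_integrable (2 * m) 0 ht hcr.le
  have step : |Kint (Fs j) 0 m t (cosh r)| ≤ C * ((1 + t⁻¹) ^ m * Kint (Fs j) 0 0 t (cosh r) +
      ((sinh r) ^ (2 * m) * Kint (Fs (j + 2 * m)) 0 0 t (cosh r) +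
        (2 * cosh r) ^ m * Kint (Fs (j + 2 * m)) m 0 t (cosh r) +
        Kint (Fs (j + 2 * m)) (2 * m) 0 t (cosh r))) := by
    have J0 := I0.const_mul ((1 + t⁻¹) ^ m)
    have J1 := I1.const_mul (sinh r ^ (2 * m))
    have J2 := I2.const_mul ((2 * cosh r) ^ m)
    have eR : C * ((1 + t⁻¹) ^ m * Kint (Fs j) 0 0 t (cosh r) +
      ((sinh r) ^ (2 * m) * Kint (Fs (j + 2 * m)) 0 0 t (cosh r) +
        (2 * cosh r) ^ m * Kint (Fs (j + 2 * m)) m 0 t (cosh r) +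
        Kint (Fs (j + 2 * m)) (2 * m) 0 t (cosh r))) = ∫ x in Set.Ioi (0 : ℝ),
        C * ((1 + t⁻¹) ^ m * (x ^ (2 * 0) * Fs j 0 t (arcosh (cosh r + x ^ 2))) +
        ((sinh r) ^ (2 * m) * (x ^ (2 * 0) * Fs (j + 2 * m) 0 t (arcosh (cosh r + x ^ 2))) +
        (2 * cosh r) ^ m * (x ^ (2 * m) * Fs (j + 2 * m) 0 t (arcosh (cosh r + x ^ 2))) +
        x ^ (2 * (2 * m)) * Fs (j + 2 * m) 0 t (arcosh (cosh r + x ^ 2)))) := by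
      rw [integral_const_mul, integral_add J0 ((J1.fun_add J2).fun_add I3),
        integral_add (J1.fun_add J2) I3,
        integral_add J1 J2, integral_const_mul, integral_const_mul, integral_const_mul]
      rfl
    rw [eR]
    rw [← Real.norm_eq_abs]
    unfold Kint
    refine norm_integral_le_of_norm_le ((J0.fun_add ((J1.fun_add J2).fun_add I3)).const_mul C) ?_
    refine Eventually.of_forall fun x => ?_
    simp only [mul_zero, pow_zero, one_mul]
    exact hb t ht r hr x
  refine step.trans ?_
  have q0 : (1 + t⁻¹) ^ m ≤ psi t r ^ (2 * m) := by
    rw [pow_mul]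
    exact pow_le_pow_left₀ (by positivity) (one_add_inv_le_psi_sq' ht hr) m
  have q1 : sinh r ^ (2 * m) * Kint (Fs (j + 2 * m)) 0 0 t (cosh r) ≤
      C1 * psi t r ^ (2 * m) * Kint (Fs j) 0 0 t (cosh r) := by
    calc _ ≤ sinh r ^ (2 * m) * (C1 * kap t r ^ (2 * m) * Kint (Fs j) 0 0 t (cosh r)) :=
          mul_le_mul_of_nonneg_left (u1 t ht r hr) (by positivity)
      _ = C1 * (sinh r * kap t r) ^ (2 * m) * Kint (Fs j) 0 0 t (cosh r) := by ring
      _ ≤ _ := by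
        have := sinh_kap_le ht hr
        gcongr
  have q2 : (2 * cosh r) ^ m * Kint (Fs (j + 2 * m)) m 0 t (cosh r) ≤
      4 ^ m * c1 * C2 * psi t r ^ (2 * m) * Kint (Fs j) 0 0 t (cosh r) := by
    rw [two_mul m, ← add_assoc, k1 _ t _ ht hcr]
    calc _ ≤ (2 * cosh r) ^ m * (c1 * (C2 * kap t r ^ m * Kint (Fs j) 0 0 t (cosh r))) := by
          have := u2 t ht r hr
          gcongr
      _ = c1 * C2 * (2 * (cosh r * kap t r)) ^ m * Kint (Fs j) 0 0 t (cosh r) := by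
          rw [mul_pow, mul_pow, mul_pow]; ring
      _ ≤ c1 * C2 * (2 * (2 * psi t r ^ 2)) ^ m * Kint (Fs j) 0 0 t (cosh r) := by
        have := cosh_kap_le ht hr
        have := Real.cosh_pos r
        gcongr
      _ = _ := by
        rw [← mul_assoc, mul_pow, ← pow_mul, show (2 : ℝ) * 2 = 4 by norm_num]
        ring
  have q3 : Kint (Fs (j + 2 * m)) (2 * m) 0 t (cosh r) ≤
      c2 * psi t r ^ (2 * m) * Kint (Fs j) 0 0 t (cosh r) := by
    rw [k2 _ t _ ht hcr]
    have : 1 ≤ psi t r ^ (2 * m) := one_le_pow₀ hp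
    have : c2 ≤ c2 * psi t r ^ (2 * m) := le_mul_of_one_le_right hc2 this
    gcongr
  calc _ ≤ C * (psi t r ^ (2 * m) * Kint (Fs j) 0 0 t (cosh r) +
        (C1 * psi t r ^ (2 * m) * Kint (Fs j) 0 0 t (cosh r) +
        4 ^ m * c1 * C2 * psi t r ^ (2 * m) * Kint (Fs j) 0 0 t (cosh r) +
        c2 * psi t r ^ (2 * m) * Kint (Fs j) 0 0 t (cosh r))) := by gcongr
    _ = _ := by ring

/-! ### The heat kernel as a function of `cosh r` -/

/-- A family `H j m t v` representing the heat kernel in the variable `v = cosh r`: up to the sign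
`(-1)^j`, it is the derivative of order `j` in `v` and `m` in `t`, and it obeys the kernel
bounds. -/
structure Rep (μ ν : ℕ) (H : ℕ → ℕ → ℝ → ℝ → ℝ) : Prop where
  deriv_v : ∀ j t v, 0 < t → 1 < v → HasDerivAt (H j 0 t) (-H (j + 1) 0 t v) v
  deriv_t : ∀ j m t v, 0 < t → 1 < v → HasDerivAt (fun t => H j m t v) (H j (m + 1) t v) t
  heat_eq : ∀ t r, 0 < t → 0 < r → heat μ ν t r = H 0 0 t (cosh r)
  bound : ∀ j m, ∃ C, 0 ≤ C ∧ ∀ t r, 0 < t → 0 < r →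
    |H j m t (cosh r)| ≤ C * kap t r ^ j * psi t r ^ (2 * m) * heat μ ν t r
  nonneg : ∀ t r, 0 < t → 0 < r → 0 ≤ heat μ ν t r

lemma cc_nonneg (μ ν k : ℕ) : 0 ≤ cc μ ν k := by
  unfold cc
  have := Real.pi_pos
  positivity

lemma exists_Rep_even (μ ν : ℕ) (hν : Even ν) : ∃ H, Rep μ ν H := by
  obtain ⟨F, hF, hF0⟩ := exists_Fcl_D ((Qc μ ν) ^ 2 / 4) (ν / 2) (μ / 2)
  obtain ⟨Fs, h, h0⟩ := hF.exists_DSeq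
  have hc := cc_nonneg μ ν 0
  have heq : ∀ t r, 0 < t → 0 < r → heat μ ν t r = cc μ ν 0 * Fs 0 0 t r := by
    intro t r ht hr
    rw [h0, hF0 t ht r hr]
    unfold heat
    rw [if_pos hν, show -(Qc μ ν) ^ 2 * t / 4 = -((Qc μ ν) ^ 2 / 4) * t by ring]
    ring
  refine ⟨fun j m t v => cc μ ν 0 * Fs j m t (arcosh v), ?_, ?_, ?_, ?_, ?_⟩
  · intro j t v ht hv
    exact ((h.hasDerivAt_arcosh j ht hv).const_mul _).congr_deriv (by ring)
  · intro j m t v ht hv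
    exact ((h.mem j).hasDerivAt_t m ht _).const_mul _
  · intro t r ht hr
    simp only [Real.arcosh_cosh hr.le]
    exact heq t r ht hr
  · intro j m
    obtain ⟨C, hC, hb⟩ := (h.mem j).time_bound m
    obtain ⟨D, hD, hu⟩ := h.upper_iter 0 j
    rw [zero_add] at hu
    refine ⟨C * 2 ^ m * D, by positivity, fun t r ht hr => ?_⟩
    simp only [Real.arcosh_cosh hr.le]
    rw [heq t r ht hr, abs_mul, abs_of_nonneg hc]
    have hp := one_le_psi ht hr
    have hk := kap_nonneg ht r
    have hn := (h.mem j).nonneg ht r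
    have hn0 := (h.mem 0).nonneg ht r
    have e1 : 1 + t⁻¹ + (r / t) ^ 2 ≤ 2 * psi t r ^ 2 := by
      have a1 := one_add_inv_le_psi_sq' ht hr
      have a2 := one_add_div_le_psi (r := r) ht
      have a3 : 0 < r / t := by positivity
      nlinarith
    calc cc μ ν 0 * |Fs j m t r|
        ≤ cc μ ν 0 * (C * (1 + t⁻¹ + (r / t) ^ 2) ^ m * Fs j 0 t r) := by
          have := hb t ht r
          gcongr
      _ ≤ cc μ ν 0 * (C * (2 * psi t r ^ 2) ^ m * (D * kap t r ^ j * Fs 0 0 t r)) := by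
          have := hu t ht r r hr le_rfl
          gcongr
      _ = _ := by rw [mul_pow, ← pow_mul]; ring
  · intro t r ht hr
    rw [heq t r ht hr]
    exact mul_nonneg hc ((h.mem 0).nonneg ht r)

/-- The change of variables `cosh s = cosh r + x²` in the Abel integral. -/
lemma abel_subst (g : ℝ → ℝ) {r : ℝ} (hr : 0 < r) :
    ∫ s in Set.Ioi r, (sinh s / √(cosh s - cosh r)) * g s =
      2 * ∫ x in Set.Ioi (0 : ℝ), g (arcosh (cosh r + x ^ 2)) := by
  have hcr := Real.one_lt_cosh.2 hr.ne'
  set f : ℝ → ℝ := fun x => arcosh (cosh r + x ^ 2) with hf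
  have hw : ∀ x : ℝ, 1 < cosh r + x ^ 2 := fun x => by have := sq_nonneg x; linarith
  have hder : ∀ x ∈ Set.Ioi (0 : ℝ),
      HasDerivWithinAt f (2 * x / sinh (f x)) (Set.Ioi 0) x := by
    intro x _
    have e := HasDerivAt.comp (h₂ := arcosh) (h := fun x : ℝ => cosh r + x ^ 2) x
      (Real.hasDerivAt_arcosh (hw x)) ((hasDerivAt_pow 2 x).const_add (cosh r))
    refine (e.congr_deriv ?_).hasDerivWithinAt
    rw [hf, Real.sinh_arcosh (hw x).le]
    norm_num
    ring
  have hmono : MonotoneOn f (Set.Ioi 0) := by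
    intro x hx y hy hxy
    have hx' : 0 < x := hx
    rw [hf]
    simp only
    rw [Real.arcosh_le_arcosh (by linarith [hw x]) (by linarith [hw y])]
    gcongr
  have himg : f '' Set.Ioi 0 = Set.Ioi r := by
    ext s
    constructor
    · rintro ⟨x, hx, rfl⟩
      have hx' : 0 < x := hx
      rw [Set.mem_Ioi, hf]
      simp only
      rw [← Real.arcosh_cosh hr.le, Real.cosh_arcosh hcr.le,
        Real.arcosh_lt_arcosh (by linarith) (by linarith [hw x])]
      have : 0 < x ^ 2 := by positivity
      linarith
    · intro hs
      have hs' : r < s := hs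
      have hlt : cosh r < cosh s := by
        rw [Real.cosh_lt_cosh, abs_of_pos hr, abs_of_pos (hr.trans hs')]; exact hs'
      refine ⟨√(cosh s - cosh r), Real.sqrt_pos.2 (by linarith), ?_⟩
      rw [hf]
      simp only
      rw [Real.sq_sqrt (by linarith), add_sub_cancel, Real.arcosh_cosh (hr.trans hs').le]
  have key := integral_image_eq_integral_deriv_smul_of_monotoneOn measurableSet_Ioi hder hmono
    (fun s => (sinh s / √(cosh s - cosh r)) * g s)
  rw [himg] at key
  rw [key, ← integral_const_mul]
  refine setIntegral_congr_fun measurableSet_Ioi fun x hx => ?_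
  have hx' : 0 < x := hx
  have hs : 0 < sinh (f x) := Real.sinh_pos_iff.2 (Real.arcosh_pos (hw x))
  have e : cosh (f x) - cosh r = x ^ 2 := by
    rw [hf]
    simp only
    rw [Real.cosh_arcosh (hw x).le]
    ring
  simp only [smul_eq_mul]
  rw [e, Real.sqrt_sq hx'.le]
  field_simp
  rfl

lemma exists_Rep_odd (μ ν : ℕ) (hν : ¬ Even ν) : ∃ H, Rep μ ν H := by
  obtain ⟨F, hF, hF0⟩ := exists_Fcl_D ((Qc μ ν) ^ 2 / 4) ((ν + 1) / 2) (μ / 2)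
  obtain ⟨Fs, h, h0⟩ := hF.exists_DSeq
  set c := cc μ ν 0 * Real.pi ^ (-(1 : ℝ) / 2) * 2 with hcdef
  have hc : 0 ≤ c := by
    have := cc_nonneg μ ν 0
    have := Real.pi_pos
    positivity
  have heq : ∀ t r, 0 < t → 0 < r → heat μ ν t r = c * Kint (Fs 0) 0 0 t (cosh r) := by
    intro t r ht hr
    have hcr := Real.one_lt_cosh.2 hr.ne'
    unfold heat
    rw [if_neg hν, abel_subst _ hr, show -(Qc μ ν) ^ 2 * t / 4 = -((Qc μ ν) ^ 2 / 4) * t by ring]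
    have e : Kint (Fs 0) 0 0 t (cosh r) = t ^ (-(1 : ℝ) / 2) * exp (-((Qc μ ν) ^ 2 / 4) * t) *
        ∫ x in Set.Ioi (0 : ℝ),
          (D1^[(ν + 1) / 2] (D2^[μ / 2] (gauss t))) (arcosh (cosh r + x ^ 2)) := by
      unfold Kint
      rw [← integral_const_mul]
      refine setIntegral_congr_fun measurableSet_Ioi fun x _ => ?_
      have hw : 1 < cosh r + x ^ 2 := by have := sq_nonneg x; linarith
      simp only [mul_zero, pow_zero, one_mul]
      rw [h0, hF0 t ht _ (Real.arcosh_pos hw)]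
    rw [e, hcdef]
    ring
  refine ⟨fun j m t v => c * Kint (Fs j) 0 m t v, ?_, ?_, ?_, ?_, ?_⟩
  · intro j t v ht hv
    exact ((h.Kint_hasDerivAt_v j ht hv).const_mul _).congr_deriv (by ring)
  · intro j m t v ht hv
    exact ((h.mem j).Kint_hasDerivAt_t m ht hv.le).const_mul _
  · exact heq
  · intro j m
    obtain ⟨C, hC, hb⟩ := h.Kint_time_bound j m
    obtain ⟨D, hD, hu⟩ := h.Kint_upper 0 j
    rw [zero_add] at hu
    refine ⟨C * D, by positivity, fun t r ht hr => ?_⟩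
    rw [heq t r ht hr, abs_mul, abs_of_nonneg hc]
    have hp := one_le_psi ht hr
    have hp0 : 0 < psi t r := by linarith
    calc c * |Kint (Fs j) 0 m t (cosh r)|
        ≤ c * (C * psi t r ^ (2 * m) * Kint (Fs j) 0 0 t (cosh r)) := by
          have := hb t ht r hr
          gcongr
      _ ≤ c * (C * psi t r ^ (2 * m) * (D * kap t r ^ j * Kint (Fs 0) 0 0 t (cosh r))) := by
          have := hu t ht r hr
          gcongr
      _ = _ := by ring
  · intro t r ht hr
    rw [heq t r ht hr]
    exact mul_nonneg hc ((h.mem 0).Kint_nonneg 0 ht _)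

lemma exists_Rep (μ ν : ℕ) : ∃ H, Rep μ ν H := by
  by_cases hν : Even ν
  · exact exists_Rep_even μ ν hν
  · exact exists_Rep_odd μ ν hν

end Interface

section Geometry

variable {μ ν : ℕ} {Jm : Fin ν → Matrix (Fin μ) (Fin μ) ℝ}

/-! ### The vector fields as derivations -/

/-- The tangent vector of the field `X_j` at the point `p`. -/
def dir (Jm : Fin ν → Matrix (Fin μ) (Fin μ) ℝ) (j : Fin (μ + ν + 1)) (p : Pt μ ν) : Pt μ ν :=
  if h0 : (j : ℕ) = 0 then (0, 0, p.2.2)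
  else if hm : (j : ℕ) ≤ μ then
    (Pi.single ⟨(j : ℕ) - 1, by omega⟩ (√p.2.2),
      fun k => √p.2.2 * ((1 / 2) * (Jm k).mulVec p.1 ⟨(j : ℕ) - 1, by omega⟩), 0)
  else (0, Pi.single ⟨(j : ℕ) - μ - 1, by have := j.isLt; omega⟩ p.2.2, 0)

lemma Xf_eq (j : Fin (μ + ν + 1)) {f : Pt μ ν → ℝ} {L : Pt μ ν →L[ℝ] ℝ} {p : Pt μ ν}
    (hf : HasFDerivAt f L p) : Xf μ ν Jm j f p = L (dir Jm j p) := by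
  have hx : ∀ i : Fin μ, HasDerivAt (fun s => f (Function.update p.1 i s, p.2.1, p.2.2))
      (L (Pi.single i 1, 0, 0)) (p.1 i) := by
    intro i
    refine HasFDerivAt.comp_hasDerivAt_of_eq (p.1 i) hf
      ((hasDerivAt_update p.1 i (p.1 i)).prodMk (hasDerivAt_const _ (p.2.1, p.2.2))) ?_
    simp
  have hz : ∀ k : Fin ν, HasDerivAt (fun s => f (p.1, Function.update p.2.1 k s, p.2.2))
      (L (0, Pi.single k 1, 0)) (p.2.1 k) := by
    intro k
    refine HasFDerivAt.comp_hasDerivAt_of_eq (p.2.1 k) hf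
      ((hasDerivAt_const _ p.1).prodMk ((hasDerivAt_update p.2.1 k (p.2.1 k)).prodMk
        (hasDerivAt_const _ p.2.2))) ?_
    simp
  have ha : HasDerivAt (fun s => f (p.1, p.2.1, s)) (L (0, 0, 1)) p.2.2 :=
    HasFDerivAt.comp_hasDerivAt_of_eq p.2.2 hf
      ((hasDerivAt_const _ p.1).prodMk ((hasDerivAt_const _ p.2.1).prodMk (hasDerivAt_id _))) rfl
  unfold Xf dir
  split_ifs with h0 hm
  · rw [ha.deriv, ← smul_eq_mul, ← L.map_smul]
    simp
  · rw [(hx _).deriv]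
    simp only [(hz _).deriv]
    simp only [← smul_eq_mul, ← L.map_smul, ← map_sum, ← L.map_add]
    congr 1
    refine Prod.ext ?_ (Prod.ext ?_ ?_)
    · simp [Prod.fst_sum, ← Pi.single_smul]
    · ext k
      simp [Prod.fst_sum, Prod.snd_sum, Pi.single_apply]
    · simp [Prod.snd_sum]
  · rw [(hz _).deriv, ← smul_eq_mul, ← L.map_smul]
    simp [← Pi.single_smul]

/-- `Der Jm j f g`: on the half space `a > 0` the function `f` is differentiable and
`X_j f = g`. -/
def Der (Jm : Fin ν → Matrix (Fin μ) (Fin μ) ℝ) (j : Fin (μ + ν + 1)) (f g : Pt μ ν → ℝ) : Prop :=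
  ∀ p : Pt μ ν, 0 < p.2.2 → ∃ L : Pt μ ν →L[ℝ] ℝ, HasFDerivAt f L p ∧ L (dir Jm j p) = g p

lemma halfspace_mem_nhds {p : Pt μ ν} (hp : 0 < p.2.2) : ∀ᶠ q : Pt μ ν in 𝓝 p, 0 < q.2.2 :=
  (continuous_snd.comp continuous_snd).continuousAt.eventually (lt_mem_nhds hp)

variable {j : Fin (μ + ν + 1)} {f g f' g' : Pt μ ν → ℝ}

lemma Der.congr (h : Der Jm j f g) (h1 : ∀ p, 0 < p.2.2 → f' p = f p)
    (h2 : ∀ p, 0 < p.2.2 → g' p = g p) : Der Jm j f' g' := by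
  intro p hp
  obtain ⟨L, hL, e⟩ := h p hp
  exact ⟨L, hL.congr_of_eventuallyEq ((halfspace_mem_nhds hp).mono h1), e.trans (h2 p hp).symm⟩

lemma Der.unique (h : Der Jm j f g) (h' : Der Jm j f g') {p : Pt μ ν} (hp : 0 < p.2.2) :
    g p = g' p := by
  obtain ⟨L, hL, e⟩ := h p hp
  obtain ⟨L', hL', e'⟩ := h' p hp
  rw [← e, ← e', hL.unique hL']

lemma Der.const (c : ℝ) : Der Jm j (fun _ => c) (fun _ => 0) :=
  fun p _ => ⟨0, hasFDerivAt_const c p, rfl⟩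

lemma Der.add (h : Der Jm j f g) (h' : Der Jm j f' g') :
    Der Jm j (fun p => f p + f' p) (fun p => g p + g' p) := by
  intro p hp
  obtain ⟨L, hL, e⟩ := h p hp
  obtain ⟨L', hL', e'⟩ := h' p hp
  exact ⟨L + L', hL.add hL', by simp [e, e']⟩

lemma Der.mul (h : Der Jm j f g) (h' : Der Jm j f' g') :
    Der Jm j (fun p => f p * f' p) (fun p => g p * f' p + f p * g' p) := by
  intro p hp
  obtain ⟨L, hL, e⟩ := h p hp
  obtain ⟨L', hL', e'⟩ := h' p hp
  exact ⟨_, hL.mul hL', by simp [e, e']; ring⟩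

lemma Der.sum {ι : Type*} (s : Finset ι) {f g : ι → Pt μ ν → ℝ}
    (h : ∀ i ∈ s, Der Jm j (f i) (g i)) :
    Der Jm j (fun p => ∑ i ∈ s, f i p) (fun p => ∑ i ∈ s, g i p) := by
  classical
  induction s using Finset.induction_on with
  | empty => simpa using Der.const 0
  | insert a s ha ih =>
    simp only [Finset.sum_insert ha]
    exact (h a (Finset.mem_insert_self a s)).add
      (ih fun i hi => h i (Finset.mem_insert_of_mem hi))

lemma Der.clm (L : Pt μ ν →L[ℝ] ℝ) : Der Jm j (fun p => L p) (fun p => L (dir Jm j p)) :=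
  fun _ _ => ⟨L, L.hasFDerivAt, rfl⟩

lemma Der.x (i : Fin μ) : Der Jm j (fun p => p.1 i) (fun p => (dir Jm j p).1 i) :=
  Der.clm ((ContinuousLinearMap.proj i).comp
    (ContinuousLinearMap.fst ℝ (Fin μ → ℝ) ((Fin ν → ℝ) × ℝ)))

lemma Der.z (k : Fin ν) : Der Jm j (fun p => p.2.1 k) (fun p => (dir Jm j p).2.1 k) :=
  Der.clm ((ContinuousLinearMap.proj k).comp ((ContinuousLinearMap.fst ℝ (Fin ν → ℝ) ℝ).comp
    (ContinuousLinearMap.snd ℝ (Fin μ → ℝ) ((Fin ν → ℝ) × ℝ))))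

lemma Der.a : Der Jm j (fun p => p.2.2) (fun p => (dir Jm j p).2.2) :=
  Der.clm ((ContinuousLinearMap.snd ℝ (Fin ν → ℝ) ℝ).comp
    (ContinuousLinearMap.snd ℝ (Fin μ → ℝ) ((Fin ν → ℝ) × ℝ)))

/-- Chain rule on the half space. -/
lemma Der.comp {φ φ' : ℝ → ℝ} (h : Der Jm j f g)
    (hφ : ∀ p : Pt μ ν, 0 < p.2.2 → HasDerivAt φ (φ' (f p)) (f p)) :
    Der Jm j (fun p => φ (f p)) (fun p => φ' (f p) * g p) := by
  intro p hp
  obtain ⟨L, hL, e⟩ := h p hp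
  exact ⟨_, (hφ p hp).comp_hasFDerivAt p hL, by simp [e]⟩

/-- The coordinate `a` is an eigenfunction of every `X_j`, with eigenvalue `1` for `j = 0` and `0`
otherwise. -/
lemma exists_dir_a (Jm : Fin ν → Matrix (Fin μ) (Fin μ) ℝ) (j : Fin (μ + ν + 1)) :
    ∃ δ : ℝ, (j.1 = 0 → δ = 1) ∧ (j.1 ≠ 0 → δ = 0) ∧ ∀ p, (dir Jm j p).2.2 = δ * p.2.2 := by
  by_cases h : j.1 = 0
  · exact ⟨1, fun _ => rfl, fun h' => absurd h h', fun p => by simp [dir, h]⟩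
  · refine ⟨0, fun h' => absurd h' h, fun _ => rfl, fun p => ?_⟩
    unfold dir
    rw [dif_neg h]
    split_ifs <;> simp

/-! ### Polynomials graded by the dilations of the group -/

/-- Functions of weighted degree at most `d`, where `x`, `√a` have weight one and `z`, `a` have
weight two. -/
inductive Wd (μ ν : ℕ) : ℕ → (Pt μ ν → ℝ) → Prop
  | const (d : ℕ) (c : ℝ) : Wd μ ν d (fun _ => c)
  | x (i : Fin μ) : Wd μ ν 1 (fun p => p.1 i)
  | z (k : Fin ν) : Wd μ ν 2 (fun p => p.2.1 k)
  | s : Wd μ ν 1 (fun p => √p.2.2)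
  | a : Wd μ ν 2 (fun p => p.2.2)
  | add {d : ℕ} {f g : Pt μ ν → ℝ} : Wd μ ν d f → Wd μ ν d g → Wd μ ν d (fun p => f p + g p)
  | mul {d e : ℕ} {f g : Pt μ ν → ℝ} :
      Wd μ ν d f → Wd μ ν e g → Wd μ ν (d + e) (fun p => f p * g p)

lemma Wd.smul {d : ℕ} (c : ℝ) (h : Wd μ ν d f) : Wd μ ν d (fun p => c * f p) := by
  have := (Wd.const 0 c).mul h
  rwa [zero_add] at this

lemma Wd.sum {ι : Type*} (s : Finset ι) {d : ℕ} {f : ι → Pt μ ν → ℝ}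
    (h : ∀ i ∈ s, Wd μ ν d (f i)) : Wd μ ν d (fun p => ∑ i ∈ s, f i p) := by
  classical
  induction s using Finset.induction_on with
  | empty => simpa using Wd.const d 0
  | insert a s ha ih =>
    simp only [Finset.sum_insert ha]
    exact (h a (Finset.mem_insert_self a s)).add
      (ih fun i hi => h i (Finset.mem_insert_of_mem hi))

/-- The fields `X_j` preserve the weight. -/
lemma Wd.step (j : Fin (μ + ν + 1)) {d : ℕ} (h : Wd μ ν d f) : ∃ g, Wd μ ν d g ∧ Der Jm j f g := by
  induction h with
  | const d c => exact ⟨_, Wd.const d 0, Der.const c⟩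
  | x i =>
    refine ⟨_, ?_, Der.x i⟩
    unfold dir
    split_ifs with h0 hm
    · exact Wd.const 1 0
    · by_cases hi : i = ⟨(j : ℕ) - 1, by omega⟩
      · subst hi
        simpa using Wd.s
      · simpa [Pi.single_apply, hi] using Wd.const 1 0
    · exact Wd.const 1 0
  | z k =>
    refine ⟨_, ?_, Der.z k⟩
    unfold dir
    split_ifs with h0 hm
    · exact Wd.const 2 0
    · simp only [Matrix.mulVec, dotProduct]
      refine Wd.mul (d := 1) (e := 1) Wd.s (Wd.smul _ (Wd.sum _ fun i _ => Wd.smul _ (Wd.x i)))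
    · by_cases hk : k = ⟨(j : ℕ) - μ - 1, by have := j.isLt; omega⟩
      · subst hk
        simpa using Wd.a
      · simpa [Pi.single_apply, hk] using Wd.const 2 0
  | s =>
    obtain ⟨δ, -, -, hδ⟩ := exists_dir_a Jm j
    refine ⟨_, Wd.smul (δ / 2) Wd.s, ?_⟩
    refine Der.congr (Der.comp (φ := Real.sqrt) (φ' := fun a => 1 / (2 * √a)) Der.a
      fun p hp => Real.hasDerivAt_sqrt hp.ne') (fun _ _ => rfl) fun p hp => ?_
    have h1 : 0 < √p.2.2 := Real.sqrt_pos.2 hp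
    have h2 := Real.mul_self_sqrt hp.le
    rw [hδ]
    field_simp
    rw [sq, h2]
  | a =>
    obtain ⟨δ, -, -, hδ⟩ := exists_dir_a Jm j
    exact ⟨_, Wd.smul δ Wd.a, Der.a.congr (fun _ _ => rfl) fun p _ => (hδ p).symm⟩
  | add _ _ i1 i2 =>
    obtain ⟨g1, w1, d1⟩ := i1
    obtain ⟨g2, w2, d2⟩ := i2
    exact ⟨_, w1.add w2, d1.add d2⟩
  | mul h1 h2 i1 i2 =>
    obtain ⟨g1, w1, d1⟩ := i1
    obtain ⟨g2, w2, d2⟩ := i2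
    exact ⟨_, (w1.mul h2).add (h1.mul w2), d1.mul d2⟩

/-- The fields `X_j` preserve the quotients `P / a`. -/
lemma Wd.step_div (j : Fin (μ + ν + 1)) {d : ℕ} (h : Wd μ ν d f) :
    ∃ g, Wd μ ν d g ∧ Der Jm j (fun p => f p * (p.2.2)⁻¹) (fun p => g p * (p.2.2)⁻¹) := by
  obtain ⟨g, w, dg⟩ := h.step (Jm := Jm) j
  obtain ⟨δ, -, -, hδ⟩ := exists_dir_a Jm j
  refine ⟨_, w.add (h.smul (-δ)), ?_⟩
  refine (dg.mul (Der.comp (φ := fun a => a⁻¹) (φ' := fun a => -(a ^ 2)⁻¹) Der.a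
    fun p hp => hasDerivAt_inv hp.ne')).congr (fun _ _ => rfl) fun p hp => ?_
  rw [hδ]
  field_simp

end Geometry

section Coefficients

variable {μ ν : ℕ} {Jm : Fin ν → Matrix (Fin μ) (Fin μ) ℝ} {j : Fin (μ + ν + 1)}
  {f g f' g' : Pt μ ν → ℝ}

/-! ### The function `cosh² (r/2)` -/

/-- The quantity `1 + a + |x|²/4`. -/
def An (p : Pt μ ν) : ℝ := 1 + p.2.2 + 1 / 4 * ∑ i, p.1 i * p.1 i

/-- The polynomial `(1 + a + |x|²/4)² + |z|² = 4 a cosh² (r/2)`. -/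
def Nn (p : Pt μ ν) : ℝ := An p * An p + ∑ k, p.2.1 k * p.2.1 k

lemma coshExpr_eq {p : Pt μ ν} (hp : 0 < p.2.2) :
    coshExpr μ ν p = 1 / 4 * (Nn p * (p.2.2)⁻¹) := by
  have hs : 0 < √p.2.2 := Real.sqrt_pos.2 hp
  have e : p.2.2 = √p.2.2 ^ 2 := (Real.sq_sqrt hp.le).symm
  unfold coshExpr Nn An
  simp only [← pow_two]
  generalize ∑ i, p.1 i ^ 2 = X
  generalize ∑ i, p.2.1 i ^ 2 = Z
  generalize √p.2.2 = s at *
  rw [e]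
  field_simp
  ring

lemma sum_sq_nonneg {ι : Type*} [Fintype ι] (x : ι → ℝ) : 0 ≤ ∑ i, x i * x i :=
  Finset.sum_nonneg fun _ _ => mul_self_nonneg _

lemma sq_le_sum {ι : Type*} [Fintype ι] (x : ι → ℝ) (i : ι) : x i * x i ≤ ∑ i, x i * x i :=
  Finset.single_le_sum (f := fun i => x i * x i) (fun _ _ => mul_self_nonneg _) (Finset.mem_univ i)

lemma one_add_le_An {p : Pt μ ν} : 1 + p.2.2 ≤ An p := by
  have := sum_sq_nonneg p.1
  unfold An
  linarith

lemma An_le_sqrt (p : Pt μ ν) : An p ≤ √(Nn p) :=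
  Real.le_sqrt_of_sq_le (by
    have := sum_sq_nonneg p.2.1
    unfold Nn
    nlinarith)

lemma Wd_An : Wd μ ν 2 An :=
  ((Wd.const 2 1).add Wd.a).add
    (Wd.smul _ (Wd.sum _ fun _ _ => Wd.mul (d := 1) (e := 1) (Wd.x _) (Wd.x _)))

lemma Wd_Nn : Wd μ ν 4 Nn :=
  (Wd.mul (d := 2) (e := 2) Wd_An Wd_An).add
    (Wd.sum _ fun _ _ => Wd.mul (d := 2) (e := 2) (Wd.z _) (Wd.z _))

/-- A function of weighted degree at most `d` is dominated by the `d`-th power of a homogeneous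
gauge, the fourth root of `Nn`. -/
lemma Wd.bound {d : ℕ} (h : Wd μ ν d f) : ∃ C, 0 ≤ C ∧ ∀ p : Pt μ ν, 0 < p.2.2 →
    |f p| ≤ C * √√(Nn p) ^ d := by
  have hA : ∀ p : Pt μ ν, An p ≤ √√(Nn p) ^ 2 := fun p => by
    rw [Real.sq_sqrt (Real.sqrt_nonneg _)]; exact An_le_sqrt p
  have h1 : ∀ p : Pt μ ν, 0 < p.2.2 → 1 ≤ √√(Nn p) := fun p hp =>
    (one_le_sq_iff₀ (Real.sqrt_nonneg _)).1 (by linarith [hA p, one_add_le_An (p := p)])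
  induction h with
  | const d c =>
    refine ⟨|c|, abs_nonneg c, fun p hp => le_mul_of_one_le_right (abs_nonneg c) ?_⟩
    exact one_le_pow₀ (h1 p hp)
  | x i =>
    refine ⟨2, by norm_num, fun p hp => ?_⟩
    rw [pow_one]
    refine abs_le_of_sq_le_sq ?_ (by positivity)
    have := hA p
    have e := sq_le_sum p.1 i
    unfold An at this
    nlinarith
  | z k =>
    refine ⟨1, by norm_num, fun p hp => ?_⟩
    rw [Real.sq_sqrt (Real.sqrt_nonneg _), one_mul]
    refine Real.le_sqrt_of_sq_le ?_
    have e := sq_le_sum p.2.1 k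
    rw [sq_abs]
    unfold Nn
    nlinarith [mul_self_nonneg (An p)]
  | s =>
    refine ⟨1, by norm_num, fun p hp => ?_⟩
    rw [pow_one, one_mul, abs_of_nonneg (Real.sqrt_nonneg _)]
    refine Real.sqrt_le_sqrt ?_
    linarith [An_le_sqrt p, one_add_le_An (p := p)]
  | a =>
    refine ⟨1, by norm_num, fun p hp => ?_⟩
    rw [one_mul, abs_of_pos hp]
    linarith [hA p, one_add_le_An (p := p)]
  | add _ _ i1 i2 =>
    obtain ⟨C, hC, b1⟩ := i1
    obtain ⟨D, hD, b2⟩ := i2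
    refine ⟨C + D, by positivity, fun p hp => (abs_add_le _ _).trans ?_⟩
    rw [add_mul]
    exact add_le_add (b1 p hp) (b2 p hp)
  | mul _ _ i1 i2 =>
    obtain ⟨C, hC, b1⟩ := i1
    obtain ⟨D, hD, b2⟩ := i2
    refine ⟨C * D, by positivity, fun p hp => ?_⟩
    rw [abs_mul, pow_add]
    calc _ ≤ (C * _) * (D * _) :=
          mul_le_mul (b1 p hp) (b2 p hp) (abs_nonneg _) (by positivity)
      _ = _ := by ring

/-- The quantity `4 a sinh² (r/2)`. -/
def Mn (p : Pt μ ν) : ℝ := Nn p - 4 * p.2.2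

lemma Mn_eq (p : Pt μ ν) : Mn p = (p.2.2 - 1 - 1 / 4 * ∑ i, p.1 i * p.1 i) ^ 2 +
    p.2.2 * (∑ i, p.1 i * p.1 i) + ∑ k, p.2.1 k * p.2.1 k := by
  unfold Mn Nn An
  ring

lemma Mn_nonneg {p : Pt μ ν} (hp : 0 < p.2.2) : 0 ≤ Mn p := by
  have h1 := sum_sq_nonneg p.1
  have h2 := sum_sq_nonneg p.2.1
  rw [Mn_eq]
  positivity

lemma one_le_coshExpr {p : Pt μ ν} (hp : 0 < p.2.2) : 1 ≤ coshExpr μ ν p := by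
  have h := Mn_nonneg hp
  unfold Mn at h
  rw [coshExpr_eq hp, ← div_eq_mul_inv, ← mul_div_assoc, le_div_iff₀ hp]
  linarith

/-- The function `tanh (r/2)`. -/
def sg (p : Pt μ ν) : ℝ := √((coshExpr μ ν p - 1) / coshExpr μ ν p)

lemma sg_nonneg (p : Pt μ ν) : 0 ≤ sg p := Real.sqrt_nonneg _

lemma sg_le_one {p : Pt μ ν} (hp : 0 < p.2.2) : sg p ≤ 1 := by
  have := one_le_coshExpr hp
  unfold sg
  rw [Real.sqrt_le_one]
  rw [div_le_one (by linarith)]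
  linarith

lemma coshExpr_mul_sg {p : Pt μ ν} (hp : 0 < p.2.2) :
    coshExpr μ ν p * sg p = 1 / 4 * (√(Nn p) * √(Mn p) * (p.2.2)⁻¹) := by
  have h1 := one_le_coshExpr hp
  have hM := Mn_nonneg hp
  have hN : 0 ≤ Nn p := by unfold Mn at hM; linarith
  have e : coshExpr μ ν p - 1 = 1 / 4 * (Mn p * (p.2.2)⁻¹) := by
    rw [coshExpr_eq hp]; unfold Mn; field_simp
  have h0 : 0 ≤ (coshExpr μ ν p - 1) / coshExpr μ ν p := div_nonneg (by linarith) (by linarith)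
  refine (sq_eq_sq₀ (mul_nonneg (by linarith) (sg_nonneg p)) (by positivity)).1 ?_
  unfold sg
  rw [mul_pow, Real.sq_sqrt h0, mul_pow, mul_pow, mul_pow, Real.sq_sqrt hN, Real.sq_sqrt hM, e]
  have : coshExpr μ ν p ≠ 0 := by linarith
  field_simp
  rw [coshExpr_eq hp]
  field_simp

/-! ### The gradient of `cosh² (r/2)` -/

lemma Der_Nn (Jm : Fin ν → Matrix (Fin μ) (Fin μ) ℝ) (j : Fin (μ + ν + 1)) :
    Der Jm j Nn (fun p => 2 * An p * ((dir Jm j p).2.2 + 1 / 2 * ∑ i, p.1 i * (dir Jm j p).1 i) +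
      2 * ∑ k, p.2.1 k * (dir Jm j p).2.1 k) := by
  have hA : Der Jm j An (fun p => (dir Jm j p).2.2 + 1 / 2 * ∑ i, p.1 i * (dir Jm j p).1 i) := by
    refine (((Der.const 1).add Der.a).add ((Der.const (1 / 4)).mul (Der.sum Finset.univ
      fun i _ => (Der.x i).mul (Der.x i)))).congr (fun _ _ => rfl) fun p _ => ?_
    simp only [Finset.sum_add_distrib, mul_comm ((dir Jm j p).1 _)]
    ring
  refine ((hA.mul hA).add (Der.sum Finset.univ fun k _ => (Der.z k).mul (Der.z k))).congr
    (fun _ _ => rfl) fun p _ => ?_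
  simp only [Finset.sum_add_distrib, mul_comm ((dir Jm j p).2.1 _)]
  ring

lemma abs_x_le {p : Pt μ ν} (hp : 0 < p.2.2) (i : Fin μ) : √p.2.2 * |p.1 i| ≤ √(Mn p) := by
  refine Real.le_sqrt_of_sq_le ?_
  have h1 := sq_le_sum p.1 i
  have h2 := sum_sq_nonneg p.2.1
  rw [mul_pow, Real.sq_sqrt hp.le, sq_abs, Mn_eq]
  nlinarith [sq_nonneg (p.2.2 - 1 - 1 / 4 * ∑ i, p.1 i * p.1 i)]

lemma abs_z_le {p : Pt μ ν} (hp : 0 < p.2.2) (k : Fin ν) : |p.2.1 k| ≤ √(Mn p) := by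
  refine Real.le_sqrt_of_sq_le ?_
  have h1 := sum_sq_nonneg p.1
  have h2 := sq_le_sum p.2.1 k
  rw [sq_abs, Mn_eq]
  nlinarith [sq_nonneg (p.2.2 - 1 - 1 / 4 * ∑ i, p.1 i * p.1 i), mul_nonneg hp.le h1]

/-- The gradient of `cosh² (r/2)` along the fields is `O(sinh (r/2) cosh (r/2))`. -/
lemma exists_grad (Jm : Fin ν → Matrix (Fin μ) (Fin μ) ℝ) (j : Fin (μ + ν + 1)) :
    ∃ P, Wd μ ν 4 P ∧ Der Jm j (coshExpr μ ν) (fun p => P p * (p.2.2)⁻¹) ∧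
      ∃ C, 0 ≤ C ∧ ∀ p : Pt μ ν, 0 < p.2.2 →
        |P p * (p.2.2)⁻¹| ≤ C * (coshExpr μ ν p * sg p) := by
  obtain ⟨P, hP, hD⟩ := (Wd_Nn.smul (1 / 4)).step_div (Jm := Jm) j
  have hE : Der Jm j (coshExpr μ ν) (fun p => P p * (p.2.2)⁻¹) :=
    hD.congr (fun p hp => by rw [coshExpr_eq hp]; ring) fun _ _ => rfl
  refine ⟨P, hP, hE, ?_⟩
  obtain ⟨δ, hδ1, hδ0, hδ⟩ := exists_dir_a Jm j
  have key : ∀ p : Pt μ ν, 0 < p.2.2 → P p * (p.2.2)⁻¹ = 1 / 4 * ((2 * An p * (δ * p.2.2 +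
      1 / 2 * ∑ i, p.1 i * (dir Jm j p).1 i) + 2 * ∑ k, p.2.1 k * (dir Jm j p).2.1 k -
      δ * Nn p) * (p.2.2)⁻¹) := by
    intro p hp
    refine Der.unique (g' := fun p => 1 / 4 * ((2 * An p * (δ * p.2.2 +
      1 / 2 * ∑ i, p.1 i * (dir Jm j p).1 i) + 2 * ∑ k, p.2.1 k * (dir Jm j p).2.1 k -
      δ * Nn p) * (p.2.2)⁻¹)) hE ?_ hp
    refine ((Der.const (1 / 4)).mul ((Der_Nn Jm j).mul (Der.comp (φ := fun a => a⁻¹)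
      (φ' := fun a => -(a ^ 2)⁻¹) Der.a fun p hp => hasDerivAt_inv hp.ne'))).congr
      (fun p hp => coshExpr_eq hp) fun p hp => ?_
    rw [hδ]
    field_simp
    ring
  -- It suffices to bound the numerator by `√(Nn p) * √(Mn p)`.
  suffices H : ∃ C, 0 ≤ C ∧ ∀ p : Pt μ ν, 0 < p.2.2 → |2 * An p * (δ * p.2.2 +
      1 / 2 * ∑ i, p.1 i * (dir Jm j p).1 i) + 2 * ∑ k, p.2.1 k * (dir Jm j p).2.1 k -
      δ * Nn p| ≤ C * (√(Nn p) * √(Mn p)) by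
    obtain ⟨C, hC, hb⟩ := H
    refine ⟨C, hC, fun p hp => ?_⟩
    have hi : 0 < (p.2.2)⁻¹ := inv_pos.2 hp
    rw [key p hp, coshExpr_mul_sg hp, abs_mul, abs_mul, abs_of_pos hi,
      abs_of_pos (by norm_num : (0 : ℝ) < 1 / 4)]
    have := mul_le_mul_of_nonneg_right (hb p hp) hi.le
    linarith
  by_cases h0 : (j : ℕ) = 0
  · -- `j = 0`: the Cauchy-Schwarz inequality.
    refine ⟨1, zero_le_one, fun p hp => ?_⟩
    have hM := Mn_nonneg hp
    have hN : 0 ≤ Nn p := by unfold Mn at hM; linarith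
    have h1 := sum_sq_nonneg p.1
    have h2 := sum_sq_nonneg p.2.1
    rw [one_mul, ← Real.sqrt_mul hN]
    refine Real.le_sqrt_of_sq_le ?_
    rw [sq_abs, hδ1 h0, Mn_eq]
    simp only [dir, h0, dite_true, Pi.zero_apply, mul_zero, Finset.sum_const_zero]
    have eA : An p = 1 + p.2.2 + 1 / 4 * ∑ i, p.1 i * p.1 i := rfl
    have eN : Nn p = An p * An p + ∑ k, p.2.1 k * p.2.1 k := rfl
    generalize ∑ i, p.1 i * p.1 i = X at *
    generalize ∑ k, p.2.1 k * p.2.1 k = Z at *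
    rw [eN]
    have hD : p.2.2 - 1 - 1 / 4 * X = 2 * p.2.2 - An p := by rw [eA]; ring
    rw [hD]
    generalize An p = A at *
    generalize p.2.2 = a at *
    have h3 : 0 ≤ Z * (A + (2 * a - A)) ^ 2 := by positivity
    have h4 : 0 ≤ (A * A + Z) * (a * X) :=
      mul_nonneg (add_nonneg (mul_self_nonneg _) h2) (mul_nonneg hp.le h1)
    nlinarith
  by_cases hm : (j : ℕ) ≤ μ
  · set l : Fin μ := ⟨(j : ℕ) - 1, by omega⟩ with hl
    refine ⟨1 + ∑ k, ∑ i, |Jm k l i|, by positivity, fun p hp => ?_⟩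
    have hs := Real.sqrt_nonneg p.2.2
    have hA := An_le_sqrt p
    have hA0 : 0 ≤ An p := by linarith [one_add_le_An (p := p)]
    have hNM : √(Mn p) ≤ √(Nn p) := Real.sqrt_le_sqrt (by unfold Mn; linarith)
    have hM0 := Real.sqrt_nonneg (Mn p)
    have e : 2 * An p * (δ * p.2.2 +
        1 / 2 * ∑ i, p.1 i * (dir Jm j p).1 i) + 2 * ∑ k, p.2.1 k * (dir Jm j p).2.1 k -
        δ * Nn p = An p * (√p.2.2 * p.1 l) +
          ∑ k, ∑ i, Jm k l i * (p.2.1 k * (√p.2.2 * p.1 i)) := by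
      rw [hδ0 h0]
      simp only [dir, h0, hm, dite_true, dite_false]
      have e1 : ∑ i, p.1 i * (Pi.single l √p.2.2 : Fin μ → ℝ) i = p.1 l * √p.2.2 := by
        rw [Finset.sum_eq_single l (fun b _ hb => by simp [hb]) (by simp), Pi.single_eq_same]
      have e2 : ∑ k, p.2.1 k * (√p.2.2 * (1 / 2 * (Jm k).mulVec p.1 l)) =
          1 / 2 * ∑ k, ∑ i, Jm k l i * (p.2.1 k * (√p.2.2 * p.1 i)) := by
        simp only [Matrix.mulVec, dotProduct, Finset.mul_sum]
        exact Finset.sum_congr rfl fun k _ => Finset.sum_congr rfl fun i _ => by ring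
      rw [← hl, e1, e2]
      ring
    rw [e]
    refine (abs_add_le _ _).trans ?_
    rw [add_mul, one_mul, Finset.sum_mul]
    refine add_le_add ?_ ((Finset.abs_sum_le_sum_abs _ _).trans (Finset.sum_le_sum fun k _ => ?_))
    · rw [abs_mul, abs_mul, abs_of_nonneg hA0, abs_of_nonneg hs]
      exact mul_le_mul hA (abs_x_le hp l) (by positivity) (Real.sqrt_nonneg _)
    · rw [Finset.sum_mul]
      refine (Finset.abs_sum_le_sum_abs _ _).trans (Finset.sum_le_sum fun i _ => ?_)
      rw [abs_mul, abs_mul, abs_mul, abs_of_nonneg hs]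
      exact mul_le_mul_of_nonneg_left (mul_le_mul ((abs_z_le hp k).trans hNM) (abs_x_le hp i)
        (by positivity) (Real.sqrt_nonneg _)) (abs_nonneg _)
  · refine ⟨2, by norm_num, fun p hp => ?_⟩
    set k : Fin ν := ⟨(j : ℕ) - μ - 1, by have := j.isLt; omega⟩ with hk
    have e : 2 * An p * (δ * p.2.2 +
        1 / 2 * ∑ i, p.1 i * (dir Jm j p).1 i) + 2 * ∑ k, p.2.1 k * (dir Jm j p).2.1 k -
        δ * Nn p = 2 * (p.2.2 * p.2.1 k) := by
      rw [hδ0 h0]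
      simp only [dir, h0, hm, dite_false]
      have e1 : ∑ i, p.2.1 i * (Pi.single k p.2.2 : Fin ν → ℝ) i = p.2.1 k * p.2.2 := by
        rw [Finset.sum_eq_single k (fun b _ hb => by simp [hb]) (by simp), Pi.single_eq_same]
      rw [← hk, e1]
      simp
      ring
    rw [e, abs_mul, abs_mul, abs_of_pos hp, abs_of_pos (by norm_num : (0 : ℝ) < 2)]
    have h1 : p.2.2 ≤ √(Nn p) := by linarith [An_le_sqrt p, one_add_le_An (p := p)]
    have := mul_le_mul h1 (abs_z_le hp k) (abs_nonneg _) (Real.sqrt_nonneg _)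
    linarith

/-! ### The coefficients of iterated derivatives -/

/-- Coefficients of order `cosh² (r/2) ^ i * tanh (r/2) ^ n`, in a form stable under the fields
`X_j`. -/
inductive Bc (μ ν : ℕ) : ℕ → ℕ → (Pt μ ν → ℝ) → Prop
  | const (c : ℝ) : Bc μ ν 0 0 (fun _ => c)
  | quot {P : Pt μ ν → ℝ} : Wd μ ν 4 P → Bc μ ν 1 0 (fun p => P p * (p.2.2)⁻¹)
  | grad {P : Pt μ ν → ℝ} : Wd μ ν 4 P → (∃ C, 0 ≤ C ∧ ∀ p : Pt μ ν, 0 < p.2.2 →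
      |P p * (p.2.2)⁻¹| ≤ C * (coshExpr μ ν p * sg p)) → Bc μ ν 1 1 (fun p => P p * (p.2.2)⁻¹)
  | add {i n : ℕ} {f g : Pt μ ν → ℝ} :
      Bc μ ν i n f → Bc μ ν i n g → Bc μ ν i n (fun p => f p + g p)
  | mul {i n i' n' : ℕ} {f g : Pt μ ν → ℝ} :
      Bc μ ν i n f → Bc μ ν i' n' g → Bc μ ν (i + i') (n + n') (fun p => f p * g p)
  | mono {i n n' : ℕ} {f : Pt μ ν → ℝ} : n' ≤ n → Bc μ ν i n f → Bc μ ν i n' f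

lemma Bc.smul {i n : ℕ} (c : ℝ) (h : Bc μ ν i n f) : Bc μ ν i n (fun p => c * f p) := by
  have := (Bc.const c).mul h
  rwa [zero_add, zero_add] at this

/-- A field `X_j` lowers the order in `tanh (r/2)` by at most one. -/
lemma Bc.step (j : Fin (μ + ν + 1)) {i n : ℕ} (h : Bc μ ν i n f) :
    ∃ g, Bc μ ν i (n - 1) g ∧ Der Jm j f g := by
  induction h with
  | const c => exact ⟨_, Bc.const 0, Der.const c⟩
  | quot hP =>
    obtain ⟨g, hg, hD⟩ := hP.step_div (Jm := Jm) j
    exact ⟨_, Bc.quot hg, hD⟩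
  | grad hP _ =>
    obtain ⟨g, hg, hD⟩ := hP.step_div (Jm := Jm) j
    exact ⟨_, Bc.quot hg, hD⟩
  | add _ _ i1 i2 =>
    obtain ⟨g1, b1, d1⟩ := i1
    obtain ⟨g2, b2, d2⟩ := i2
    exact ⟨_, b1.add b2, d1.add d2⟩
  | mul h1 h2 i1 i2 =>
    obtain ⟨g1, b1, d1⟩ := i1
    obtain ⟨g2, b2, d2⟩ := i2
    exact ⟨_, (Bc.mono (by omega) (b1.mul h2)).add (Bc.mono (by omega) (h1.mul b2)), d1.mul d2⟩
  | mono hn _ ih =>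
    obtain ⟨g, b, d⟩ := ih
    exact ⟨g, b.mono (by omega), d⟩

lemma Bc.bound {i n : ℕ} (h : Bc μ ν i n f) : ∃ C, 0 ≤ C ∧ ∀ p : Pt μ ν, 0 < p.2.2 →
    |f p| ≤ C * coshExpr μ ν p ^ i * sg p ^ n := by
  induction h with
  | const c => exact ⟨|c|, abs_nonneg c, fun p hp => by simp⟩
  | quot hP =>
    obtain ⟨C, hC, hb⟩ := hP.bound
    refine ⟨4 * C, by positivity, fun p hp => ?_⟩
    have hi : 0 < (p.2.2)⁻¹ := inv_pos.2 hp
    have hM := Mn_nonneg hp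
    have hN : 0 ≤ Nn p := by unfold Mn at hM; linarith
    have e : √√(Nn p) ^ 4 = Nn p := by
      rw [show 4 = 2 * 2 by norm_num, pow_mul, Real.sq_sqrt (Real.sqrt_nonneg _), Real.sq_sqrt hN]
    rw [abs_mul, abs_of_pos hi, coshExpr_eq hp]
    have := mul_le_mul_of_nonneg_right (hb p hp) hi.le
    rw [e] at this
    simp only [pow_one, pow_zero, mul_one]
    linarith
  | grad _ hb =>
    obtain ⟨C, hC, hb⟩ := hb
    refine ⟨C, hC, fun p hp => (hb p hp).trans (le_of_eq ?_)⟩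
    ring
  | add _ _ i1 i2 =>
    obtain ⟨C, hC, b1⟩ := i1
    obtain ⟨D, hD, b2⟩ := i2
    refine ⟨C + D, by positivity, fun p hp => (abs_add_le _ _).trans ?_⟩
    rw [add_mul, add_mul]
    exact add_le_add (b1 p hp) (b2 p hp)
  | mul _ _ i1 i2 =>
    obtain ⟨C, hC, b1⟩ := i1
    obtain ⟨D, hD, b2⟩ := i2
    refine ⟨C * D, by positivity, fun p hp => ?_⟩
    have h1 := one_le_coshExpr hp
    have h2 := sg_nonneg p
    rw [abs_mul, pow_add, pow_add]
    calc _ ≤ _ := mul_le_mul (b1 p hp) (b2 p hp) (abs_nonneg _) (by positivity)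
      _ = _ := by ring
  | mono hn _ ih =>
    obtain ⟨C, hC, b⟩ := ih
    refine ⟨C, hC, fun p hp => (b p hp).trans ?_⟩
    have h1 := one_le_coshExpr hp
    have h2 := pow_le_pow_of_le_one (sg_nonneg p) (sg_le_one hp) hn
    gcongr

end Coefficients

section Assembly

variable {μ ν : ℕ} {Jm : Fin ν → Matrix (Fin μ) (Fin μ) ℝ} {H : ℕ → ℕ → ℝ → ℝ → ℝ}

/-! ### Derivatives of the heat kernel along the fields -/

/-- Finite sums of products `B p * ∂_t^m H i (cosh r)`, where `H i` is the `i`-th derivative of the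
heat kernel in the variable `cosh r`, up to sign, and the coefficient `B` vanishes at the
origin to an order that compensates for all but `k` of the `2 i` derivatives. The argument
`m` counts derivatives in time. -/
inductive Rp (μ ν : ℕ) (H : ℕ → ℕ → ℝ → ℝ → ℝ) (k : ℕ) : (ℕ → ℝ → Pt μ ν → ℝ) → Prop
  | term {i n : ℕ} {B : Pt μ ν → ℝ} : Bc μ ν i n B → 2 * i ≤ n + k → i ≤ k →
      Rp μ ν H k (fun m u p => B p * H i m u (2 * coshExpr μ ν p - 1))
  | add {f g : ℕ → ℝ → Pt μ ν → ℝ} : Rp μ ν H k f → Rp μ ν H k g →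
      Rp μ ν H k (fun m u p => f m u p + g m u p)

lemma Rp.step (hH : Rep μ ν H) (Jm : Fin ν → Matrix (Fin μ) (Fin μ) ℝ) (j : Fin (μ + ν + 1))
    {k : ℕ} {f : ℕ → ℝ → Pt μ ν → ℝ} (h : Rp μ ν H k f) :
    ∃ g, Rp μ ν H (k + 1) g ∧ ∀ u, 0 < u → ∀ p : Pt μ ν, 0 < p.2.2 → 1 < coshExpr μ ν p →
      ∃ L : Pt μ ν →L[ℝ] ℝ, HasFDerivAt (f 0 u) L p ∧ L (dir Jm j p) = g 0 u p := by
  induction h with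
  | @term i n B hB h1 h2 =>
    obtain ⟨P, hP, hD, hb⟩ := exists_grad Jm j
    obtain ⟨B', hB', hDB⟩ := hB.step (Jm := Jm) j
    refine ⟨_, (Rp.term (hB'.mono (n' := n - 1) le_rfl) (by omega) (by omega)).add
      (Rp.term ((hB.mul (Bc.grad hP hb)).smul (-2)) (by omega) (by omega)), ?_⟩
    intro u hu p hp hE
    obtain ⟨L1, d1, e1⟩ := hDB p hp
    obtain ⟨L2, d2, e2⟩ := hD p hp
    have hw : 1 < 2 * coshExpr μ ν p - 1 := by linarith
    have d3 := (hH.deriv_v i u _ hu hw).comp_hasFDerivAt p ((d2.const_mul 2).sub_const 1)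
    refine ⟨_, d1.mul d3, ?_⟩
    simp [e1, e2]
    ring
  | add _ _ i1 i2 =>
    obtain ⟨g1, b1, d1⟩ := i1
    obtain ⟨g2, b2, d2⟩ := i2
    refine ⟨_, b1.add b2, fun u hu p hp hE => ?_⟩
    obtain ⟨L, hL, e⟩ := d1 u hu p hp hE
    obtain ⟨L', hL', e'⟩ := d2 u hu p hp hE
    exact ⟨L + L', hL.add hL', by simp [e, e']⟩

lemma Rp.deriv_t (hH : Rep μ ν H) {k : ℕ} {f : ℕ → ℝ → Pt μ ν → ℝ} (h : Rp μ ν H k f) (m : ℕ)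
    {t : ℝ} (ht : 0 < t) {p : Pt μ ν} (hE : 1 < coshExpr μ ν p) :
    HasDerivAt (fun u => f m u p) (f (m + 1) t p) t := by
  induction h with
  | term _ _ _ => exact (hH.deriv_t _ m t _ ht (by linarith)).const_mul _
  | add _ _ i1 i2 => exact i1.add i2

lemma region_mem_nhds {p : Pt μ ν} (hp : 0 < p.2.2) (hE : 1 < coshExpr μ ν p) :
    ∀ᶠ q : Pt μ ν in 𝓝 p, 0 < q.2.2 ∧ 1 < coshExpr μ ν q := by
  obtain ⟨P, -, hD, -⟩ := exists_grad (μ := μ) (ν := ν) (fun _ => 0) 0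
  obtain ⟨L, hL, -⟩ := hD p hp
  exact (halfspace_mem_nhds hp).and (hL.continuousAt.eventually (lt_mem_nhds hE))

lemma exists_Rp (hH : Rep μ ν H) (Jm : Fin ν → Matrix (Fin μ) (Fin μ) ℝ) {r : Pt μ ν → ℝ}
    (hr0 : ∀ p : Pt μ ν, 0 < p.2.2 → 0 ≤ r p)
    (hreq : ∀ p : Pt μ ν, 0 < p.2.2 → Real.cosh (r p / 2) ^ 2 = coshExpr μ ν p)
    (J : List (Fin (μ + ν + 1))) :
    ∃ f, Rp μ ν H J.length f ∧ ∀ u, 0 < u → ∀ p : Pt μ ν, 0 < p.2.2 → 1 < coshExpr μ ν p →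
      XL μ ν Jm J (fun q => heat μ ν u (r q)) p = f 0 u p := by
  induction J with
  | nil =>
    refine ⟨_, Rp.term (Bc.const 1) le_rfl le_rfl, fun u hu p hp hE => ?_⟩
    have hr : 0 < r p := by
      refine (hr0 p hp).lt_of_ne fun h => ?_
      have := hreq p hp
      rw [← h] at this
      simp at this
      linarith
    rw [one_mul, ← hreq p hp, ← cosh_eq_half]
    exact hH.heat_eq u (r p) hu hr
  | cons j L ih =>
    obtain ⟨f, hf, e⟩ := ih
    obtain ⟨g, hg, hd⟩ := hf.step hH Jm j
    refine ⟨g, hg, fun u hu p hp hE => ?_⟩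
    obtain ⟨A, hA, eA⟩ := hd u hu p hp hE
    rw [← eA]
    exact Xf_eq j (hA.congr_of_eventuallyEq
      ((region_mem_nhds hp hE).mono fun q hq => e u hu q hq.1 hq.2))

lemma Rp.iterate_deriv (hH : Rep μ ν H) {k : ℕ} {f : ℕ → ℝ → Pt μ ν → ℝ} (h : Rp μ ν H k f)
    {p : Pt μ ν} (hE : 1 < coshExpr μ ν p) {F : ℝ → ℝ} (hF : ∀ u, 0 < u → F u = f 0 u p) (m : ℕ) :
    ∀ t, 0 < t → deriv^[m] F t = f m t p := by
  induction m with
  | zero => exact hF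
  | succ m ih =>
    intro t ht
    rw [Function.iterate_succ_apply']
    exact ((h.deriv_t hH m ht hE).congr_of_eventuallyEq
      ((lt_mem_nhds ht).mono fun u hu => ih u hu)).deriv

/-! ### Comparison with `Ψ̃` -/

lemma sg_eq_tanh {r : Pt μ ν → ℝ} {p : Pt μ ν} (hr : 0 ≤ r p)
    (hreq : Real.cosh (r p / 2) ^ 2 = coshExpr μ ν p) : sg p = tanh (r p / 2) := by
  have h0 : 0 ≤ tanh (r p / 2) := by
    rw [tanh_eq_sinh_div_cosh]
    exact div_nonneg (sinh_nonneg_iff.2 (by linarith)) (cosh_pos _).le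
  rw [sg, ← hreq, tanh_eq_sinh_div_cosh, cosh_sq]
  rw [tanh_eq_sinh_div_cosh] at h0
  rw [add_sub_cancel_right, ← cosh_sq, ← div_pow, Real.sqrt_sq h0]

/-- Each factor `tanh (r/2)` trades two powers of `kap` against one, at the price of a factor
`1 + r/t`. -/
lemma product_le_PsiT {t r : ℝ} (ht : 0 < t) (hr : 0 < r) {i n k : ℕ} (m : ℕ)
    (h1 : 2 * i ≤ n + k) (h2 : i ≤ k) :
    (cosh (r / 2) ^ 2) ^ i * tanh (r / 2) ^ n * (kap t r ^ i * psi t r ^ (2 * m)) ≤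
      PsiT (2 * m + k) r t := by
  set T := tanh (r / 2) with hT
  set y := cosh (r / 2) ^ 2 * kap t r with hy
  set b := psi t r with hb
  set a := 1 + r / t with ha
  have hb1 : 1 ≤ b := one_le_psi ht hr
  have ha1 : 1 ≤ a := by
    have : 0 ≤ r / t := by positivity
    linarith
  have hab : a ≤ b := one_add_div_le_psi ht
  have hy0 : 0 ≤ y := mul_nonneg (by positivity) (kap_nonneg ht r)
  have hT0 : 0 ≤ T := by
    rw [hT, tanh_eq_sinh_div_cosh]
    exact div_nonneg (sinh_nonneg_iff.2 (by linarith)) (cosh_pos _).le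
  have hT1 : T ≤ 1 := (tanh_lt_one _).le
  have hyb : y ≤ b ^ 2 := by
    have e1 := kap_le ht hr
    have e2 := one_add_inv_le_psi_sq ht hr
    have : (2 * cosh (r / 2)) ^ 2 * kap t r = 4 * y := by rw [hy]; ring
    nlinarith [sq_nonneg b]
  have hTy : T * y ≤ a := by
    have e1 := tanh_kap_le (t := t) hr
    have : T * ((2 * cosh (r / 2)) ^ 2 * kap t r) = 4 * (T * y) := by rw [hy]; ring
    have : 0 ≤ T * y := mul_nonneg hT0 hy0
    linarith
  -- All but `s = 2 i - k` of the factors `tanh (r/2)` are estimated by one.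
  obtain ⟨s, hs⟩ : ∃ s, s = 2 * i - k := ⟨_, rfl⟩
  have main : (cosh (r / 2) ^ 2) ^ i * T ^ n * (kap t r ^ i * b ^ (2 * m)) ≤
      a ^ s * b ^ (2 * (i - s) + 2 * m) := by
    calc _ = y ^ i * T ^ n * b ^ (2 * m) := by rw [hy, mul_pow]; ring
      _ ≤ y ^ i * T ^ s * b ^ (2 * m) := by
          have : T ^ n ≤ T ^ s := pow_le_pow_of_le_one hT0 hT1 (by omega)
          gcongr
      _ = (T * y) ^ s * y ^ (i - s) * b ^ (2 * m) := by
          have : y ^ s * y ^ (i - s) = y ^ i := by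
            rw [← pow_add, Nat.add_sub_cancel' (by omega : s ≤ i)]
          rw [mul_pow T, mul_assoc (T ^ s), this, hy, mul_pow]
          ring
      _ ≤ a ^ s * (b ^ 2) ^ (i - s) * b ^ (2 * m) := by gcongr
      _ = _ := by rw [← pow_mul, mul_assoc, ← pow_add]
  refine main.trans ?_
  unfold PsiT
  change _ ≤ if 1 < r ∨ Even (2 * m + k) then b ^ (2 * m + k) else b ^ (2 * m + k - 1) * a
  split_ifs with hc
  · calc _ ≤ b ^ s * b ^ (2 * (i - s) + 2 * m) := by gcongr
      _ = b ^ (s + (2 * (i - s) + 2 * m)) := (pow_add _ _ _).symm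
      _ ≤ _ := pow_le_pow_right₀ hb1 (by omega)
  · have hk : ¬ Even k := fun hk => hc (Or.inr ((even_two_mul m).add hk))
    rw [Nat.not_even_iff] at hk
    rcases s with _ | s
    · rw [pow_zero, one_mul]
      calc _ ≤ b ^ (2 * m + k - 1) * 1 := by
            rw [mul_one]; exact pow_le_pow_right₀ hb1 (by omega)
        _ ≤ _ := by gcongr
    · calc _ = a ^ s * b ^ (2 * (i - (s + 1)) + 2 * m) * a := by rw [pow_succ]; ring
        _ ≤ b ^ s * b ^ (2 * (i - (s + 1)) + 2 * m) * a := by gcongr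
        _ = b ^ (s + (2 * (i - (s + 1)) + 2 * m)) * a := by rw [← pow_add]
        _ ≤ _ := by
            gcongr
            omega

lemma PsiT_nonneg {t r : ℝ} (ht : 0 < t) (hr : 0 < r) (k : ℕ) : 0 ≤ PsiT k r t := by
  unfold PsiT
  split_ifs <;> positivity

lemma Rp.bound (hH : Rep μ ν H) {r : Pt μ ν → ℝ}
    (hreq : ∀ p : Pt μ ν, 0 < p.2.2 → Real.cosh (r p / 2) ^ 2 = coshExpr μ ν p)
    {k : ℕ} {f : ℕ → ℝ → Pt μ ν → ℝ} (h : Rp μ ν H k f) (m : ℕ) :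
    ∃ C, 0 ≤ C ∧ ∀ t, 0 < t → ∀ p : Pt μ ν, 0 < p.2.2 → 0 < r p →
      |f m t p| ≤ C * PsiT (2 * m + k) (r p) t * heat μ ν t (r p) := by
  induction h with
  | @term i n B hB h1 h2 =>
    obtain ⟨C, hC, b1⟩ := hB.bound
    obtain ⟨D, hD, b2⟩ := hH.bound i m
    refine ⟨C * D, by positivity, fun t ht p hp hr => ?_⟩
    have e1 := b1 p hp
    rw [sg_eq_tanh hr.le (hreq p hp), ← hreq p hp] at e1
    have hh := hH.nonneg t (r p) ht hr
    rw [abs_mul, ← hreq p hp, ← cosh_eq_half]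
    calc _ ≤ _ := mul_le_mul e1 (b2 t (r p) ht hr) (abs_nonneg _) ((abs_nonneg _).trans e1)
      _ = C * D * ((cosh (r p / 2) ^ 2) ^ i * tanh (r p / 2) ^ n *
            (kap t (r p) ^ i * psi t (r p) ^ (2 * m))) * heat μ ν t (r p) := by ring
      _ ≤ _ := by
          have := product_le_PsiT ht hr m h1 h2
          gcongr
  | add _ _ i1 i2 =>
    obtain ⟨C, hC, b1⟩ := i1
    obtain ⟨D, hD, b2⟩ := i2
    refine ⟨C + D, by positivity, fun t ht p hp hr => (abs_add_le _ _).trans ?_⟩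
    rw [add_mul, add_mul]
    exact add_le_add (b1 t ht p hp hr) (b2 t ht p hp hr)

end Assembly

theorem time_space_derivative_bound (μ ν : ℕ) (hμ : Even μ) (hν : 1 ≤ ν)
    (Jm : Fin ν → Matrix (Fin μ) (Fin μ) ℝ)
    (hskew : ∀ k, (Jm k).transpose = -(Jm k))
    (hH : ∀ k l, Jm k * Jm l + Jm l * Jm k =
      if k = l then (-2 : ℝ) • (1 : Matrix (Fin μ) (Fin μ) ℝ) else 0)
    (r : Pt μ ν → ℝ)
    (hr0 : ∀ p : Pt μ ν, 0 < p.2.2 → 0 ≤ r p)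
    (hreq : ∀ p : Pt μ ν, 0 < p.2.2 → Real.cosh (r p / 2) ^ 2 = coshExpr μ ν p)
    (m k : ℕ) :
    ∃ C : ℝ, 0 < C ∧ ∀ J : List (Fin (μ + ν + 1)), J.length = k →
      ∀ t : ℝ, 0 < t → ∀ p : Pt μ ν, 0 < p.2.2 → 0 < r p →
        |deriv^[m] (fun u => XL μ ν Jm J (fun q => heat μ ν u (r q)) p) t| ≤
          C * PsiT (2 * m + k) (r p) t * heat μ ν t (r p) := by
  obtain ⟨H, hRep⟩ := exists_Rep μ ν
  have hJ : ∀ J : List (Fin (μ + ν + 1)), ∃ C : ℝ, 0 ≤ C ∧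
      ∀ t : ℝ, 0 < t → ∀ p : Pt μ ν, 0 < p.2.2 → 0 < r p →
        |deriv^[m] (fun u => XL μ ν Jm J (fun q => heat μ ν u (r q)) p) t| ≤
          C * PsiT (2 * m + J.length) (r p) t * heat μ ν t (r p) := by
    intro J
    obtain ⟨f, hf, e⟩ := exists_Rp hRep Jm hr0 hreq J
    obtain ⟨C, hC, hb⟩ := hf.bound hRep hreq m
    refine ⟨C, hC, fun t ht p hp hr => ?_⟩
    have hE : 1 < coshExpr μ ν p := by
      rw [← hreq p hp]
      exact one_lt_pow₀ (one_lt_cosh.2 (by positivity)) two_ne_zero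
    rw [hf.iterate_deriv hRep hE (fun u hu => e u hu p hp hE) m t ht]
    exact hb t ht p hp hr
  choose C hC hb using hJ
  -- There are finitely many multi-indices of length `k`.
  have hfin := List.finite_length_eq (Fin (μ + ν + 1)) k
  refine ⟨1 + ∑ J ∈ hfin.toFinset, C J, ?_, ?_⟩
  · have := Finset.sum_nonneg fun J (_ : J ∈ hfin.toFinset) => hC J
    linarith
  · rintro J rfl t ht p hp hr
    have h1 : C J ≤ ∑ J ∈ hfin.toFinset, C J :=
      Finset.single_le_sum (fun J _ => hC J) (hfin.mem_toFinset.2 rfl)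
    have h2 : C J ≤ 1 + ∑ J ∈ hfin.toFinset, C J := by linarith
    have h3 := hRep.nonneg t (r p) ht hr
    have h4 := PsiT_nonneg ht hr (2 * m + J.length)
    refine (hb J t ht p hp hr).trans ?_
    gcongr

end DR
end
end

section
/- For all k, ℓ ∈ ℕ and every index j ∈ {0,…,n−1} there exists a constant C > 0 such that |X_j^{2k+1} (r^{2ℓ})| ≤ C r at every point of S with r ≤ 1, where X_j^{2k+1} denotes the (2k+1)-fold application of the vector field X_j. -/
/-!
With `u = cosh² (r/2)` and `s = √a`, one has `u = A² + |y|²`, where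
`A = (s + 1/s)/2 + |x|²/(8s) ≥ 1` and `y = z/(2s)`. Every function occurring below is given a parity:
on `{r ≤ 1}` the even functions are `O(1)` and the odd ones are `O(r)`. Both classes are stable
under the evident products and sums, so it suffices that each `X_j` exchanges the two parities on a
set of generators: an odd power of `X_j` then maps the even function `r^(2l)` to an odd one.

* For `X_0` the generators are `A` (even), `B = X_0 A` (odd) and `D = |y|²` (both, since it is
  `O(r²)`); here `X_0 B = A/4` and `X_0 D = -D`.
* For `X_ℓ`, `1 ≤ ℓ ≤ μ`, they are `A`, `√a`, `(J_k x)_ℓ` (even) and `x_ℓ`, `y_k` (odd); here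
  `X_ℓ A = x_ℓ/4`, `X_ℓ x_ℓ = √a`, `X_ℓ y_k = (J_k x)_ℓ/4`, and `X_ℓ (J_k x)_ℓ = √a (J_k)_{ℓℓ} = 0`
  because `J_k` is skew-symmetric.
* For `X_{μ+k}` they are `√a` (even) and `y_k` (odd), and `X_{μ+k} y_k = √a/2`.

The odd bounds come from `(A² - 1) + D = sinh² (r/2) ≤ r²` on `{r ≤ 1}` (`basic_bounds`).

Finally `R = r²` has to be a smooth function of `u` up to and including `u = 1`. There is an entire
function `H` with `H (s²) = cosh s` and `H' > 0` near `[0, ∞)` (`exists_coshSqrt`), and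
`H (R) = cosh r = 2u - 1`, so `X_j (η ∘ R) = (2 η'/H') (R) · X_j u`. Hence the functions `η ∘ R` with
`η` smooth near `[0, ∞)` can be adjoined as even generators (`Par`), as `X_j u` is odd.
-/

open Real MeasureTheory Filter Topology

noncomputable section

namespace DR

/-! ### The function `cosh √s` -/

/-- An entire function `H` with `H (s²) = cosh s` exists, and `H' > 0` on a neighbourhood
`(-δ, ∞)` of `[0, ∞)`. It serves as a smooth coordinate change between `r²` and `cosh r`. -/
lemma exists_coshSqrt : ∃ (H : ℝ → ℝ) (δ : ℝ), 0 < δ ∧ ContDiff ℝ (⊤ : ℕ∞) H ∧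
    (∀ s, H (s ^ 2) = Real.cosh s) ∧ ∀ s, -δ < s → 0 < deriv H s := by
  set c : ℕ → ℝ := fun n => ((2 * n).factorial : ℝ)⁻¹ with hc
  set P := FormalMultilinearSeries.ofScalars ℝ c with hP
  have hrad : P.radius = ⊤ := by
    refine FormalMultilinearSeries.ofScalars_radius_eq_top_of_tendsto ℝ c
      (Eventually.of_forall fun n => by simp only [hc]; positivity) ?_
    have h0 : Tendsto (fun n : ℕ => ((n : ℝ) + 1)⁻¹) atTop (𝓝 0) := by
      simpa using tendsto_one_div_add_atTop_nhds_zero_nat (𝕜 := ℝ)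
    refine squeeze_zero (fun n => by positivity) (fun n => ?_) h0
    simp only [hc, norm_inv, RCLike.norm_natCast]
    rw [show 2 * n.succ = (2 * n + 1) + 1 by simp only [Nat.succ_eq_add_one]; ring,
      Nat.factorial_succ, Nat.factorial_succ]
    push_cast
    rw [inv_div_inv, div_le_iff₀ (by positivity), inv_mul_eq_div, le_div_iff₀ (by positivity)]
    have : (0 : ℝ) < ((2 * n).factorial : ℝ) := by positivity
    nlinarith [mul_nonneg this.le (Nat.cast_nonneg (α := ℝ) n),
      mul_nonneg (mul_nonneg this.le (Nat.cast_nonneg (α := ℝ) n)) (Nat.cast_nonneg (α := ℝ) n)]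
  have hball : HasFPowerSeriesOnBall P.sum P 0 ⊤ := by
    have := P.hasFPowerSeriesOnBall (by rw [hrad]; exact ENNReal.zero_lt_top)
    rwa [hrad] at this
  have hsm : ContDiff ℝ (⊤ : ℕ∞) P.sum := by
    rw [← contDiffOn_univ]
    have := hball.analyticOnNhd
    rw [Metric.eball_top] at this
    exact this.contDiffOn uniqueDiffOn_univ
  have hcosh : ∀ s, P.sum (s ^ 2) = Real.cosh s := by
    intro s
    rw [hP, Real.cosh_eq_tsum]
    change FormalMultilinearSeries.ofScalarsSum c (s ^ 2) = _
    rw [FormalMultilinearSeries.ofScalars_sum_eq]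
    refine tsum_congr fun n => ?_
    simp only [hc, smul_eq_mul]
    rw [← pow_mul, div_eq_inv_mul]
  have hd : ∀ s, HasDerivAt P.sum (deriv P.sum s) s := fun s =>
    ((hsm.differentiable (by simp)) s).hasDerivAt
  have hpos0 : 0 < deriv P.sum 0 := by
    rw [hball.hasFPowerSeriesAt.deriv]
    simp [hP, hc, FormalMultilinearSeries.ofScalars]
  have hcont : Continuous (deriv P.sum) := hsm.continuous_deriv (by simp)
  obtain ⟨δ, hδ, hδ'⟩ := Metric.eventually_nhds_iff.1
    (hcont.continuousAt.eventually (lt_mem_nhds hpos0))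
  refine ⟨P.sum, δ, hδ, hsm, hcosh, fun s hs => ?_⟩
  rcases le_or_gt s 0 with h | h
  · exact hδ' (by rw [Real.dist_eq, sub_zero, abs_of_nonpos h]; linarith)
  · -- differentiate `H (t²) = cosh t` at `t = √s > 0`
    have h1 : HasDerivAt (fun t : ℝ => P.sum (t ^ 2))
        (deriv P.sum ((√s) ^ 2) * (2 * √s)) (√s) := by
      have := (hd ((√s) ^ 2)).comp (√s) (hasDerivAt_pow 2 (√s))
      simpa [Function.comp_def] using this
    have h2 : HasDerivAt (fun t : ℝ => P.sum (t ^ 2)) (Real.sinh (√s)) (√s) := by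
      simp only [hcosh]; exact Real.hasDerivAt_cosh _
    have h3 := h1.unique h2
    rw [Real.sq_sqrt h.le] at h3
    have h4 : 0 < √s := Real.sqrt_pos.2 h
    have h5 : 0 < Real.sinh (√s) := Real.sinh_pos_iff.2 h4
    rw [← h3] at h5
    exact pos_of_mul_pos_left h5 (by positivity)

section

variable {μ ν : ℕ}

/-! ### Directional derivatives -/

/-- `f` is differentiable at `p` with derivative `v` in the direction `V`. -/
def HasX (V : Pt μ ν) (f : Pt μ ν → ℝ) (v : ℝ) (p : Pt μ ν) : Prop :=
  ∃ L : Pt μ ν →L[ℝ] ℝ, HasFDerivAt f L p ∧ L V = v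

namespace HasX

variable {V p : Pt μ ν} {f g : Pt μ ν → ℝ} {v w : ℝ}

lemma const (c : ℝ) : HasX V (fun _ => c) 0 p := ⟨0, hasFDerivAt_const c p, rfl⟩

lemma add (hf : HasX V f v p) (hg : HasX V g w p) : HasX V (fun q => f q + g q) (v + w) p := by
  obtain ⟨L, h, rfl⟩ := hf
  obtain ⟨M, h', rfl⟩ := hg
  exact ⟨L + M, h.add h', rfl⟩

lemma mul (hf : HasX V f v p) (hg : HasX V g w p) :
    HasX V (fun q => f q * g q) (v * g p + f p * w) p := by
  obtain ⟨L, h, rfl⟩ := hf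
  obtain ⟨M, h', rfl⟩ := hg
  exact ⟨_, h.mul h', by simp; ring⟩

lemma sum {ι : Type*} {s : Finset ι} {f : ι → Pt μ ν → ℝ} {v : ι → ℝ}
    (h : ∀ i ∈ s, HasX V (f i) (v i) p) :
    HasX V (fun q => ∑ i ∈ s, f i q) (∑ i ∈ s, v i) p := by
  classical
  induction s using Finset.induction_on with
  | empty => simpa using const 0
  | insert a s ha ih =>
    simp only [Finset.sum_insert ha]
    exact (h a (by simp)).add (ih fun i hi => h i (by simp [hi]))

lemma comp {η : ℝ → ℝ} {η' : ℝ} (hη : HasDerivAt η η' (f p)) (hf : HasX V f v p) :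
    HasX V (fun q => η (f q)) (η' * v) p := by
  obtain ⟨L, h, rfl⟩ := hf
  exact ⟨η' • L, hη.comp_hasFDerivAt p h, rfl⟩

lemma congr (hf : HasX V f v p) (h : g =ᶠ[𝓝 p] f) : HasX V g v p := by
  obtain ⟨L, h', rfl⟩ := hf
  exact ⟨L, h'.congr_of_eventuallyEq h, rfl⟩

lemma of_eq (hf : HasX V f v p) (h : v = w) : HasX V f w p := h ▸ hf

lemma continuousAt (hf : HasX V f v p) : ContinuousAt f p := by
  obtain ⟨L, h, -⟩ := hf
  exact h.continuousAt

lemma clm (L : Pt μ ν →L[ℝ] ℝ) : HasX V (fun q => L q) (L V) p := ⟨L, L.hasFDerivAt, rfl⟩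

lemma fst (i : Fin μ) : HasX V (fun q => q.1 i) (V.1 i) p :=
  clm ((ContinuousLinearMap.proj i).comp (ContinuousLinearMap.fst ℝ _ _))

lemma snd (k : Fin ν) : HasX V (fun q => q.2.1 k) (V.2.1 k) p :=
  clm ((ContinuousLinearMap.proj k).comp
    ((ContinuousLinearMap.fst ℝ _ _).comp (ContinuousLinearMap.snd ℝ _ _)))

lemma sqrt (hp : 0 < p.2.2) :
    HasX V (fun q => √q.2.2) (1 / (2 * √p.2.2) * V.2.2) p :=
  comp (f := fun q => q.2.2) (Real.hasDerivAt_sqrt hp.ne')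
    (clm ((ContinuousLinearMap.snd ℝ _ _).comp (ContinuousLinearMap.snd ℝ _ _)))

lemma sqrt_inv (hp : 0 < p.2.2) :
    HasX V (fun q => (√q.2.2)⁻¹) (-((√p.2.2) ^ 2)⁻¹ * (1 / (2 * √p.2.2) * V.2.2)) p :=
  comp (f := fun q => √q.2.2) (hasDerivAt_inv (Real.sqrt_pos.2 hp).ne') (sqrt hp)

end HasX

lemma eventually_pos {p : Pt μ ν} (hp : 0 < p.2.2) : ∀ᶠ q in 𝓝 p, 0 < q.2.2 :=
  (continuous_snd.comp continuous_snd).continuousAt.eventually (lt_mem_nhds hp)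

/-- If `H (R q) = 2 u q - 1` with `H' > 0` on `(-δ, ∞)` and `R ≥ 0`, then `R` inherits
differentiability from `u`: near each point `R` is the local inverse of `H` applied to `2 u - 1`,
because `H` is injective on `(-δ, ∞)`. -/
lemma HasX.of_implicit {H : ℝ → ℝ} {δ : ℝ} (hδ : 0 < δ) (hH : ContDiff ℝ (⊤ : ℕ∞) H)
    (hH' : ∀ s, -δ < s → 0 < deriv H s) {R u : Pt μ ν → ℝ}
    (hR : ∀ q, 0 < q.2.2 → 0 ≤ R q) (hRu : ∀ q, 0 < q.2.2 → H (R q) = 2 * u q - 1)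
    {V p : Pt μ ν} (hp : 0 < p.2.2) {v : ℝ} (hu : HasX V u v p) :
    HasX V R ((deriv H (R p))⁻¹ * (2 * v)) p := by
  have hs : HasStrictDerivAt H (deriv H (R p)) (R p) :=
    hH.contDiffAt.hasStrictDerivAt (by simp)
  have hne : deriv H (R p) ≠ 0 := (hH' _ (by linarith [hR p hp])).ne'
  have hse := hs.hasStrictFDerivAt_equiv hne
  have hloc := (hs.to_localInverse hne).hasDerivAt
  set G := hs.localInverse H _ _ hne with hG
  have hGt : Tendsto G (𝓝 (H (R p))) (𝓝 (R p)) := hse.localInverse_tendsto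
  have hGr : ∀ᶠ y in 𝓝 (H (R p)), H (G y) = y := hse.eventually_right_inverse
  have hinj : Set.InjOn H (Set.Ioi (-δ)) :=
    (strictMonoOn_of_deriv_pos (convex_Ioi _) hH.continuous.continuousOn
      (by rw [interior_Ioi]; exact hH')).injOn
  have hw : HasX V (fun q => 2 * u q + -1) (2 * v) p :=
    (((HasX.const 2).mul hu).add (HasX.const (-1))).of_eq (by ring)
  have hval : (fun q => 2 * u q + -1) p = H (R p) := by rw [hRu p hp]; ring
  have hcw := hw.continuousAt
  replace hcw : Tendsto (fun q => 2 * u q + -1) (𝓝 p) (𝓝 (H (R p))) := hval ▸ hcw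
  rw [← hval] at hloc
  refine (HasX.comp hloc hw).congr ?_
  filter_upwards [eventually_pos hp, hcw.eventually hGr,
    hcw.eventually (hGt.eventually (lt_mem_nhds (show -δ < R p by linarith [hR p hp])))]
    with q hq h1 h2
  refine hinj (show -δ < R q by linarith [hR q hq]) h2 ?_
  rw [h1, hRu q hq]; ring

/-! ### Parity -/

/-- Functions graded by a parity (`false` even, `true` odd): the graded algebra generated by a set
`B` of graded generators and the even functions `η ∘ R` with `η` smooth on `(-δ, ∞)`. -/
inductive Par (B : Set (Bool × (Pt μ ν → ℝ))) (R : Pt μ ν → ℝ) (δ : ℝ) :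
    Bool → (Pt μ ν → ℝ) → Prop
  | gen {ε f} : (ε, f) ∈ B → Par B R δ ε f
  | zero (ε) : Par B R δ ε fun _ => 0
  | const (c : ℝ) : Par B R δ false fun _ => c
  | phi {η : ℝ → ℝ} : ContDiffOn ℝ (⊤ : ℕ∞) η (Set.Ioi (-δ)) → Par B R δ false fun q => η (R q)
  | add {ε f g} : Par B R δ ε f → Par B R δ ε g → Par B R δ ε fun q => f q + g q
  | mul {ε ε' f g} : Par B R δ ε f → Par B R δ ε' g → Par B R δ (ε ^^ ε') fun q => f q * g q

namespace Par

variable {B : Set (Bool × (Pt μ ν → ℝ))} {R : Pt μ ν → ℝ} {δ : ℝ}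

lemma mul' {ε ε' ε'' : Bool} {f g : Pt μ ν → ℝ} (hf : Par B R δ ε f) (hg : Par B R δ ε' g)
    (h : (ε ^^ ε') = ε'') : Par B R δ ε'' fun q => f q * g q := h ▸ hf.mul hg

lemma sum {ι : Type*} {s : Finset ι} {ε : Bool} {f : ι → Pt μ ν → ℝ}
    (h : ∀ i ∈ s, Par B R δ ε (f i)) : Par B R δ ε (fun q => ∑ i ∈ s, f i q) := by
  classical
  induction s using Finset.induction_on with
  | empty => simpa using zero ε
  | insert a s ha ih =>
    simp only [Finset.sum_insert ha]
    exact (h a (by simp)).add (ih fun i hi => h i (by simp [hi]))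

/-- The derivation along `V` swaps parities, provided it does so on the generators and sends
`u` to an odd function. -/
lemma deriv_swap {H : ℝ → ℝ} (hδ : 0 < δ) (hH : ContDiff ℝ (⊤ : ℕ∞) H)
    (hH' : ∀ s, -δ < s → 0 < deriv H s) {u : Pt μ ν → ℝ}
    (hR : ∀ q, 0 < q.2.2 → 0 ≤ R q) (hRu : ∀ q, 0 < q.2.2 → H (R q) = 2 * u q - 1)
    {V : Pt μ ν → Pt μ ν}
    (hB : ∀ ε f, (ε, f) ∈ B → ∃ g, Par B R δ (!ε) g ∧ ∀ p, 0 < p.2.2 → HasX (V p) f (g p) p)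
    (hu : ∃ g, Par B R δ true g ∧ ∀ p, 0 < p.2.2 → HasX (V p) u (g p) p)
    {ε : Bool} {f : Pt μ ν → ℝ} (hf : Par B R δ ε f) :
    ∃ g, Par B R δ (!ε) g ∧ ∀ p, 0 < p.2.2 → HasX (V p) f (g p) p := by
  induction hf with
  | gen h => exact hB _ _ h
  | zero ε => exact ⟨_, zero _, fun p _ => HasX.const 0⟩
  | const c => exact ⟨_, zero _, fun p _ => HasX.const c⟩
  | @phi η hη =>
    obtain ⟨g, hg, hgu⟩ := hu
    have h1 : ContDiffOn ℝ (⊤ : ℕ∞) (fun s => deriv η s * (deriv H s)⁻¹ * 2) (Set.Ioi (-δ)) := by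
      refine ((((contDiffOn_infty_iff_deriv_of_isOpen isOpen_Ioi).1 hη).2).mul
        (ContDiffOn.inv ?_ fun s hs => (hH' s hs).ne')).mul contDiffOn_const
      exact (contDiff_infty_iff_deriv.1 hH).2.contDiffOn
    refine ⟨_, (phi h1).mul hg, fun p hp => ?_⟩
    have h2 : HasDerivAt η (deriv η (R p)) (R p) :=
      (((hη.contDiffAt (Ioi_mem_nhds (by linarith [hR p hp])))).differentiableAt
        (by simp)).hasDerivAt
    exact (HasX.comp h2 (HasX.of_implicit hδ hH hH' hR hRu hp (hgu p hp))).of_eq (by ring)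
  | add _ _ ihf ihg =>
    obtain ⟨f', hf', hf⟩ := ihf
    obtain ⟨g', hg', hg⟩ := ihg
    exact ⟨_, hf'.add hg', fun p hp => (hf p hp).add (hg p hp)⟩
  | @mul ε ε' f g h h' ihf ihg =>
    obtain ⟨f', hf', hf⟩ := ihf
    obtain ⟨g', hg', hg⟩ := ihg
    exact ⟨_, (hf'.mul' h' (by simp)).add (h.mul' hg' (by simp)),
      fun p hp => (hf p hp).mul (hg p hp)⟩

/-- On `{r ≤ 1}` even functions are `O(1)` and odd functions are `O(r)`. -/
lemma bound {r : Pt μ ν → ℝ} (hδ : 0 < δ) (hr0 : ∀ p : Pt μ ν, 0 < p.2.2 → 0 ≤ r p)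
    (hB : ∀ ε f, (ε, f) ∈ B → ∃ C : ℝ, 0 ≤ C ∧ ∀ p : Pt μ ν, 0 < p.2.2 → r p ≤ 1 →
      |f p| ≤ C * (if ε then r p else 1))
    {ε : Bool} {f : Pt μ ν → ℝ} (hf : Par B (fun q => r q ^ 2) δ ε f) :
    ∃ C : ℝ, 0 ≤ C ∧ ∀ p : Pt μ ν, 0 < p.2.2 → r p ≤ 1 →
      |f p| ≤ C * (if ε then r p else 1) := by
  induction hf with
  | gen h => exact hB _ _ h
  | zero ε =>
    exact ⟨0, le_rfl, fun p _ _ => by simp⟩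
  | const c => exact ⟨|c|, abs_nonneg _, fun p _ _ => by simp⟩
  | @phi η hη =>
    have hc : ContinuousOn η (Set.Icc 0 1) :=
      hη.continuousOn.mono fun s hs => show -δ < s by linarith [hs.1]
    obtain ⟨C, hC⟩ := isCompact_Icc.exists_bound_of_continuousOn hc
    refine ⟨C, (norm_nonneg _).trans (hC 0 (by simp)), fun p hp h1 => ?_⟩
    simpa using hC (r p ^ 2) ⟨by positivity, pow_le_one₀ (hr0 p hp) h1⟩
  | add _ _ ihf ihg =>
    obtain ⟨C, hC, hf⟩ := ihf
    obtain ⟨C', hC', hg⟩ := ihg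
    refine ⟨C + C', by positivity, fun p hp h1 => ?_⟩
    rw [add_mul]
    exact (abs_add_le _ _).trans (add_le_add (hf p hp h1) (hg p hp h1))
  | @mul ε ε' f g _ _ ihf ihg =>
    obtain ⟨C, hC, hf⟩ := ihf
    obtain ⟨C', hC', hg⟩ := ihg
    refine ⟨C * C', by positivity, fun p hp h1 => ?_⟩
    have h0 := hr0 p hp
    rw [abs_mul]
    refine (mul_le_mul (hf p hp h1) (hg p hp h1) (abs_nonneg _) (by positivity)).trans ?_
    have hCC : 0 ≤ C * C' := by positivity
    rw [mul_mul_mul_comm]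
    refine mul_le_mul_of_nonneg_left ?_ hCC
    cases ε <;> cases ε' <;> simp
    nlinarith

end Par

/-- The conclusion for an abstract derivation `X` along `V`: the even function `r^(2l)` is sent by
an odd power of `X` to an odd function, hence is `O(r)`. -/
lemma odd_iterate_bound {X : (Pt μ ν → ℝ) → Pt μ ν → ℝ} {V : Pt μ ν → Pt μ ν}
    (hX : ∀ f p v, 0 < p.2.2 → HasX (V p) f v p → X f p = v)
    {r u : Pt μ ν → ℝ} (hr0 : ∀ p : Pt μ ν, 0 < p.2.2 → 0 ≤ r p)
    (hr : ∀ p : Pt μ ν, 0 < p.2.2 → Real.cosh (r p / 2) ^ 2 = u p)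
    (B : Set (Bool × (Pt μ ν → ℝ)))
    (hBb : ∀ ε f, (ε, f) ∈ B → ∃ C : ℝ, 0 ≤ C ∧ ∀ p : Pt μ ν, 0 < p.2.2 → r p ≤ 1 →
      |f p| ≤ C * (if ε then r p else 1))
    (hB : ∀ δ, ∀ ε f, (ε, f) ∈ B → ∃ g, Par B (fun q => r q ^ 2) δ (!ε) g ∧
      ∀ p, 0 < p.2.2 → HasX (V p) f (g p) p)
    (hu : ∀ δ, ∃ g, Par B (fun q => r q ^ 2) δ true g ∧
      ∀ p, 0 < p.2.2 → HasX (V p) u (g p) p) (k l : ℕ) :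
    ∃ C : ℝ, 0 < C ∧ ∀ p : Pt μ ν, 0 < p.2.2 → r p ≤ 1 →
      |X^[2 * k + 1] (fun q => r q ^ (2 * l)) p| ≤ C * r p := by
  obtain ⟨H, δ, hδ, hH, hcosh, hH'⟩ := exists_coshSqrt
  have hRu : ∀ q : Pt μ ν, 0 < q.2.2 → H (r q ^ 2) = 2 * u q - 1 := fun q hq => by
    rw [hcosh, ← hr q hq]
    have := Real.cosh_sq (r q / 2)
    have h2 := Real.cosh_two_mul (r q / 2)
    rw [show 2 * (r q / 2) = r q by ring] at h2
    linarith
  have key : ∀ m : ℕ, ∃ g, Par B (fun q => r q ^ 2) δ (m.bodd) g ∧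
      ∀ p, 0 < p.2.2 → X^[m] (fun q => r q ^ (2 * l)) p = g p := by
    intro m
    induction m with
    | zero =>
      refine ⟨_, Par.phi (η := fun s => s ^ l) (by fun_prop), fun p _ => ?_⟩
      simp [pow_mul]
    | succ m ih =>
      obtain ⟨g, hg, hgX⟩ := ih
      obtain ⟨g', hg', hgX'⟩ := hg.deriv_swap hδ hH hH' (fun q _ => sq_nonneg _) hRu (hB δ) (hu δ)
      refine ⟨g', by rwa [Nat.bodd_succ], fun p hp => ?_⟩
      rw [Function.iterate_succ_apply']
      refine hX _ _ _ hp ((hgX' p hp).congr ?_)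
      filter_upwards [eventually_pos hp] with q hq using hgX q hq
  obtain ⟨g, hg, hgX⟩ := key (2 * k + 1)
  obtain ⟨C, hC, hb⟩ := hg.bound hδ hr0 hBb
  refine ⟨C + 1, by positivity, fun p hp h1 => ?_⟩
  rw [hgX p hp]
  have hodd : (2 * k + 1).bodd = true := by simp
  have := hb p hp h1
  rw [hodd, if_pos rfl] at this
  have := hr0 p hp
  linarith

/-! ### The generators -/

/-- `A = (√a + 1/√a)/2 + |x|²/(8√a)`. -/
def Af (q : Pt μ ν) : ℝ :=
  (√q.2.2 + (√q.2.2)⁻¹) * (1 / 2) + (√q.2.2)⁻¹ * (∑ i, q.1 i * q.1 i) * (1 / 8)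

/-- `X_0 A = (√a - 1/√a)/4 - |x|²/(16√a)`. -/
def Bf (q : Pt μ ν) : ℝ :=
  (√q.2.2 + -(√q.2.2)⁻¹) * (1 / 4) + -((√q.2.2)⁻¹ * (∑ i, q.1 i * q.1 i) * (1 / 16))

/-- `y_k = z_k/(2√a)`. -/
def yf (k : Fin ν) (q : Pt μ ν) : ℝ := q.2.1 k * (√q.2.2)⁻¹ * (1 / 2)

/-- `D = |y|² = |z|²/(4a)`, so that `cosh²(r/2) = A² + D`. -/
def Df (q : Pt μ ν) : ℝ := ∑ k, yf k q * yf k q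

lemma coshExpr_eq_s15 (q : Pt μ ν) (hq : 0 < q.2.2) :
    coshExpr μ ν q = Af q * Af q + Df q := by
  have h : (q.2.2)⁻¹ = (√q.2.2)⁻¹ * (√q.2.2)⁻¹ := by
    rw [← mul_inv, Real.mul_self_sqrt hq.le]
  have hD : Df q = (√q.2.2)⁻¹ * (√q.2.2)⁻¹ * (∑ i, q.2.1 i ^ 2) / 4 := by
    rw [Df, Finset.mul_sum, Finset.sum_div]
    exact Finset.sum_congr rfl fun i _ => by rw [yf]; ring
  rw [coshExpr, hD, h, Af]
  simp only [pow_two]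
  ring

lemma hasX_A {V p : Pt μ ν} (hp : 0 < p.2.2) :
    HasX V Af ((√p.2.2 - (√p.2.2)⁻¹) / 4 * ((√p.2.2 ^ 2)⁻¹ * V.2.2) +
      (√p.2.2)⁻¹ * (∑ i, p.1 i * V.1 i) / 4 -
      (√p.2.2)⁻¹ * (∑ i, p.1 i * p.1 i) / 16 * ((√p.2.2 ^ 2)⁻¹ * V.2.2)) p := by
  have hs : (√p.2.2) ≠ 0 := (Real.sqrt_pos.2 hp).ne'
  have h1 := HasX.sqrt (V := V) hp
  have h2 := HasX.sqrt_inv (V := V) hp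
  have h3 : HasX V (fun q => ∑ i, q.1 i * q.1 i) (2 * ∑ i, p.1 i * V.1 i) p :=
    (HasX.sum fun i _ => (HasX.fst i).mul (HasX.fst i)).of_eq (by
      rw [Finset.mul_sum]; exact Finset.sum_congr rfl fun i _ => by ring)
  refine (((h1.add h2).mul (HasX.const (1 / 2))).add
    ((h2.mul h3).mul (HasX.const (1 / 8)))).of_eq ?_
  field_simp
  ring

lemma hasX_B {p : Pt μ ν} (hp : 0 < p.2.2) : HasX (0, 0, p.2.2) Bf (Af p * (1 / 4)) p := by
  have hs : (√p.2.2) ≠ 0 := (Real.sqrt_pos.2 hp).ne'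
  have h1 := HasX.sqrt (V := (0, 0, p.2.2)) hp
  have h2 := HasX.sqrt_inv (V := (0, 0, p.2.2)) hp
  have h3 : HasX (0, 0, p.2.2) (fun q : Pt μ ν => ∑ i, q.1 i * q.1 i) 0 p :=
    (HasX.sum fun i _ => (HasX.fst i).mul (HasX.fst i)).of_eq (by simp)
  have ha : p.2.2 = √p.2.2 ^ 2 := (Real.sq_sqrt hp.le).symm
  have := ((h1.add ((HasX.const (-1)).mul h2)).mul (HasX.const (1 / 4))).add
    ((HasX.const (-1)).mul ((h2.mul h3).mul (HasX.const (1 / 16))))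
  refine (this.congr (.of_eq (funext fun q => ?_))).of_eq ?_
  · rw [Bf]; ring
  · rw [Af]
    simp only
    generalize √p.2.2 = s at *
    rw [ha]
    field_simp
    ring

lemma hasX_y {V p : Pt μ ν} (hp : 0 < p.2.2) (k : Fin ν) :
    HasX V (yf k) (V.2.1 k * (√p.2.2)⁻¹ / 2 - yf k p * ((√p.2.2 ^ 2)⁻¹ * V.2.2) / 2) p := by
  have hs : (√p.2.2) ≠ 0 := (Real.sqrt_pos.2 hp).ne'
  refine (((HasX.snd k).mul (HasX.sqrt_inv hp)).mul (HasX.const (1 / 2))).of_eq ?_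
  rw [yf]
  field_simp
  ring

lemma HasX.D {V p : Pt μ ν} {v : Fin ν → ℝ} (h : ∀ k, HasX V (yf k) (v k) p) :
    HasX V Df (2 * ∑ k, yf k p * v k) p :=
  (HasX.sum fun k _ => (h k).mul (h k)).of_eq (by
    rw [Finset.mul_sum]; exact Finset.sum_congr rfl fun k _ => by ring)

/-- The derivative of `u = A² + D`. -/
lemma HasX.u {V p : Pt μ ν} (hp : 0 < p.2.2) {a d : ℝ} (hA : HasX V Af a p) (hD : HasX V Df d p) :
    HasX V (coshExpr μ ν) (2 * Af p * a + d) p := by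
  refine (((hA.mul hA).add hD).congr ?_).of_eq (by ring)
  filter_upwards [eventually_pos hp] with q hq using coshExpr_eq_s15 q hq

/-- Size of the generators on `{r ≤ 1}`; the point is that `A² - 1` and `D` are nonnegative
with sum `sinh² (r/2) ≤ r²`. -/
lemma basic_bounds {p : Pt μ ν} (hp : 0 < p.2.2) {ρ : ℝ} (h0 : 0 ≤ ρ) (h1 : ρ ≤ 1)
    (h : Real.cosh (ρ / 2) ^ 2 = coshExpr μ ν p) :
    |Af p| ≤ 2 ∧ |Bf p| ≤ ρ ∧ 0 ≤ Df p ∧ Df p ≤ ρ ^ 2 ∧ (∀ k, |yf k p| ≤ ρ) ∧ √p.2.2 ≤ 4 ∧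
      ∀ i, |p.1 i| ≤ 6 * ρ := by
  have hs : 0 < √p.2.2 := Real.sqrt_pos.2 hp
  have hu : Af p * Af p + Df p ≤ 1 + ρ ^ 2 := by
    rw [← coshExpr_eq_s15 p hp, ← h]
    -- `cosh² (ρ/2) ≤ exp (ρ²/4) ≤ 1 / (1 - ρ²/4)`
    have e1 : Real.cosh (ρ / 2) ^ 2 ≤ Real.exp (ρ ^ 2 / 4) := by
      have := pow_le_pow_left₀ (Real.cosh_pos _).le (Real.cosh_le_exp_half_sq (ρ / 2)) 2
      rw [← Real.exp_nat_mul] at this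
      rwa [show ((2 : ℕ) : ℝ) * ((ρ / 2) ^ 2 / 2) = ρ ^ 2 / 4 by push_cast; ring] at this
    have e2 := Real.one_sub_le_exp_neg (ρ ^ 2 / 4)
    have e3 : Real.exp (-(ρ ^ 2 / 4)) * Real.exp (ρ ^ 2 / 4) = 1 := by
      rw [← Real.exp_add]; simp
    have e4 := Real.exp_pos (ρ ^ 2 / 4)
    have e5 : ρ ^ 2 ≤ 1 := by nlinarith
    have e6 : (1 - ρ ^ 2 / 4) * Real.exp (ρ ^ 2 / 4) ≤ 1 := by
      exact (mul_le_mul_of_nonneg_right e2 e4.le).trans_eq e3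
    nlinarith [sq_nonneg ρ]
  have hD : 0 ≤ Df p := Finset.sum_nonneg fun k _ => mul_self_nonneg _
  have hy : ∀ k, yf k p * yf k p ≤ Df p := fun k =>
    Finset.single_le_sum (f := fun k => yf k p * yf k p) (fun k _ => mul_self_nonneg _)
      (Finset.mem_univ k)
  have hx : ∀ i, p.1 i * p.1 i ≤ ∑ i, p.1 i * p.1 i := fun i =>
    Finset.single_le_sum (f := fun i => p.1 i * p.1 i) (fun k _ => mul_self_nonneg _)
      (Finset.mem_univ i)
  have hx0 : 0 ≤ ∑ i, p.1 i * p.1 i := Finset.sum_nonneg fun k _ => mul_self_nonneg _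
  have hA : Af p = (√p.2.2 + (√p.2.2)⁻¹) / 2 + (√p.2.2)⁻¹ * (∑ i, p.1 i * p.1 i) / 8 := by
    rw [Af]; ring
  have hB : Bf p = (√p.2.2 - (√p.2.2)⁻¹) / 4 - (√p.2.2)⁻¹ * (∑ i, p.1 i * p.1 i) / 16 := by
    rw [Bf]; ring
  set s := √p.2.2 with hsdef
  set N := ∑ i, p.1 i * p.1 i
  have hi : 0 < s⁻¹ := inv_pos.2 hs
  have hsi : s * s⁻¹ = 1 := mul_inv_cancel₀ hs.ne'
  generalize s⁻¹ = t at *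
  obtain ⟨w, hw⟩ : ∃ w, w = t * N / 8 := ⟨_, rfl⟩
  have hw0 : 0 ≤ w := by rw [hw]; positivity
  have hN : N = 8 * (s * w) := by rw [hw]; linear_combination (-N) * hsi
  have hst : 2 ≤ s + t := by nlinarith [sq_nonneg (s - t)]
  rw [← hw] at hA
  rw [show t * N / 16 = w / 2 by rw [hw]; ring] at hB
  have hA1 : 1 + w ≤ Af p := by rw [hA]; linarith
  have hsA : s ≤ 2 * Af p := by rw [hA]; linarith
  have hρ2 : ρ ^ 2 ≤ 1 := by nlinarith
  have hA2 : Af p ≤ 2 := by nlinarith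
  have hs4 : s ≤ 4 := by linarith
  have hwρ : w ≤ ρ ^ 2 := by nlinarith
  have hBB : (2 * Bf p) ^ 2 ≤ ρ ^ 2 := by
    have : (2 * Bf p) ^ 2 = Af p * Af p - 1 - 2 * (s * w) := by
      rw [hA, hB]; linear_combination (-1) * hsi
    have : 0 ≤ s * w := by positivity
    linarith
  refine ⟨by rw [abs_of_nonneg (by linarith)]; exact hA2, ?_, hD, by nlinarith, fun k => ?_, hs4,
    fun i => ?_⟩
  · refine abs_le_of_sq_le_sq ?_ h0
    nlinarith [sq_nonneg (Bf p)]
  · refine abs_le_of_sq_le_sq ?_ h0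
    nlinarith [hy k]
  · refine abs_le_of_sq_le_sq ?_ (by positivity)
    have : s * w ≤ 4 * ρ ^ 2 := mul_le_mul hs4 hwρ hw0 (by norm_num)
    nlinarith [hx i, sq_nonneg ρ]


/-! ### The vector fields as directional derivatives -/

section partials

variable {f : Pt μ ν → ℝ} {L : Pt μ ν →L[ℝ] ℝ} {p : Pt μ ν}

lemma deriv_fst (h : HasFDerivAt f L p) (i : Fin μ) :
    deriv (fun s => f (Function.update p.1 i s, p.2.1, p.2.2)) (p.1 i) =
      L (Pi.single i 1, 0, 0) := by
  have hc : HasDerivAt (fun s => ((Function.update p.1 i s, p.2.1, p.2.2) : Pt μ ν))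
      (Pi.single i 1, 0, 0) (p.1 i) :=
    (hasDerivAt_update p.1 i (p.1 i)).prodMk (hasDerivAt_const _ (p.2.1, p.2.2))
  exact (HasFDerivAt.comp_hasDerivAt (p.1 i) (by simpa using h) hc).deriv

lemma deriv_snd (h : HasFDerivAt f L p) (k : Fin ν) :
    deriv (fun s => f (p.1, Function.update p.2.1 k s, p.2.2)) (p.2.1 k) =
      L (0, Pi.single k 1, 0) := by
  have hc : HasDerivAt (fun s => ((p.1, Function.update p.2.1 k s, p.2.2) : Pt μ ν))
      (0, Pi.single k 1, 0) (p.2.1 k) :=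
    (hasDerivAt_const _ p.1).prodMk
      ((hasDerivAt_update p.2.1 k (p.2.1 k)).prodMk (hasDerivAt_const _ p.2.2))
  exact (HasFDerivAt.comp_hasDerivAt (p.2.1 k) (by simpa using h) hc).deriv

lemma deriv_thd (h : HasFDerivAt f L p) :
    deriv (fun s => f (p.1, p.2.1, s)) p.2.2 = L (0, 0, 1) := by
  have hc : HasDerivAt (fun s => ((p.1, p.2.1, s) : Pt μ ν)) (0, 0, 1) p.2.2 :=
    (hasDerivAt_const _ p.1).prodMk ((hasDerivAt_const _ p.2.1).prodMk (hasDerivAt_id _))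
  exact (HasFDerivAt.comp_hasDerivAt p.2.2 (by simpa using h) hc).deriv

end partials

variable {Jm : Fin ν → Matrix (Fin μ) (Fin μ) ℝ} {j : Fin (μ + ν + 1)}

lemma Xf_zero (h0 : (j : ℕ) = 0) {f : Pt μ ν → ℝ} {p : Pt μ ν} {v : ℝ}
    (h : HasX (0, 0, p.2.2) f v p) : Xf μ ν Jm j f p = v := by
  obtain ⟨L, h, rfl⟩ := h
  rw [Xf, dif_pos h0, deriv_thd h, ← smul_eq_mul, ← map_smul]
  simp

/-- The direction of `X_ℓ`, `1 ≤ ℓ ≤ μ`, with `i = ℓ - 1`. -/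
def Vx (Jm : Fin ν → Matrix (Fin μ) (Fin μ) ℝ) (i : Fin μ) (p : Pt μ ν) : Pt μ ν :=
  (Pi.single i (√p.2.2), fun k => √p.2.2 * (1 / 2 * (Jm k).mulVec p.1 i), 0)

lemma Xf_x (h0 : (j : ℕ) ≠ 0) (hm : (j : ℕ) ≤ μ) {f : Pt μ ν → ℝ} {p : Pt μ ν} {v : ℝ}
    (h : HasX (Vx Jm ⟨(j : ℕ) - 1, by omega⟩ p) f v p) : Xf μ ν Jm j f p = v := by
  obtain ⟨L, h, rfl⟩ := h
  rw [Xf, dif_neg h0, dif_pos hm, deriv_fst h]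
  simp only [deriv_snd h, ← smul_eq_mul, ← map_smul, ← map_sum, ← map_add]
  congr 1
  ext i
  · by_cases hi : i = ⟨(j : ℕ) - 1, by omega⟩
    · subst hi; simp [Vx, Prod.fst_sum]
    · simp [Vx, Prod.fst_sum, hi]
  · simp [Vx, Prod.fst_sum, Prod.snd_sum, Finset.sum_apply, Pi.single_apply]
  · simp [Vx, Prod.snd_sum]

lemma Xf_z (h0 : (j : ℕ) ≠ 0) (hm : ¬ (j : ℕ) ≤ μ) {f : Pt μ ν → ℝ} {p : Pt μ ν} {v : ℝ}
    (h : HasX (0, Pi.single ⟨(j : ℕ) - μ - 1, by have := j.isLt; omega⟩ p.2.2, 0) f v p) :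
    Xf μ ν Jm j f p = v := by
  obtain ⟨L, h, rfl⟩ := h
  rw [Xf, dif_neg h0, dif_neg hm, deriv_snd h, ← smul_eq_mul, ← map_smul]
  congr 1
  ext i
  · simp
  · by_cases hi : i = ⟨(j : ℕ) - μ - 1, by have := j.isLt; omega⟩
    · subst hi; simp
    · simp [hi]
  · simp

/-! ### Derivatives of the generators along the vector fields -/

lemma hasX_A_zero {p : Pt μ ν} (hp : 0 < p.2.2) : HasX (0, 0, p.2.2) Af (Bf p) p := by
  refine (hasX_A hp).of_eq ?_
  rw [Real.sq_sqrt hp.le, inv_mul_cancel₀ hp.ne', Bf]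
  simp
  ring

lemma hasX_D_zero {p : Pt μ ν} (hp : 0 < p.2.2) : HasX (0, 0, p.2.2) Df (-1 * Df p) p := by
  refine (HasX.D fun k => hasX_y hp k).of_eq ?_
  rw [Real.sq_sqrt hp.le, inv_mul_cancel₀ hp.ne', Df, Finset.mul_sum, Finset.mul_sum]
  refine Finset.sum_congr rfl fun k _ => ?_
  simp
  ring

lemma hasX_A_x {i : Fin μ} {p : Pt μ ν} (hp : 0 < p.2.2) :
    HasX (Vx Jm i p) Af (p.1 i * (1 / 4)) p := by
  have hs : (√p.2.2) ≠ 0 := (Real.sqrt_pos.2 hp).ne'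
  refine (hasX_A hp).of_eq ?_
  simp [Vx, Pi.single_apply]
  field_simp

lemma hasX_y_x {i : Fin μ} {p : Pt μ ν} (hp : 0 < p.2.2) (k : Fin ν) :
    HasX (Vx Jm i p) (yf k) ((Jm k).mulVec p.1 i * (1 / 4)) p := by
  have hs : (√p.2.2) ≠ 0 := (Real.sqrt_pos.2 hp).ne'
  refine (hasX_y hp k).of_eq ?_
  simp only [Vx, mul_zero, zero_div, sub_zero]
  field_simp
  ring

lemma hasX_y_z {p : Pt μ ν} (hp : 0 < p.2.2) (i k : Fin ν) :
    HasX (0, Pi.single i p.2.2, 0) (yf k) (if k = i then √p.2.2 * (1 / 2) else 0) p := by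
  have hs : (√p.2.2) ≠ 0 := (Real.sqrt_pos.2 hp).ne'
  refine (hasX_y hp k).of_eq ?_
  rcases eq_or_ne k i with rfl | h
  · simp only [Pi.single_eq_same, mul_zero, zero_div, sub_zero, if_true]
    nth_rw 1 [← Real.sq_sqrt hp.le]
    field_simp
  · simp [h]

end

theorem odd_derivative_of_r_squared_power (μ ν : ℕ) (hμ : Even μ) (hν : 1 ≤ ν)
    (Jm : Fin ν → Matrix (Fin μ) (Fin μ) ℝ)
    (hskew : ∀ k, (Jm k).transpose = -(Jm k))
    (hH : ∀ k l, Jm k * Jm l + Jm l * Jm k =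
      if k = l then (-2 : ℝ) • (1 : Matrix (Fin μ) (Fin μ) ℝ) else 0)
    (r : Pt μ ν → ℝ)
    (hr0 : ∀ p : Pt μ ν, 0 < p.2.2 → 0 ≤ r p)
    (hreq : ∀ p : Pt μ ν, 0 < p.2.2 → Real.cosh (r p / 2) ^ 2 = coshExpr μ ν p)
    (k l : ℕ) (j : Fin (μ + ν + 1)) :
    ∃ C : ℝ, 0 < C ∧ ∀ p : Pt μ ν, 0 < p.2.2 → r p ≤ 1 →
      |(Xf μ ν Jm j)^[2 * k + 1] (fun q => r q ^ (2 * l)) p| ≤ C * r p := by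
  have hb : ∀ p : Pt μ ν, 0 < p.2.2 → r p ≤ 1 → _ := fun p hp h1 =>
    basic_bounds hp (hr0 p hp) h1 (hreq p hp)
  by_cases h0 : (j : ℕ) = 0
  · -- Here `D` carries both parities: it is `O(r²)` and `X_0 D = -D`.
    refine odd_iterate_bound (V := fun p => (0, 0, p.2.2)) (fun f p v _ h => Xf_zero h0 h) hr0 hreq
      {(false, Af), (true, Bf), (false, Df), (true, Df)} ?_ ?_ ?_ k l
    · rintro ε f (h | h | h | h) <;> obtain ⟨rfl, rfl⟩ := Prod.mk.inj h
      · exact ⟨2, by norm_num, fun p hp h1 => by simpa using (hb p hp h1).1⟩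
      · exact ⟨1, by norm_num, fun p hp h1 => by simpa using (hb p hp h1).2.1⟩
      · refine ⟨1, by norm_num, fun p hp h1 => ?_⟩
        obtain ⟨-, -, hD, hD', -⟩ := hb p hp h1
        rw [abs_of_nonneg hD]
        simp only [Bool.false_eq_true, if_false]
        nlinarith [hr0 p hp]
      · refine ⟨1, by norm_num, fun p hp h1 => ?_⟩
        obtain ⟨-, -, hD, hD', -⟩ := hb p hp h1
        rw [abs_of_nonneg hD]
        simp only [if_true]
        nlinarith [hr0 p hp]
    · rintro δ ε f (h | h | h | h) <;> obtain ⟨rfl, rfl⟩ := Prod.mk.inj h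
      · exact ⟨Bf, .gen (by simp), fun p hp => hasX_A_zero hp⟩
      · exact ⟨_, Par.mul' (.gen (ε := false) (f := Af) (by simp)) (.const (1 / 4)) rfl,
          fun p hp => hasX_B hp⟩
      · exact ⟨_, Par.mul' (.const (-1)) (.gen (ε := true) (f := Df) (by simp)) rfl,
          fun p hp => hasX_D_zero hp⟩
      · exact ⟨_, Par.mul' (.const (-1)) (.gen (ε := false) (f := Df) (by simp)) rfl,
          fun p hp => hasX_D_zero hp⟩
    · intro δ
      refine ⟨_, Par.add (.mul' (.mul' (.const 2) (.gen (ε := false) (f := Af) (by simp)) rfl)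
        (.gen (ε := true) (f := Bf) (by simp)) rfl)
        (.mul' (.const (-1)) (.gen (ε := true) (f := Df) (by simp)) rfl), fun p hp => ?_⟩
      exact HasX.u hp (hasX_A_zero hp) (hasX_D_zero hp)
  by_cases hm : (j : ℕ) ≤ μ
  · set i : Fin μ := ⟨(j : ℕ) - 1, by omega⟩ with hi
    have hdiag : ∀ k, Jm k i i = 0 := fun k => by
      have := congrFun (congrFun (hskew k) i) i
      simp only [Matrix.transpose_apply, Matrix.neg_apply] at this
      linarith
    refine odd_iterate_bound (V := Vx Jm i) (fun f p v _ h => Xf_x h0 hm h) hr0 hreq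
      ({(false, Af), (true, fun q => q.1 i), (false, fun q => √q.2.2)} ∪
        (Set.range (fun k => (true, yf k)) ∪
          Set.range (fun k => (false, fun q => (Jm k).mulVec q.1 i)))) ?_ ?_ ?_ k l
    · rintro ε f ((h | h | h) | ⟨k, h⟩ | ⟨k, h⟩) <;> obtain ⟨rfl, rfl⟩ := Prod.mk.inj h
      · exact ⟨2, by norm_num, fun p hp h1 => by simpa using (hb p hp h1).1⟩
      · exact ⟨6, by norm_num, fun p hp h1 => by simpa using (hb p hp h1).2.2.2.2.2.2 i⟩
      · exact ⟨4, by norm_num, fun p hp h1 => by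
          simpa [abs_of_nonneg (Real.sqrt_nonneg _)] using (hb p hp h1).2.2.2.2.2.1⟩
      · exact ⟨1, by norm_num, fun p hp h1 => by simpa using (hb p hp h1).2.2.2.2.1 k⟩
      · refine ⟨∑ m, |Jm k i m| * 6, by positivity, fun p hp h1 => ?_⟩
        simp only [Bool.false_eq_true, if_false, mul_one, Matrix.mulVec, dotProduct]
        refine (Finset.abs_sum_le_sum_abs _ _).trans (Finset.sum_le_sum fun m _ => ?_)
        rw [abs_mul]
        refine mul_le_mul_of_nonneg_left ?_ (abs_nonneg _)
        have := (hb p hp h1).2.2.2.2.2.2 m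
        linarith
    · rintro δ ε f ((h | h | h) | ⟨k, h⟩ | ⟨k, h⟩) <;> obtain ⟨rfl, rfl⟩ := Prod.mk.inj h
      · exact ⟨_, Par.mul' (.gen (ε := true) (f := fun q => q.1 i) (by simp)) (.const (1 / 4)) rfl,
          fun p hp => hasX_A_x hp⟩
      · exact ⟨fun q => √q.2.2, .gen (by simp), fun p hp =>
          (HasX.fst i).of_eq (by simp [Vx])⟩
      · exact ⟨_, .zero _, fun p hp => (HasX.sqrt hp).of_eq (by simp [Vx])⟩
      · exact ⟨_, Par.mul' (.gen (ε := false) (f := fun q => (Jm k).mulVec q.1 i) (by simp))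
          (.const (1 / 4)) rfl, fun p hp => hasX_y_x hp k⟩
      · refine ⟨_, .zero _, fun p hp => ?_⟩
        simp only [Matrix.mulVec, dotProduct]
        refine (HasX.sum fun m _ => (HasX.const _).mul (HasX.fst m)).of_eq ?_
        simp [Vx, Pi.single_apply, hdiag]
    · intro δ
      refine ⟨_, Par.add (.mul' (.mul' (.const 2) (.gen (ε := false) (f := Af) (by simp)) rfl)
        (.mul' (.gen (ε := true) (f := fun q => q.1 i) (by simp)) (.const (1 / 4)) rfl) rfl)
        (.mul' (.const 2) (.sum (s := Finset.univ) fun k _ =>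
          .mul' (.gen (ε := true) (f := yf k) (by simp))
            (.mul' (.gen (ε := false) (f := fun q => (Jm k).mulVec q.1 i) (by simp))
              (.const (1 / 4)) rfl) rfl) rfl), fun p hp => ?_⟩
      exact HasX.u hp (hasX_A_x hp) (HasX.D fun k => hasX_y_x hp k)
  · set i : Fin ν := ⟨(j : ℕ) - μ - 1, by have := j.isLt; omega⟩ with hi
    refine odd_iterate_bound (V := fun p => (0, Pi.single i p.2.2, 0))
      (fun f p v _ h => Xf_z h0 hm h) hr0 hreq
      {(true, yf i), (false, fun q => √q.2.2)} ?_ ?_ ?_ k l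
    · rintro ε f (h | h) <;> obtain ⟨rfl, rfl⟩ := Prod.mk.inj h
      · exact ⟨1, by norm_num, fun p hp h1 => by simpa using (hb p hp h1).2.2.2.2.1 i⟩
      · exact ⟨4, by norm_num, fun p hp h1 => by
          simpa [abs_of_nonneg (Real.sqrt_nonneg _)] using (hb p hp h1).2.2.2.2.2.1⟩
    · rintro δ ε f (h | h) <;> obtain ⟨rfl, rfl⟩ := Prod.mk.inj h
      · exact ⟨_, Par.mul' (.gen (ε := false) (f := fun q => √q.2.2) (by simp))
          (.const (1 / 2)) rfl, fun p hp => (hasX_y_z hp i i).of_eq (by simp)⟩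
      · exact ⟨_, .zero _, fun p hp => (HasX.sqrt hp).of_eq (by simp)⟩
    · intro δ
      refine ⟨_, Par.mul' (.gen (ε := true) (f := yf i) (by simp))
        (.gen (ε := false) (f := fun q => √q.2.2) (by simp)) rfl, fun p hp => ?_⟩
      have hA : HasX (0, Pi.single i p.2.2, 0) Af 0 p := (hasX_A hp).of_eq (by simp)
      refine (HasX.u hp hA (HasX.D fun k => hasX_y_z hp i k)).of_eq ?_
      simp
      ring

end DR
end
end
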